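/- arXiv:1801.06148 — 3 statements merged into one kernel-verified Lean document; each statement's English description precedes it below -/
import Mathlib

section
/- (W_p-convergence characterization on ℝ^d.) Let p ∈ [1, ∞) and let ‖·‖ be any norm on ℝ^d. Let μ_n (n ≥ 1) and μ_∞ be Borel probability measures on ℝ^d with finite p-th moments. The following are equivalent: (i) W_p(μ_n, μ_∞) → 0 as n → ∞; (ii) for every N ≥ 1, e_{N,p}(μ_n, ·) → e_{N,p}(μ_∞, ·) uniformly on (ℝ^d)^N; (iii) there exists N with N ≥ c(d, ‖·‖) + 1 (or N ≥ d + 2 if ‖·‖ is induced by an inner product) such that e_{N,p}(μ_n, ·) → e_{N,p}(μ_∞, ·) pointwise on (ℝ^d)^N. -/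
open MeasureTheory Filter Topology
open scoped ENNReal NNReal

/-- The `L^p`-quantization error function at level `N`. -/
noncomputable def quantErr {E : Type*} [NormedAddCommGroup E] [MeasurableSpace E]
    (p : ℝ) (N : ℕ) (μ : Measure E) (x : Fin N → E) : ℝ :=
  (∫⁻ ξ, ⨅ i, (‖ξ - x i‖₊ : ℝ≥0∞) ^ p ∂μ).toReal ^ (1 / p)

/-- The `L^p`-Wasserstein distance. -/
noncomputable def wassersteinDist {E : Type*} [NormedAddCommGroup E] [MeasurableSpace E]
    (p : ℝ) (μ ν : Measure E) : ℝ :=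
  (⨅ π ∈ {π : Measure (E × E) | π.map Prod.fst = μ ∧ π.map Prod.snd = ν},
      ∫⁻ q, (‖q.1 - q.2‖₊ : ℝ≥0∞) ^ p ∂π).toReal ^ (1 / p)

/-- `μ` has a finite `p`-th moment. -/
def HasFiniteMoment {E : Type*} [NormedAddCommGroup E] [MeasurableSpace E]
    (p : ℝ) (μ : Measure E) : Prop :=
  ∫⁻ ξ, (‖ξ‖₊ : ℝ≥0∞) ^ p ∂μ ≠ ∞

/-- The minimal sphere covering number `c(d, ‖·‖)`. -/
noncomputable def coverNum (E : Type*) [NormedAddCommGroup E] : ℕ :=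
  sInf {k | ∃ a : Fin k → E, (∀ i, a i ∈ Metric.sphere (0 : E) 1) ∧
    Metric.sphere (0 : E) 1 ⊆ ⋃ i, Metric.closedBall (a i) 1}

/-!
The quantization error `quantErr p N μ x` is the `L^p(μ)`-norm of the distance to the finite set
`Set.range x`, a `1`-Lipschitz function; by Minkowski's inequality for a coupling, it therefore
changes by at most `W_p(μ, ν)` when `μ` is replaced by `ν`, uniformly in `x`.

Conversely, suppose that the closed unit balls centred at the points of a set `A` of at most
`N - 1` points, not containing `0`, cover the unit sphere. Adding the point `0` to `A` then does not
change the distance to `A` outside the unit ball, so `d(·, A) ^ p - d(·, A ∪ {0}) ^ p` is a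
nonnegative compactly supported bump `ψ` with `ψ 0 ≠ 0`. Pointwise convergence of the quantization
errors gives convergence of the integrals of all translates and dilates of `ψ`. Convolving with
thin dilates of `ψ` approximates every compactly supported continuous function uniformly, whence
vague convergence. Taking all `N` points equal to `0` gives convergence of the `p`-th moments.
Finally, cut the limit measure by a partition of unity into pieces of small diameter and couple
corresponding pieces: what remains uncoupled has small `p`-th moment, because no `p`-th moment is
lost in the limit.
-/

namespace Quantization

section TransportCost

lemma exists_fst_eq_snd_eq_of_measure_univ_eq {X Y : Type*} [MeasurableSpace X]
    [MeasurableSpace Y] {α : Measure X} {β : Measure Y} [IsFiniteMeasure α]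
    (h : α Set.univ = β Set.univ) : ∃ π : Measure (X × Y), π.fst = α ∧ π.snd = β := by
  have : IsFiniteMeasure β := ⟨h ▸ measure_lt_top α _⟩
  obtain rfl | hα := eq_or_ne α 0
  · rw [Measure.coe_zero, Pi.zero_apply, eq_comm, Measure.measure_univ_eq_zero] at h
    exact ⟨0, Measure.fst_zero, by rw [Measure.snd_zero, h]⟩
  have h0 : α Set.univ ≠ 0 := Measure.measure_univ_ne_zero.2 hα
  refine ⟨(α Set.univ)⁻¹ • α.prod β, ?_, ?_⟩
  · rw [Measure.fst, Measure.map_smul, Measure.map_fst_prod, smul_smul, ← h,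
      ENNReal.inv_mul_cancel h0 (measure_ne_top _ _), one_smul]
  · rw [Measure.snd, Measure.map_smul, Measure.map_snd_prod, smul_smul,
      ENNReal.inv_mul_cancel h0 (measure_ne_top _ _), one_smul]

variable {E : Type*} [NormedAddCommGroup E] [MeasurableSpace E] {p : ℝ}

/-- The `p`-th absolute moment of `μ`, with values in `ℝ≥0∞`. -/
noncomputable def absMoment (p : ℝ) (μ : Measure E) : ℝ≥0∞ := ∫⁻ ξ, ‖ξ‖ₑ ^ p ∂μ

/-- The `p`-th power of the Wasserstein distance. Unlike `wassersteinDist` it takes values in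
`ℝ≥0∞`, so that an infinite cost is not read as `0`. -/
noncomputable def transportCost (p : ℝ) (μ ν : Measure E) : ℝ≥0∞ :=
  ⨅ π ∈ {π : Measure (E × E) | π.fst = μ ∧ π.snd = ν}, ∫⁻ q, ‖q.1 - q.2‖ₑ ^ p ∂π

lemma wassersteinDist_eq_transportCost (p : ℝ) (μ ν : Measure E) :
    wassersteinDist p μ ν = (transportCost p μ ν).toReal ^ (1 / p) := rfl

lemma tendsto_wassersteinDist_of_tendsto_transportCost {ι : Type*} {l : Filter ι} (hp : 0 < p)
    {μ : ι → Measure E} {μ' : Measure E}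
    (h : Tendsto (fun i => transportCost p (μ i) μ') l (𝓝 0)) :
    Tendsto (fun i => wassersteinDist p (μ i) μ') l (𝓝 0) := by
  have hroot := ((ENNReal.tendsto_toReal ENNReal.zero_ne_top).comp h).rpow_const
    (p := 1 / p) (.inr (by positivity))
  rwa [ENNReal.toReal_zero, Real.zero_rpow (by positivity)] at hroot

lemma transportCost_le_lintegral (p : ℝ) {μ ν : Measure E} {π : Measure (E × E)}
    (hμ : π.fst = μ) (hν : π.snd = ν) : transportCost p μ ν ≤ ∫⁻ q, ‖q.1 - q.2‖ₑ ^ p ∂π :=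
  iInf₂_le π ⟨hμ, hν⟩

lemma transportCost_comm (p : ℝ) (μ ν : Measure E) :
    transportCost p μ ν = transportCost p ν μ := by
  suffices h : ∀ μ ν : Measure E, transportCost p μ ν ≤ transportCost p ν μ from
    (h μ ν).antisymm (h ν μ)
  refine fun μ ν => le_iInf₂ ?_
  rintro π ⟨rfl, rfl⟩
  calc transportCost p π.snd π.fst
      ≤ ∫⁻ q, ‖q.1 - q.2‖ₑ ^ p ∂π.map Prod.swap :=
        transportCost_le_lintegral p Measure.fst_map_swap Measure.snd_map_swap
    _ ≤ ∫⁻ q, ‖q.2 - q.1‖ₑ ^ p ∂π := lintegral_map_le _ _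
    _ = ∫⁻ q, ‖q.1 - q.2‖ₑ ^ p ∂π := by simp only [enorm_sub_rev]

lemma absMoment_add_measure (p : ℝ) (μ ν : Measure E) :
    absMoment p (μ + ν) = absMoment p μ + absMoment p ν :=
  lintegral_add_measure _ _ _

lemma absMoment_sub {μ ν : Measure E} [IsFiniteMeasure ν] (h : ν ≤ μ) (hν : absMoment p ν ≠ ∞) :
    absMoment p (μ - ν) = absMoment p μ - absMoment p ν := by
  rw [← ENNReal.add_sub_cancel_right (a := absMoment p (μ - ν)) hν, ← absMoment_add_measure,
    Measure.sub_add_cancel_of_le h]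

lemma absMoment_mono {μ ν : Measure E} (h : ν ≤ μ) : absMoment p ν ≤ absMoment p μ :=
  lintegral_mono' h le_rfl

variable [BorelSpace E]

lemma lintegral_enorm_sub_rpow_le (hp : 1 ≤ p) (π : Measure (E × E)) :
    ∫⁻ q, ‖q.1 - q.2‖ₑ ^ p ∂π ≤ 2 ^ (p - 1) * (absMoment p π.fst + absMoment p π.snd) := by
  have hmeas : Measurable fun z : E => ‖z‖ₑ ^ p := by fun_prop
  calc ∫⁻ q, ‖q.1 - q.2‖ₑ ^ p ∂π
      ≤ ∫⁻ q, 2 ^ (p - 1) * (‖q.1‖ₑ ^ p + ‖q.2‖ₑ ^ p) ∂π := lintegral_mono fun q =>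
        (ENNReal.rpow_le_rpow enorm_sub_le (by positivity)).trans
          (ENNReal.rpow_add_le_mul_rpow_add_rpow _ _ hp)
    _ = 2 ^ (p - 1) * (absMoment p π.fst + absMoment p π.snd) := by
        rw [lintegral_const_mul _ (by fun_prop), lintegral_add_left (by fun_prop), absMoment,
          absMoment, Measure.fst, Measure.snd, lintegral_map hmeas measurable_fst,
          lintegral_map hmeas measurable_snd]

lemma transportCost_ne_top (hp : 1 ≤ p) {μ ν : Measure E} [IsProbabilityMeasure μ]
    [IsProbabilityMeasure ν] (hμ : absMoment p μ ≠ ∞) (hν : absMoment p ν ≠ ∞) :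
    transportCost p μ ν ≠ ∞ := by
  have hle := (transportCost_le_lintegral p Measure.fst_prod Measure.snd_prod).trans
    (lintegral_enorm_sub_rpow_le hp (μ.prod ν))
  rw [Measure.fst_prod, Measure.snd_prod] at hle
  exact ne_top_of_le_ne_top (by finiteness) hle

lemma transportCost_le_of_fst_le_of_snd_le (hp : 1 ≤ p) {μ ν : Measure E} [IsFiniteMeasure μ]
    (hμν : μ Set.univ = ν Set.univ) {π : Measure (E × E)} (h₁ : π.fst ≤ μ) (h₂ : π.snd ≤ ν) :
    transportCost p μ ν ≤ ∫⁻ q, ‖q.1 - q.2‖ₑ ^ p ∂π +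
      2 ^ (p - 1) * (absMoment p (μ - π.fst) + absMoment p (ν - π.snd)) := by
  have : IsFiniteMeasure ν := ⟨hμν ▸ measure_lt_top μ _⟩
  have : IsFiniteMeasure π.fst := isFiniteMeasure_of_le μ h₁
  have : IsFiniteMeasure π.snd := isFiniteMeasure_of_le ν h₂
  have hmass : (μ - π.fst) Set.univ = (ν - π.snd) Set.univ := by
    rw [Measure.sub_apply .univ h₁, Measure.sub_apply .univ h₂, Measure.fst_univ,
      Measure.snd_univ, hμν]
  obtain ⟨ρ, hρ₁, hρ₂⟩ := exists_fst_eq_snd_eq_of_measure_univ_eq hmass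
  have hcoupling : (ρ + π).fst = μ ∧ (ρ + π).snd = ν := by
    rw [Measure.fst_add, Measure.snd_add, hρ₁, hρ₂, Measure.sub_add_cancel_of_le h₁,
      Measure.sub_add_cancel_of_le h₂]
    exact ⟨rfl, rfl⟩
  calc transportCost p μ ν
      ≤ ∫⁻ q, ‖q.1 - q.2‖ₑ ^ p ∂(ρ + π) := transportCost_le_lintegral p hcoupling.1 hcoupling.2
    _ = ∫⁻ q, ‖q.1 - q.2‖ₑ ^ p ∂π + ∫⁻ q, ‖q.1 - q.2‖ₑ ^ p ∂ρ := by
        rw [lintegral_add_measure, add_comm]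
    _ ≤ _ := by
        rw [← hρ₁, ← hρ₂]
        gcongr
        exact lintegral_enorm_sub_rpow_le hp ρ

variable [SecondCountableTopology E]

lemma lintegral_infEDist_rpow_le_add (hp : 1 ≤ p) (μ ν : Measure E) (s : Set E) :
    (∫⁻ z, Metric.infEDist z s ^ p ∂μ) ^ (1 / p) ≤
      (∫⁻ z, Metric.infEDist z s ^ p ∂ν) ^ (1 / p) + transportCost p μ ν ^ (1 / p) := by
  have hp₀ : 0 < p := one_pos.trans_le hp
  have hmeas : Measurable fun z => Metric.infEDist z s ^ p := measurable_infEDist.pow_const p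
  rw [← tsub_le_iff_left, one_div, ENNReal.le_rpow_inv_iff hp₀, transportCost, ← one_div]
  refine le_iInf₂ ?_
  rintro π ⟨rfl, rfl⟩
  rw [← ENNReal.le_rpow_inv_iff hp₀, tsub_le_iff_left, Measure.fst, Measure.snd,
    lintegral_map hmeas measurable_fst, lintegral_map hmeas measurable_snd, ← one_div]
  calc (∫⁻ q, Metric.infEDist q.1 s ^ p ∂π) ^ (1 / p)
      ≤ (∫⁻ q, (Metric.infEDist q.2 s + ‖q.1 - q.2‖ₑ) ^ p ∂π) ^ (1 / p) := by
        gcongr with q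
        rw [← edist_eq_enorm_sub]
        exact Metric.infEDist_le_infEDist_add_edist
    _ ≤ _ := ENNReal.lintegral_Lp_add_le (measurable_infEDist.comp measurable_snd).aemeasurable
        (by fun_prop) hp

end TransportCost

section QuantErr

lemma iInf_edist_rpow {X ι : Type*} [PseudoEMetricSpace X] {p : ℝ} (hp : 0 < p) (x : ι → X)
    (z : X) : ⨅ i, edist z (x i) ^ p = Metric.infEDist z (Set.range x) ^ p := by
  rw [Metric.infEDist, iInf_range]
  exact ((ENNReal.orderIsoRpow p hp).map_iInf fun i => edist z (x i)).symm

lemma exists_range_eq {X : Type*} {N : ℕ} {s : Set X} (hs : s.Nonempty) (hN : s.encard ≤ N) :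
    ∃ x : Fin N → X, Set.range x = s := by
  have := (Set.finite_of_encard_le_coe hN).fintype
  have := hs.to_subtype
  rw [← Set.coe_fintypeCard, Nat.cast_le, ← Fintype.card_fin N] at hN
  obtain ⟨f⟩ := Function.Embedding.nonempty_of_card_le hN
  refine ⟨fun i => ((Function.invFun f i : s) : X), ?_⟩
  rw [Set.range_comp', (Function.invFun_surjective f.injective).range_eq, Set.image_univ,
    Subtype.range_coe]

variable {E : Type*} [NormedAddCommGroup E] [MeasurableSpace E] {p : ℝ} {N : ℕ}

lemma quantErr_eq_lintegral_infEDist (hp : 0 < p) (μ : Measure E) (x : Fin N → E) :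
    quantErr p N μ x =
      (∫⁻ z, Metric.infEDist z (Set.range x) ^ p ∂μ).toReal ^ (1 / p) := by
  simp_rw [← iInf_edist_rpow hp, edist_eq_enorm_sub]
  rfl

lemma tendsto_absMoment_of_tendsto_quantErr {ι : Type*} {l : Filter ι} (hp : 0 < p)
    {μ : ι → Measure E} {μ' : Measure E} (hμ : ∀ i, absMoment p (μ i) ≠ ∞)
    (hμ' : absMoment p μ' ≠ ∞) [NeZero N]
    (h : Tendsto (fun i => quantErr p N (μ i) 0) l (𝓝 (quantErr p N μ' 0))) :
    Tendsto (fun i => absMoment p (μ i)) l (𝓝 (absMoment p μ')) := by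
  have hquant (ν : Measure E) : quantErr p N ν 0 = (absMoment p ν).toReal ^ (1 / p) := by
    rw [quantErr_eq_lintegral_infEDist hp, Pi.zero_def, Set.range_const]
    simp only [Metric.infEDist_singleton, edist_zero_right, absMoment]
  simp only [hquant] at h
  have hpow := h.rpow_const (p := p) (.inr hp.le)
  simp only [one_div, Real.rpow_inv_rpow ENNReal.toReal_nonneg hp.ne'] at hpow
  exact (ENNReal.tendsto_toReal_iff hμ hμ').1 hpow

variable [BorelSpace E]

lemma quantErr_rpow (hp : 0 < p) (μ : Measure E) [NeZero N] (x : Fin N → E) :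
    quantErr p N μ x ^ p = ∫ z, Metric.infDist z (Set.range x) ^ p ∂μ := by
  have hlt : ∀ᵐ z ∂μ, Metric.infEDist z (Set.range x) ^ p < ∞ := Eventually.of_forall fun z =>
    ENNReal.rpow_lt_top_of_nonneg hp.le (Metric.infEDist_ne_top (Set.range_nonempty x))
  rw [quantErr_eq_lintegral_infEDist hp, one_div, Real.rpow_inv_rpow ENNReal.toReal_nonneg hp.ne',
    ← integral_toReal (measurable_infEDist.pow_const p).aemeasurable hlt]
  simp only [Metric.infDist, ENNReal.toReal_rpow]

lemma tendsto_integral_infDist_rpow {ι : Type*} {l : Filter ι} (hp : 0 < p)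
    {μ : ι → Measure E} {μ' : Measure E} [NeZero N]
    (h : ∀ x : Fin N → E, Tendsto (fun i => quantErr p N (μ i) x) l (𝓝 (quantErr p N μ' x)))
    {s : Set E} (hs : s.Nonempty) (hN : s.encard ≤ N) :
    Tendsto (fun i => ∫ z, Metric.infDist z s ^ p ∂μ i) l
      (𝓝 (∫ z, Metric.infDist z s ^ p ∂μ')) := by
  obtain ⟨x, rfl⟩ := exists_range_eq hs hN
  simp_rw [← quantErr_rpow hp]
  exact (h x).rpow_const (.inr hp.le)

variable [SecondCountableTopology E]

lemma lintegral_infEDist_rpow_ne_top (hp : 1 ≤ p) {μ : Measure E} [IsProbabilityMeasure μ]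
    (hμ : absMoment p μ ≠ ∞) {s : Set E} (hs : s.Nonempty) :
    ∫⁻ z, Metric.infEDist z s ^ p ∂μ ≠ ∞ := by
  have hp₀ : 0 < p := one_pos.trans_le hp
  obtain ⟨x, hx⟩ := hs
  have hdirac : absMoment p (Measure.dirac x) ≠ ∞ := by
    rw [absMoment, lintegral_dirac]
    finiteness
  have hle := lintegral_infEDist_rpow_le_add hp μ (Measure.dirac x) s
  rw [lintegral_dirac, Metric.infEDist_zero_of_mem hx] at hle
  have hcost := transportCost_ne_top hp hμ hdirac
  exact mt (ENNReal.rpow_eq_top_iff_of_pos (one_div_pos.2 hp₀)).2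
    (ne_top_of_le_ne_top (by finiteness) hle)

lemma integrable_infDist_rpow (hp : 1 ≤ p) {μ : Measure E} [IsProbabilityMeasure μ]
    (hμ : absMoment p μ ≠ ∞) {s : Set E} (hs : s.Nonempty) :
    Integrable (fun z => Metric.infDist z s ^ p) μ := by
  simp only [Metric.infDist, ENNReal.toReal_rpow]
  exact integrable_toReal_of_lintegral_ne_top (measurable_infEDist.pow_const p).aemeasurable
    (lintegral_infEDist_rpow_ne_top hp hμ hs)

lemma abs_quantErr_sub_le_wassersteinDist (hp : 1 ≤ p) {μ ν : Measure E} [IsProbabilityMeasure μ]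
    [IsProbabilityMeasure ν] (hμ : absMoment p μ ≠ ∞) (hν : absMoment p ν ≠ ∞) [NeZero N]
    (x : Fin N → E) : |quantErr p N μ x - quantErr p N ν x| ≤ wassersteinDist p μ ν := by
  have hp₀ : 0 < p := one_pos.trans_le hp
  suffices h : ∀ {μ ν : Measure E} [IsProbabilityMeasure μ] [IsProbabilityMeasure ν],
      absMoment p μ ≠ ∞ → absMoment p ν ≠ ∞ →
        quantErr p N μ x ≤ quantErr p N ν x + wassersteinDist p μ ν by
    rw [abs_sub_le_iff, sub_le_iff_le_add', sub_le_iff_le_add']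
    refine ⟨h hμ hν, ?_⟩
    rw [wassersteinDist_eq_transportCost, transportCost_comm]
    exact h hν hμ
  intro μ ν _ _ hμ hν
  have hs : (Set.range x).Nonempty := Set.range_nonempty x
  have hνx := lintegral_infEDist_rpow_ne_top hp hν hs
  have hcost := transportCost_ne_top hp hμ hν
  simp_rw [quantErr_eq_lintegral_infEDist hp₀, wassersteinDist_eq_transportCost,
    ENNReal.toReal_rpow]
  rw [← ENNReal.toReal_add (by finiteness) (by finiteness)]
  exact ENNReal.toReal_mono (by finiteness) (lintegral_infEDist_rpow_le_add hp μ ν _)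

lemma tendstoUniformly_quantErr {ι : Type*} {l : Filter ι} (hp : 1 ≤ p) {μ : ι → Measure E}
    {μ' : Measure E} [∀ i, IsProbabilityMeasure (μ i)] [IsProbabilityMeasure μ']
    (hμ : ∀ i, absMoment p (μ i) ≠ ∞) (hμ' : absMoment p μ' ≠ ∞)
    (h : Tendsto (fun i => wassersteinDist p (μ i) μ') l (𝓝 0)) [NeZero N] :
    TendstoUniformly (fun i (x : Fin N → E) => quantErr p N (μ i) x) (quantErr p N μ') l := by
  rw [Metric.tendstoUniformly_iff]
  intro ε hε
  filter_upwards [h.eventually_lt_const hε] with i hi x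
  rw [dist_comm, Real.dist_eq]
  exact (abs_quantErr_sub_le_wassersteinDist hp (hμ i) hμ' x).trans_lt hi

end QuantErr

section SphereCover

lemma encard_range_le {X : Type*} {n : ℕ} (x : Fin n → X) : (Set.range x).encard ≤ n := by
  rw [← Set.image_univ]
  refine (Set.encard_image_le x _).trans ?_
  rw [Set.encard_univ, ENat.card_eq_coe_fintype_card, Fintype.card_fin]

variable {E : Type*} [NormedAddCommGroup E]

/-- The closed unit balls centred at the points of `A` cover the unit sphere, and the origin is not
one of the centres. The centres need not lie on the sphere: this admits the `d + 1` centres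
available in Euclidean space, where the covering number by centres on the sphere may be larger. -/
structure IsSphereCover (A : Set E) : Prop where
  zero_notMem : 0 ∉ A
  sphere_subset : Metric.sphere 0 1 ⊆ ⋃ a ∈ A, Metric.closedBall a 1

lemma exists_encard_le_coverNum [ProperSpace E] :
    ∃ A : Set E, A.encard ≤ coverNum E ∧ IsSphereCover A := by
  have hfinite : {k | ∃ a : Fin k → E, (∀ i, a i ∈ Metric.sphere (0 : E) 1) ∧
      Metric.sphere (0 : E) 1 ⊆ ⋃ i, Metric.closedBall (a i) 1}.Nonempty := by
    obtain ⟨t, ht, htfin, hcover⟩ := (isCompact_sphere (0 : E) 1).finite_cover_balls one_pos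
    have := htfin.fintype
    refine ⟨Fintype.card t, fun i => (Fintype.equivFin t).symm i, fun i => ht (Subtype.prop _), ?_⟩
    rw [(Fintype.equivFin t).symm.surjective.iUnion_comp fun a : t => Metric.closedBall a.1 1,
      Set.iUnion_coe_set]
    exact hcover.trans (Set.iUnion₂_mono fun a _ => Metric.ball_subset_closedBall)
  obtain ⟨a, ha, hcover⟩ := Nat.sInf_mem hfinite
  refine ⟨Set.range a, ?_, ?_, by rwa [Set.biUnion_range]⟩
  · exact encard_range_le a
  · rintro ⟨i, hi⟩
    exact Metric.ne_of_mem_sphere (ha i) one_ne_zero hi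

variable [NormedSpace ℝ E] {A : Set E}

lemma IsSphereCover.nonempty [Nontrivial E] (hA : IsSphereCover A) : A.Nonempty := by
  obtain ⟨u, hu⟩ := NormedSpace.sphere_nonempty (x := (0 : E)).2 zero_le_one
  obtain ⟨a, ha, -⟩ := Set.mem_iUnion₂.1 (hA.sphere_subset hu)
  exact ⟨a, ha⟩

lemma IsSphereCover.exists_norm_sub_le (hA : IsSphereCover A) {z : E} (hz : 1 ≤ ‖z‖) :
    ∃ a ∈ A, ‖z - a‖ ≤ ‖z‖ := by
  have hz₀ : 0 < ‖z‖ := one_pos.trans_le hz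
  set u := ‖z‖⁻¹ • z
  have hu : u ∈ Metric.sphere (0 : E) 1 := by
    rw [mem_sphere_zero_iff_norm, norm_smul, norm_inv, norm_norm, inv_mul_cancel₀ hz₀.ne']
  obtain ⟨a, ha, hua⟩ := Set.mem_iUnion₂.1 (hA.sphere_subset hu)
  have hzu : ‖z - u‖ = ‖z‖ - 1 := by
    have : z - u = (1 - ‖z‖⁻¹) • z := by rw [sub_smul, one_smul]
    rw [this, norm_smul, Real.norm_of_nonneg (sub_nonneg.2 (inv_le_one_of_one_le₀ hz)), sub_mul,
      one_mul, inv_mul_cancel₀ hz₀.ne']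
  refine ⟨a, ha, ?_⟩
  calc ‖z - a‖ ≤ ‖z - u‖ + ‖u - a‖ := norm_sub_le_norm_sub_add_norm_sub z u a
    _ ≤ (‖z‖ - 1) + 1 := add_le_add hzu.le (mem_closedBall_iff_norm.1 hua)
    _ = ‖z‖ := sub_add_cancel _ _

lemma IsSphereCover.infDist_insert_zero (hA : IsSphereCover A) {z : E} (hz : 1 ≤ ‖z‖) :
    Metric.infDist z (insert 0 A) = Metric.infDist z A := by
  obtain ⟨a, ha, hza⟩ := hA.exists_norm_sub_le hz
  rw [Metric.infDist, Metric.infDist, ← Set.singleton_union, Metric.infEDist_union,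
    Metric.infEDist_singleton, inf_of_le_right]
  calc Metric.infEDist z A ≤ edist z a := Metric.infEDist_le_edist_of_mem ha
    _ ≤ edist z 0 := by
      rw [edist_dist, edist_dist, dist_eq_norm, dist_zero_right]
      exact ENNReal.ofReal_le_ofReal hza

open scoped Pointwise in
lemma infDist_inv_smul_sub {t : ℝ} (ht : t ≠ 0) (s : Set E) (a z : E) :
    Metric.infDist (t⁻¹ • (z - a)) s = ‖t‖⁻¹ * Metric.infDist z ((fun w => a + t • w) '' s) := by
  have himage : (fun w => a + t • w) '' s = (a + ·) '' (t • s) := by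
    rw [← Set.image_smul, Set.image_image]
  rw [himage, ← add_sub_cancel a z, Metric.infDist_image (isometry_add_left a),
    add_sub_cancel_left, ← smul_inv_smul₀ ht (z - a), infDist_smul₀ ht,
    inv_mul_cancel_left₀ (norm_ne_zero_iff.2 ht), inv_smul_smul₀ ht]

end SphereCover

section InnerProduct

open scoped InnerProductSpace

variable {F : Type*} [NormedAddCommGroup F] [InnerProductSpace ℝ F]

variable (F) in
lemma exists_encard_le_forall_le_inner [FiniteDimensional ℝ F] :
    ∃ s : Set F, s.encard ≤ Module.finrank ℝ F + 1 ∧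
      ∃ c > 0, ∀ u, ‖u‖ = 1 → ∃ a ∈ s, c ≤ ⟪u, a⟫_ℝ := by
  set d := Module.finrank ℝ F
  let b := stdOrthonormalBasis ℝ F
  refine ⟨insert (-∑ j, b j) (Set.range b), ?_, (2 * d + 1 : ℝ)⁻¹, by positivity, fun u hu => ?_⟩
  · refine (Set.encard_insert_le _ _).trans (add_le_add_left ?_ 1)
    exact encard_range_le b
  set c := (2 * d + 1 : ℝ)⁻¹
  have hc : 0 < c := by positivity
  by_contra! hlt
  have hcoord (j) : ⟪u, b j⟫_ℝ < c := hlt _ (Set.mem_insert_of_mem _ ⟨j, rfl⟩)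
  have hsum : -∑ j, ⟪u, b j⟫_ℝ < c := by
    rw [← inner_sum, ← inner_neg_right]
    exact hlt _ (Set.mem_insert _ _)
  have habs (j) : |⟪u, b j⟫_ℝ| ≤ 2 * c - ⟪u, b j⟫_ℝ :=
    abs_le.2 ⟨by linarith, by linarith [hcoord j]⟩
  refine lt_irrefl (1 : ℝ) ?_
  calc 1 = ‖∑ j, ⟪b j, u⟫_ℝ • b j‖ := by rw [b.sum_repr', hu]
    _ ≤ ∑ j, ‖⟪b j, u⟫_ℝ • b j‖ := norm_sum_le _ _
    _ = ∑ j, |⟪u, b j⟫_ℝ| := by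
      simp only [norm_smul, b.norm_eq_one, mul_one, Real.norm_eq_abs, real_inner_comm]
    _ ≤ ∑ j, (2 * c - ⟪u, b j⟫_ℝ) := Finset.sum_le_sum fun j _ => habs j
    _ = d * (2 * c) - ∑ j, ⟪u, b j⟫_ℝ := by
      rw [Finset.sum_sub_distrib, Finset.sum_const, Finset.card_univ, Fintype.card_fin,
        nsmul_eq_mul]
    _ < (2 * d + 1) * c := by linarith
    _ = 1 := mul_inv_cancel₀ (by positivity)

lemma exists_isSphereCover_of_forall_le_inner {s : Set F} (hs : s.Finite) {c : ℝ} (hc : 0 < c)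
    (h : ∀ u, ‖u‖ = 1 → ∃ a ∈ s, c ≤ ⟪u, a⟫_ℝ) :
    ∃ A : Set F, A.encard ≤ s.encard ∧ IsSphereCover A := by
  obtain ⟨r, hr₀, hr⟩ := hs.isBounded.exists_pos_norm_le
  let t := 2 * c / r ^ 2
  have ht : 0 < t := by positivity
  refine ⟨(t • ·) '' s \ {0}, (Set.encard_le_encard Set.sdiff_subset).trans
    (Set.encard_image_le _ s), fun h₀ => h₀.2 rfl, fun u hu => ?_⟩
  rw [mem_sphere_zero_iff_norm] at hu
  obtain ⟨a, ha, hca⟩ := h u hu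
  have ha₀ : a ≠ 0 := by
    rintro rfl
    exact hc.not_ge (hca.trans_eq (inner_zero_right _))
  refine Set.mem_iUnion₂.2 ⟨t • a, ⟨⟨a, ha, rfl⟩, smul_ne_zero ht.ne' ha₀⟩, ?_⟩
  rw [mem_closedBall_iff_norm, ← sq_le_one_iff₀ (norm_nonneg _)]
  calc ‖u - t • a‖ ^ 2 = 1 - 2 * t * ⟪u, a⟫_ℝ + t ^ 2 * ‖a‖ ^ 2 := by
        rw [norm_sub_sq_real, hu, real_inner_smul_right, norm_smul, Real.norm_of_nonneg ht.le]
        ring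
    _ ≤ 1 - 2 * t * c + t ^ 2 * r ^ 2 := by gcongr; exact hr a ha
    _ = 1 := by
        simp only [t]
        field_simp
        ring

lemma exists_encard_le_finrank_add_one (E : Type*) [NormedAddCommGroup E] [NormedSpace ℝ E]
    [FiniteDimensional ℝ E] (h : Nonempty (InnerProductSpace ℝ E)) :
    ∃ A : Set E, A.encard ≤ Module.finrank ℝ E + 1 ∧ IsSphereCover A := by
  have hpar (x y : E) :
      ‖x + y‖ * ‖x + y‖ + ‖x - y‖ * ‖x - y‖ = 2 * (‖x‖ * ‖x‖ + ‖y‖ * ‖y‖) := by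
    obtain ⟨I⟩ := h
    exact parallelogram_law_with_norm_mul ℝ x y
  let : InnerProductSpace ℝ E := InnerProductSpace.ofNorm ℝ hpar
  obtain ⟨s, hs, c, hc, hinner⟩ := exists_encard_le_forall_le_inner E
  obtain ⟨A, hA, hcover⟩ := exists_isSphereCover_of_forall_le_inner
    (Set.finite_of_encard_le_coe (by exact_mod_cast hs)) hc hinner
  exact ⟨A, hA.trans hs, hcover⟩

end InnerProduct

section DistGap

variable {E : Type*} [NormedAddCommGroup E] {p : ℝ} {A : Set E}

/-- The decrease of the `p`-th power of the distance to `A` when the point `0` is added to `A`. For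
a sphere cover `A` this is a bump at `0`, and its integral is a difference of two quantization
errors. -/
noncomputable def distGap (p : ℝ) (A : Set E) (z : E) : ℝ :=
  Metric.infDist z A ^ p - Metric.infDist z (insert 0 A) ^ p

lemma continuous_distGap (hp : 0 ≤ p) (A : Set E) : Continuous (distGap p A) :=
  ((Metric.continuous_infDist_pt _).rpow_const fun _ => .inr hp).sub
    ((Metric.continuous_infDist_pt _).rpow_const fun _ => .inr hp)

lemma distGap_nonneg (hp : 0 ≤ p) (hA : A.Nonempty) (z : E) : 0 ≤ distGap p A z :=
  sub_nonneg.2 (Real.rpow_le_rpow Metric.infDist_nonneg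
    (Metric.infDist_le_infDist_of_subset (Set.subset_insert 0 A) hA) hp)

lemma distGap_zero_pos (hp : 0 < p) (hfin : A.Finite) (hA : A.Nonempty) (h₀ : (0 : E) ∉ A) :
    0 < distGap p A 0 := by
  rw [distGap, Metric.infDist_zero_of_mem (Set.mem_insert 0 A), Real.zero_rpow hp.ne', sub_zero]
  exact Real.rpow_pos_of_pos ((hfin.isClosed.notMem_iff_infDist_pos hA).1 h₀) p

variable [NormedSpace ℝ E]

lemma IsSphereCover.hasCompactSupport_distGap [ProperSpace E] (hA : IsSphereCover A) (p : ℝ) :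
    HasCompactSupport (distGap p A) :=
  .intro (isCompact_closedBall 0 1) fun z hz => by
    rw [mem_closedBall_zero_iff, not_le] at hz
    rw [distGap, hA.infDist_insert_zero hz.le, sub_self]

lemma distGap_inv_smul_sub (p : ℝ) (A : Set E) {t : ℝ} (ht : t ≠ 0) (a z : E) :
    distGap p A (t⁻¹ • (z - a)) =
      ‖t‖⁻¹ ^ p * (Metric.infDist z ((fun w => a + t • w) '' A) ^ p -
        Metric.infDist z ((fun w => a + t • w) '' insert 0 A) ^ p) := by
  have hrpow (s : Set E) := Real.mul_rpow (z := p) (inv_nonneg.2 (norm_nonneg t))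
    (Metric.infDist_nonneg (x := z) (s := (fun w => a + t • w) '' s))
  rw [distGap, infDist_inv_smul_sub ht, infDist_inv_smul_sub ht, hrpow, hrpow, mul_sub]

end DistGap

section VagueConvergence

open scoped BoundedContinuousFunction CompactlySupported Convolution

section Rescale

variable {E : Type*} [NormedAddCommGroup E] [NormedSpace ℝ E]

/-- The bump `ψ`, shrunk by the factor `t` and moved to `a`. -/
noncomputable def rescale (ψ : C_c(E, ℝ)) (t : ℝ) (a : E) : E →ᵇ ℝ :=
  ψ.toBoundedContinuousFunction.compContinuous ⟨fun z => t⁻¹ • (z - a), by fun_prop⟩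

lemma rescale_apply (ψ : C_c(E, ℝ)) (t : ℝ) (a z : E) :
    rescale ψ t a z = ψ (t⁻¹ • (z - a)) := rfl

lemma continuous_rescale (ψ : C_c(E, ℝ)) (t : ℝ) : Continuous (rescale ψ t) := by
  have huc : UniformContinuous fun z : E => ψ (t⁻¹ • z) :=
    (CompactlySupportedContinuousMapClass.uniformContinuous ψ).comp (uniformContinuous_const_smul _)
  refine Metric.continuous_iff.2 fun a ε hε => ?_
  obtain ⟨δ, hδ, h⟩ := Metric.uniformContinuous_iff.1 huc (ε / 2) (half_pos hε)
  refine ⟨δ, hδ, fun b hb => lt_of_le_of_lt ?_ (half_lt_self hε)⟩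
  refine (BoundedContinuousFunction.dist_le (half_pos hε).le).2 fun z => ?_
  exact (h (by rwa [dist_sub_left])).le

lemma hasCompactSupport_rescale (ψ : C_c(E, ℝ)) {t : ℝ} (ht : t ≠ 0) (a : E) :
    HasCompactSupport (rescale ψ t a) :=
  ψ.hasCompactSupport.comp_homeomorph
    ((Homeomorph.subRight a).trans (Homeomorph.smulOfNeZero t⁻¹ (inv_ne_zero ht)))

lemma exists_support_rescale_subset_ball (ψ : C_c(E, ℝ)) {δ : ℝ} (hδ : 0 < δ) :
    ∃ t > 0, Function.support (rescale ψ t 0) ⊆ Metric.ball 0 δ := by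
  obtain ⟨r, hr₀, hr⟩ := ψ.hasCompactSupport.isCompact.isBounded.exists_pos_norm_lt
  have ht : 0 < δ / r := div_pos hδ hr₀
  refine ⟨δ / r, ht, fun z hz => ?_⟩
  rw [Function.mem_support, rescale_apply, sub_zero] at hz
  have hz' := hr _ (subset_tsupport _ hz)
  rwa [norm_smul, norm_inv, Real.norm_of_nonneg ht.le, inv_mul_lt_iff₀ ht,
    div_mul_cancel₀ _ hr₀.ne', ← mem_ball_zero_iff] at hz'

variable [MeasurableSpace E] [BorelSpace E]

lemma integral_rescale_pos (ν : Measure E) [IsFiniteMeasureOnCompacts ν] [ν.IsOpenPosMeasure]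
    {ψ : C_c(E, ℝ)} (hψ : ∀ z, 0 ≤ ψ z) (hψ₀ : ψ 0 ≠ 0) {t : ℝ} (ht : t ≠ 0) (a : E) :
    0 < ∫ z, rescale ψ t a z ∂ν :=
  (rescale ψ t a).continuous.integral_pos_of_hasCompactSupport_nonneg_nonzero
    (hasCompactSupport_rescale ψ ht a) (fun _ => hψ _) (x := a)
    (by rwa [rescale_apply, sub_self, smul_zero])

lemma integral_smul_rescale_apply [FiniteDimensional ℝ E] (ν : Measure E)
    [ν.IsAddHaarMeasure] (ψ g : C_c(E, ℝ)) (t : ℝ) (z : E) :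
    (∫ a, g a • rescale ψ t a ∂ν) z =
      (rescale ψ t 0 ⋆[ContinuousLinearMap.lsmul ℝ ℝ, ν] g) z := by
  have hint : Integrable (fun a => g a • rescale ψ t a) ν :=
    (g.continuous.smul (continuous_rescale ψ t)).integrable_of_hasCompactSupport
      g.hasCompactSupport.smul_right
  calc (∫ a, g a • rescale ψ t a ∂ν) z
      = ∫ a, g a • rescale ψ t a z ∂ν :=
        ((BoundedContinuousFunction.evalCLM ℝ z).integral_comp_comm hint).symm
    _ = ∫ a, rescale ψ t 0 (z - a) • g a ∂ν := by
        simp only [rescale_apply, sub_zero, smul_eq_mul, mul_comm]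
    _ = _ := convolution_lsmul_swap.symm

lemma integral_mem_of_isClosed {X V : Type*} [MeasurableSpace X] {ν : Measure X}
    [NormedAddCommGroup V] [NormedSpace ℝ V] [CompleteSpace V] {S : Submodule ℝ V}
    (hS : IsClosed (S : Set V)) {f : X → V} (hf : ∀ x, f x ∈ S) : ∫ x, f x ∂ν ∈ S := by
  have := hS.completeSpace_coe
  rw [show ∫ x, f x ∂ν = S.subtypeₗᵢ (∫ x, ⟨f x, hf x⟩ ∂ν) from
    S.subtypeₗᵢ.integral_comp_comm fun x => (⟨f x, hf x⟩ : S)]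
  exact Subtype.prop _

lemma mem_of_forall_rescale_mem [FiniteDimensional ℝ E] {S : Submodule ℝ (E →ᵇ ℝ)}
    (hS : IsClosed (S : Set (E →ᵇ ℝ))) {ψ : C_c(E, ℝ)} (hψ : ∀ z, 0 ≤ ψ z) (hψ₀ : ψ 0 ≠ 0)
    (h : ∀ t > 0, ∀ a, rescale ψ t a ∈ S) (g : C_c(E, ℝ)) :
    g.toBoundedContinuousFunction ∈ S := by
  rw [← SetLike.mem_coe, ← hS.closure_eq, Metric.mem_closure_iff]
  intro ε hε
  obtain ⟨δ, hδ, hg⟩ := Metric.uniformContinuous_iff.1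
    (CompactlySupportedContinuousMapClass.uniformContinuous g) (ε / 2) (half_pos hε)
  obtain ⟨t, ht, hsupport⟩ := exists_support_rescale_subset_ball ψ hδ
  let ν : Measure E := Measure.addHaar
  let m := ∫ z, rescale ψ t 0 z ∂ν
  have hm : 0 < m := integral_rescale_pos ν hψ hψ₀ ht.ne' 0
  have hintegral : ∫ z, (m⁻¹ • ⇑(rescale ψ t 0)) z ∂ν = 1 := by
    simp only [Pi.smul_apply, smul_eq_mul, integral_const_mul]
    exact inv_mul_cancel₀ hm.ne'
  refine ⟨m⁻¹ • ∫ a, g a • rescale ψ t a ∂ν,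
    S.smul_mem _ (integral_mem_of_isClosed hS fun a => S.smul_mem _ (h t ht a)), ?_⟩
  refine lt_of_le_of_lt ?_ (half_lt_self hε)
  rw [dist_comm, BoundedContinuousFunction.dist_le (half_pos hε).le]
  intro z
  rw [BoundedContinuousFunction.smul_apply, integral_smul_rescale_apply, ← Pi.smul_apply,
    ← smul_convolution]
  exact dist_convolution_le (half_pos hε).le
    ((Function.support_const_smul_subset _ _).trans hsupport)
    (fun w => mul_nonneg (inv_nonneg.2 hm.le) (hψ _)) hintegral
    g.continuous.aestronglyMeasurable fun w hw => (hg hw).le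

end Rescale

section ConvergenceSubmodule

variable {X ι : Type*} [TopologicalSpace X] [MeasurableSpace X] [OpensMeasurableSpace X]
  (l : Filter ι) (μ : ι → Measure X) (μ' : Measure X)

/-- The bounded continuous functions whose integrals against `μ i` tend to the integral against
`μ'`. -/
def convergenceSubmodule [∀ i, IsFiniteMeasure (μ i)] [IsFiniteMeasure μ'] :
    Submodule ℝ (X →ᵇ ℝ) where
  carrier := {f | Tendsto (fun i => ∫ z, f z ∂μ i) l (𝓝 (∫ z, f z ∂μ'))}
  zero_mem' := by
    simp only [Set.mem_ofPred_eq, BoundedContinuousFunction.coe_zero, Pi.zero_apply, integral_zero]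
    exact tendsto_const_nhds
  add_mem' {f g} hf hg := by
    simp only [Set.mem_ofPred_eq, BoundedContinuousFunction.coe_add, Pi.add_apply,
      integral_add (f.integrable _) (g.integrable _)]
    exact hf.add hg
  smul_mem' c f hf := by
    simp only [Set.mem_ofPred_eq, BoundedContinuousFunction.coe_smul, integral_smul]
    exact hf.const_smul c

lemma isClosed_convergenceSubmodule [∀ i, IsProbabilityMeasure (μ i)] [IsProbabilityMeasure μ'] :
    IsClosed (convergenceSubmodule l μ μ' : Set (X →ᵇ ℝ)) := by
  have hlip (ν : Measure X) [IsProbabilityMeasure ν] :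
      LipschitzWith 1 fun f : X →ᵇ ℝ => ∫ z, f z ∂ν := LipschitzWith.mk_one fun f g => by
    rw [dist_eq_norm, dist_eq_norm, ← integral_sub (f.integrable ν) (g.integrable ν)]
    exact (f - g).norm_integral_le_norm ν
  exact (LipschitzWith.uniformEquicontinuous _ 1 fun i => hlip (μ i)).equicontinuous
    |>.isClosed_setOfPred_tendsto (hlip μ').continuous

end ConvergenceSubmodule

/-- Vague convergence of `μ` to `μ'` along `l`: the integral of every compactly supported
continuous function converges. -/
def TendstoVaguely {X ι : Type*} [TopologicalSpace X] [MeasurableSpace X] (μ : ι → Measure X)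
    (l : Filter ι) (μ' : Measure X) : Prop :=
  ∀ g : C_c(X, ℝ), Tendsto (fun i => ∫ z, g z ∂μ i) l (𝓝 (∫ z, g z ∂μ'))

section TendstoVaguely

variable {E ι : Type*} [NormedAddCommGroup E] [NormedSpace ℝ E] [FiniteDimensional ℝ E]
  [MeasurableSpace E] [BorelSpace E] {l : Filter ι} {μ : ι → Measure E} {μ' : Measure E}
  [∀ i, IsProbabilityMeasure (μ i)] [IsProbabilityMeasure μ']

lemma tendstoVaguely_of_forall_rescale {ψ : C_c(E, ℝ)} (hψ : ∀ z, 0 ≤ ψ z) (hψ₀ : ψ 0 ≠ 0)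
    (h : ∀ t > 0, ∀ a, Tendsto (fun i => ∫ z, rescale ψ t a z ∂μ i) l
      (𝓝 (∫ z, rescale ψ t a z ∂μ'))) : TendstoVaguely μ l μ' :=
  mem_of_forall_rescale_mem (isClosed_convergenceSubmodule l μ μ') hψ hψ₀ h

variable {p : ℝ} {N : ℕ}

lemma tendsto_integral_distGap (hp : 1 ≤ p) (hμ : ∀ i, absMoment p (μ i) ≠ ∞)
    (hμ' : absMoment p μ' ≠ ∞) [NeZero N]
    (h : ∀ x : Fin N → E, Tendsto (fun i => quantErr p N (μ i) x) l (𝓝 (quantErr p N μ' x)))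
    {A : Set E} (hA : A.Nonempty) (hN : A.encard + 1 ≤ N) {t : ℝ} (ht : t ≠ 0) (a : E) :
    Tendsto (fun i => ∫ z, distGap p A (t⁻¹ • (z - a)) ∂μ i) l
      (𝓝 (∫ z, distGap p A (t⁻¹ • (z - a)) ∂μ')) := by
  have hlim {s : Set E} (hs : s.Nonempty) (hN : s.encard ≤ N) :=
    tendsto_integral_infDist_rpow (one_pos.trans_le hp) h (hs.image fun w => a + t • w)
      ((Set.encard_image_le _ s).trans hN)
  have hint {s : Set E} (hs : s.Nonempty) (ν : Measure E) [IsProbabilityMeasure ν]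
      (hν : absMoment p ν ≠ ∞) := integrable_infDist_rpow hp hν (hs.image fun w => a + t • w)
  have hA' : (insert 0 A).Nonempty := Set.insert_nonempty 0 A
  simp_rw [distGap_inv_smul_sub p A ht, integral_const_mul,
    integral_sub (hint hA _ hμ') (hint hA' _ hμ'),
    integral_sub (hint hA _ (hμ _)) (hint hA' _ (hμ _))]
  exact ((hlim hA (le_self_add.trans hN)).sub
    (hlim hA' ((Set.encard_insert_le A 0).trans hN))).const_mul _

lemma tendstoVaguely_of_tendsto_quantErr (hp : 1 ≤ p) (hμ : ∀ i, absMoment p (μ i) ≠ ∞)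
    (hμ' : absMoment p μ' ≠ ∞) [NeZero N]
    (h : ∀ x : Fin N → E, Tendsto (fun i => quantErr p N (μ i) x) l (𝓝 (quantErr p N μ' x)))
    {A : Set E} (hA : IsSphereCover A) (hN : A.encard + 1 ≤ N) :
    TendstoVaguely μ l μ' := by
  have hp₀ : 0 < p := one_pos.trans_le hp
  cases subsingleton_or_nontrivial E
  · intro g
    have hconst (z : E) : g z = g 0 := congrArg g (Subsingleton.elim z 0)
    simp_rw [hconst, integral_const, probReal_univ]
    exact tendsto_const_nhds
  have hfin : A.Finite := Set.finite_of_encard_le_coe (le_self_add.trans hN)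
  have : ProperSpace E := FiniteDimensional.proper_real E
  let ψ : C_c(E, ℝ) := ⟨⟨distGap p A, continuous_distGap hp₀.le A⟩, hA.hasCompactSupport_distGap p⟩
  refine tendstoVaguely_of_forall_rescale (ψ := ψ) (distGap_nonneg hp₀.le hA.nonempty)
    (distGap_zero_pos hp₀ hfin hA.nonempty hA.zero_notMem).ne' fun t ht a => ?_
  exact tendsto_integral_distGap hp hμ hμ' h hA.nonempty hN ht.ne' a

end TendstoVaguely

end VagueConvergence

section BlockCoupling

variable {X κ : Type*} [MeasurableSpace X] [Fintype κ] {F : κ → X → ℝ≥0∞}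

/-- A measure that couples the piece of `μ` with density `F i` independently to the piece of `ν`
with density `F i`, for each `i`. The weights are the largest for which the marginals stay below `μ`
and `ν` when `∑ i, F i ≤ 1`, so the `i`-th block carries the smaller of the two masses. -/
noncomputable def blockCoupling (F : κ → X → ℝ≥0∞) (μ ν : Measure X) : Measure (X × X) :=
  ∑ i, (max (∫⁻ z, F i z ∂μ) (∫⁻ z, F i z ∂ν))⁻¹ •
    (μ.withDensity (F i)).prod (ν.withDensity (F i))

lemma inv_max_mul_le_one (m n : ℝ≥0∞) : (max m n)⁻¹ * n ≤ 1 :=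
  (mul_le_mul_right (le_max_right m n) _).trans (ENNReal.inv_mul_le_one _)

lemma sum_smul_withDensity_le (hF : ∀ i, Measurable (F i)) (hsum : ∀ z, ∑ i, F i z ≤ 1)
    {c : κ → ℝ≥0∞} (hc : ∀ i, c i ≤ 1) (μ : Measure X) :
    ∑ i, c i • μ.withDensity (F i) ≤ μ := by
  rw [Measure.le_iff]
  intro s hs
  simp only [Measure.finsetSum_apply, Measure.smul_apply, smul_eq_mul, withDensity_apply _ hs]
  calc ∑ i, c i * ∫⁻ z in s, F i z ∂μ
      ≤ ∑ i, ∫⁻ z in s, F i z ∂μ := Finset.sum_le_sum fun i _ => mul_le_of_le_one_left' (hc i)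
    _ = ∫⁻ z in s, ∑ i, F i z ∂μ := (lintegral_finsetSum _ fun i _ => hF i).symm
    _ ≤ ∫⁻ _ in s, 1 ∂μ := lintegral_mono hsum
    _ = μ s := setLIntegral_one s

lemma ae_blockCoupling (hF : ∀ i, Measurable (F i)) (μ ν : Measure X) [SFinite ν]
    {P : X × X → Prop} (hP : ∀ i z w, F i z ≠ 0 → F i w ≠ 0 → P (z, w)) :
    ∀ᵐ q ∂blockCoupling F μ ν, P q := by
  have hpos (i) (ρ : Measure X) : ∀ᵐ z ∂ρ.withDensity (F i), F i z ≠ 0 :=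
    (ae_withDensity_iff (hF i)).2 (ae_of_all _ fun _ => id)
  refine ae_finsetSum_measure_iff.2 fun i _ => Measure.ae_smul_measure ?_ _
  filter_upwards [Measure.quasiMeasurePreserving_fst.ae (hpos i μ),
    Measure.quasiMeasurePreserving_snd.ae (hpos i ν)] with q h₁ h₂
  exact hP i q.1 q.2 h₁ h₂

variable (F) (μ ν : Measure X) [SFinite ν]

lemma fst_blockCoupling :
    (blockCoupling F μ ν).fst = ∑ i, ((max (∫⁻ z, F i z ∂μ) (∫⁻ z, F i z ∂ν))⁻¹ *
      ∫⁻ z, F i z ∂ν) • μ.withDensity (F i) := by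
  rw [Measure.fst, blockCoupling, Measure.map_finset_sum measurable_fst.aemeasurable]
  refine Finset.sum_congr rfl fun i _ => ?_
  rw [Measure.map_smul, Measure.map_fst_prod, withDensity_apply _ .univ, setLIntegral_univ,
    smul_smul]

variable {F}

lemma fst_blockCoupling_le (hF : ∀ i, Measurable (F i)) (hsum : ∀ z, ∑ i, F i z ≤ 1) :
    (blockCoupling F μ ν).fst ≤ μ := by
  rw [fst_blockCoupling]
  exact sum_smul_withDensity_le hF hsum (fun i => inv_max_mul_le_one _ _) μ

variable [SFinite μ]

variable (F) in
lemma snd_blockCoupling : (blockCoupling F μ ν).snd = (blockCoupling F ν μ).fst := by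
  rw [← Measure.fst_map_swap, blockCoupling, Measure.map_finset_sum measurable_swap.aemeasurable]
  simp only [Measure.map_smul, Measure.prod_swap]
  simp only [max_comm (∫⁻ z, F _ z ∂μ)]
  rfl

lemma snd_blockCoupling_le (hF : ∀ i, Measurable (F i)) (hsum : ∀ z, ∑ i, F i z ≤ 1) :
    (blockCoupling F μ ν).snd ≤ ν :=
  (snd_blockCoupling F μ ν).trans_le (fst_blockCoupling_le ν μ hF hsum)

lemma lintegral_enorm_sub_rpow_blockCoupling_le {E : Type*} [NormedAddCommGroup E]
    [MeasurableSpace E] {F : κ → E → ℝ≥0∞} {p : ℝ} (hp : 0 ≤ p) (μ ν : Measure E)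
    [IsProbabilityMeasure μ] [SFinite ν] (hF : ∀ i, Measurable (F i))
    (hsum : ∀ z, ∑ i, F i z ≤ 1) {δ : ℝ≥0∞}
    (hδ : ∀ i z w, F i z ≠ 0 → F i w ≠ 0 → edist z w ≤ δ) :
    ∫⁻ q, ‖q.1 - q.2‖ₑ ^ p ∂blockCoupling F μ ν ≤ δ ^ p := by
  have hmass : blockCoupling F μ ν Set.univ ≤ 1 := by
    rw [← Measure.fst_univ]
    exact (fst_blockCoupling_le μ ν hF hsum Set.univ).trans_eq measure_univ
  calc ∫⁻ q, ‖q.1 - q.2‖ₑ ^ p ∂blockCoupling F μ ν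
      ≤ ∫⁻ _, δ ^ p ∂blockCoupling F μ ν := lintegral_mono_ae <|
        ae_blockCoupling hF μ ν fun i z w hz hw => by
          rw [← edist_eq_enorm_sub]
          exact ENNReal.rpow_le_rpow (hδ i z w hz hw) hp
    _ = δ ^ p * blockCoupling F μ ν Set.univ := lintegral_const _
    _ ≤ δ ^ p := mul_le_of_le_one_right' hmass

lemma absMoment_fst_blockCoupling {E : Type*} [NormedAddCommGroup E] [MeasurableSpace E]
    (p : ℝ) (F : κ → E → ℝ≥0∞) (μ ν : Measure E) [SFinite ν] :
    absMoment p (blockCoupling F μ ν).fst =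
      ∑ i, ((max (∫⁻ z, F i z ∂μ) (∫⁻ z, F i z ∂ν))⁻¹ * ∫⁻ z, F i z ∂ν) *
        absMoment p (μ.withDensity (F i)) := by
  simp only [absMoment, fst_blockCoupling, lintegral_finsetSum_measure, lintegral_smul_measure,
    smul_eq_mul]

lemma absMoment_withDensity_coe {E : Type*} [NormedAddCommGroup E] [MeasurableSpace E] (p : ℝ)
    (μ : Measure E) {f : E → ℝ≥0} (hf : Measurable f) :
    absMoment p (μ.withDensity fun z => f z) = ∫⁻ z, f z * ‖z‖ₑ ^ p ∂μ :=
  lintegral_withDensity_eq_lintegral_mul_non_measurable _ hf.coe_nnreal_ennreal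
    (.of_forall fun _ => ENNReal.coe_lt_top) _

end BlockCoupling

section VagueLimits

open scoped CompactlySupported

lemma exists_finset_partition {X : Type*} [EMetricSpace X] [LocallyCompactSpace X]
    {K : Set X} (hK : IsCompact K) {δ : ℝ≥0∞} (hδ : δ ≠ 0) :
    ∃ (t : Finset X) (f : t → C_c(X, ℝ≥0)), (∀ z, ∑ i, f i z ≤ 1) ∧ (∀ z ∈ K, ∑ i, f i z = 1) ∧
      ∀ i z w, f i z ≠ 0 → f i w ≠ 0 → edist z w ≤ δ := by
  obtain ⟨t, -, hcover⟩ := hK.elim_nhds_subcover (fun x => Metric.eball x (δ / 2)) fun x _ =>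
    Metric.eball_mem_nhds x (ENNReal.half_pos hδ)
  obtain ⟨f, hfsub, hfcpt⟩ := PartitionOfUnity.exists_isSubordinate_of_locallyFinite_t2space hK
    (fun x : t => Metric.eball x.1 (δ / 2)) (fun _ => Metric.isOpen_eball)
    (locallyFinite_of_finite _) (hcover.trans_eq (Set.biUnion_eq_iUnion _ _))
  let g (i : t) : C_c(X, ℝ≥0) := (⟨f i, hfcpt i⟩ : C_c(X, ℝ)).nnrealPart
  have hgsum (z) : ∑ i, g i z = Real.toNNReal (∑ᶠ i, f i z) := by
    rw [finsum_eq_sum_of_fintype, Real.toNNReal_sum_of_nonneg fun i _ => f.nonneg i z]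
    rfl
  have hgball {i : t} {z : X} (hz : g i z ≠ 0) : edist z i < δ / 2 := by
    refine hfsub i (subset_tsupport _ fun h₀ => hz ?_)
    rw [CompactlySupportedContinuousMap.nnrealPart_apply]
    exact (congrArg Real.toNNReal h₀).trans Real.toNNReal_zero
  refine ⟨t, g, fun z => ?_, fun z hz => ?_, fun i z w hz hw => ?_⟩
  · rw [hgsum, Real.toNNReal_le_one]
    exact f.sum_le_one z
  · rw [hgsum, f.sum_eq_one hz, Real.toNNReal_one]
  · calc edist z w ≤ edist z i + edist w i := edist_triangle_right z w i
      _ ≤ δ / 2 + δ / 2 := add_le_add (hgball hz).le (hgball hw).le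
      _ = δ := ENNReal.add_halves δ

variable {X ι : Type*} [TopologicalSpace X] [MeasurableSpace X] [OpensMeasurableSpace X]
  {l : Filter ι}

lemma lintegral_coe_compactlySupported (μ : Measure X) [IsFiniteMeasureOnCompacts μ]
    (f : C_c(X, ℝ≥0)) : ∫⁻ z, f z ∂μ = ENNReal.ofReal (∫ z, f.toReal z ∂μ) := by
  simp only [CompactlySupportedContinuousMap.toReal_apply]
  exact lintegral_coe_eq_integral f (f.toReal.integrable.congr (.of_forall f.toReal_apply))

lemma TendstoVaguely.tendsto_lintegral {μ : ι → Measure X} {μ' : Measure X}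
    [∀ i, IsFiniteMeasureOnCompacts (μ i)] [IsFiniteMeasureOnCompacts μ']
    (h : TendstoVaguely μ l μ') (f : C_c(X, ℝ≥0)) :
    Tendsto (fun i => ∫⁻ z, f z ∂μ i) l (𝓝 (∫⁻ z, f z ∂μ')) := by
  simp only [lintegral_coe_compactlySupported]
  exact ENNReal.tendsto_ofReal (h f.toReal)

variable {E : Type*} [NormedAddCommGroup E] [MeasurableSpace E] [BorelSpace E] {p : ℝ}
  {α β : ι → Measure E} {μ' : Measure E} [∀ i, IsFiniteMeasureOnCompacts (α i)]
  [∀ i, IsFiniteMeasureOnCompacts (β i)] [IsFiniteMeasureOnCompacts μ']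

lemma TendstoVaguely.tendsto_absMoment_withDensity (hp : 0 ≤ p) (h : TendstoVaguely α l μ')
    (f : C_c(E, ℝ≥0)) :
    Tendsto (fun i => absMoment p ((α i).withDensity fun z => f z)) l
      (𝓝 (absMoment p (μ'.withDensity fun z => f z))) := by
  let g : C_c(E, ℝ≥0) := ⟨⟨fun z => f z * ‖z‖₊ ^ p, f.continuous.mul
    ((NNReal.continuous_rpow_const hp).comp continuous_nnnorm)⟩, f.hasCompactSupport.mul_right⟩
  have hg (ν : Measure E) : absMoment p (ν.withDensity fun z => f z) = ∫⁻ z, g z ∂ν := by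
    refine (absMoment_withDensity_coe p ν (map_continuous f).measurable).trans
      (lintegral_congr fun z => ?_)
    rw [enorm_eq_nnnorm, ← ENNReal.coe_rpow_of_nonneg _ hp, ← ENNReal.coe_mul]
    rfl
  simp only [hg]
  exact h.tendsto_lintegral g

lemma tendsto_inv_max_mul {m n : ι → ℝ≥0∞} {c : ℝ≥0∞} (hm : Tendsto m l (𝓝 c))
    (hn : Tendsto n l (𝓝 c)) (hc₀ : c ≠ 0) (hc : c ≠ ∞) :
    Tendsto (fun i => (max (m i) (n i))⁻¹ * n i) l (𝓝 1) := by
  have hmax := (hm.max hn).inv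
  rw [max_self] at hmax
  rw [← ENNReal.inv_mul_cancel hc₀ hc]
  exact ENNReal.Tendsto.mul hmax (.inr hc) hn (.inr (ENNReal.inv_ne_top.2 hc₀))

lemma tendsto_absMoment_fst_blockCoupling {κ : Type*} [Fintype κ] (hp : 0 ≤ p)
    [∀ i, SFinite (β i)] (hα : TendstoVaguely α l μ') (hβ : TendstoVaguely β l μ')
    (f : κ → C_c(E, ℝ≥0)) :
    Tendsto (fun i => absMoment p (blockCoupling (fun j z => f j z) (α i) (β i)).fst) l
      (𝓝 (∑ j, absMoment p (μ'.withDensity fun z => f j z))) := by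
  simp only [absMoment_fst_blockCoupling]
  refine tendsto_finsetSum _ fun j _ => ?_
  have hX := hα.tendsto_absMoment_withDensity hp (f j)
  have hm := hα.tendsto_lintegral (f j)
  have hn := hβ.tendsto_lintegral (f j)
  obtain hc₀ | hc₀ := eq_or_ne (∫⁻ z, f j z ∂μ') 0
  · have hX₀ : absMoment p (μ'.withDensity fun z => f j z) = 0 := by
      have hzero : μ'.withDensity (fun z => f j z) = 0 := by
        rw [← Measure.measure_univ_eq_zero, withDensity_apply _ .univ, setLIntegral_univ, hc₀]
      rw [hzero, absMoment, lintegral_zero_measure]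
    rw [hX₀] at hX ⊢
    exact tendsto_of_tendsto_of_tendsto_of_le_of_le tendsto_const_nhds hX (fun _ => zero_le)
      fun i => mul_le_of_le_one_left' (inv_max_mul_le_one _ _)
  · have hc : ∫⁻ z, f j z ∂μ' ≠ ∞ := by
      rw [lintegral_coe_compactlySupported]
      exact ENNReal.ofReal_ne_top
    simpa only [one_mul] using ENNReal.Tendsto.mul (tendsto_inv_max_mul hm hn hc₀ hc)
      (.inl one_ne_zero) hX (.inr ENNReal.one_ne_top)

end VagueLimits

section WassersteinConvergence

open scoped CompactlySupported

lemma exists_isCompact_setLIntegral_compl_lt {X : Type*} [MetricSpace X] [CompleteSpace X]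
    [SecondCountableTopology X] [MeasurableSpace X] [BorelSpace X] {μ : Measure X}
    {f : X → ℝ≥0∞} (hf : ∫⁻ z, f z ∂μ ≠ ∞) {η : ℝ≥0∞} (hη : η ≠ 0) :
    ∃ K, IsCompact K ∧ ∫⁻ z in Kᶜ, f z ∂μ < η := by
  have := isFiniteMeasure_withDensity hf
  obtain ⟨K, -, hK, hlt⟩ := MeasurableSet.univ.exists_isCompact_sdiff_lt
    (measure_ne_top (μ.withDensity f) _) hη
  refine ⟨K, hK, ?_⟩
  rwa [← withDensity_apply _ hK.measurableSet.compl, Set.compl_eq_univ_sdiff]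

lemma exists_rpow_add_lt {p : ℝ} (hp : 0 < p) {C ε : ℝ≥0∞} (hC : C ≠ ∞) (hε : 0 < ε) :
    ∃ η ≠ 0, η ^ p + C * (η + η) < ε := by
  have hlim : Tendsto (fun η : ℝ≥0∞ => η ^ p + C * (η + η)) (𝓝[>] 0) (𝓝 (0 ^ p + C * (0 + 0))) :=
    ((ENNReal.continuous_rpow_const.tendsto 0).add (ENNReal.Tendsto.const_mul
      (tendsto_id.add tendsto_id) (.inr hC))).mono_left nhdsWithin_le_nhds
  rw [ENNReal.zero_rpow_of_pos hp, add_zero, mul_zero, add_zero] at hlim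
  obtain ⟨η, hη, hη₀⟩ := ((hlim.eventually_lt_const hε).and self_mem_nhdsWithin).exists
  exact ⟨η, hη₀.ne', hη⟩

variable {E : Type*} [NormedAddCommGroup E] [MeasurableSpace E] [BorelSpace E] {p : ℝ}

lemma absMoment_le_sum_add_setLIntegral_compl {κ : Type*} [Fintype κ] (p : ℝ) (μ : Measure E)
    {f : κ → E → ℝ≥0} (hf : ∀ j, Measurable (f j)) {K : Set E} (hK : MeasurableSet K)
    (hsum : ∀ z ∈ K, ∑ j, f j z = 1) :
    absMoment p μ ≤
      ∑ j, absMoment p (μ.withDensity fun z => f j z) + ∫⁻ z in Kᶜ, ‖z‖ₑ ^ p ∂μ := by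
  have hmeas (j) : Measurable fun z => f j z * ‖z‖ₑ ^ p :=
    (hf j).coe_nnreal_ennreal.mul (by fun_prop)
  rw [absMoment, ← lintegral_add_compl _ hK]
  gcongr
  calc ∫⁻ z in K, ‖z‖ₑ ^ p ∂μ
      = ∫⁻ z in K, ∑ j, f j z * ‖z‖ₑ ^ p ∂μ := setLIntegral_congr_fun hK fun z hz => by
        rw [← Finset.sum_mul, ← ENNReal.ofNNReal_finsetSum, hsum z hz, ENNReal.coe_one, one_mul]
    _ ≤ ∫⁻ z, ∑ j, f j z * ‖z‖ₑ ^ p ∂μ := setLIntegral_le_lintegral _ _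
    _ = ∑ j, absMoment p (μ.withDensity fun z => f j z) := by
        simp only [absMoment_withDensity_coe p μ (hf _)]
        exact lintegral_finsetSum _ fun j _ => hmeas j

lemma transportCost_le_blockCoupling {κ : Type*} [Fintype κ] (hp : 1 ≤ p) {μ ν : Measure E}
    [IsProbabilityMeasure μ] [IsProbabilityMeasure ν] (hμ : absMoment p μ ≠ ∞)
    (hν : absMoment p ν ≠ ∞) {F : κ → E → ℝ≥0∞} (hF : ∀ j, Measurable (F j))
    (hsum : ∀ z, ∑ j, F j z ≤ 1) {δ : ℝ≥0∞}
    (hδ : ∀ j z w, F j z ≠ 0 → F j w ≠ 0 → edist z w ≤ δ) :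
    transportCost p μ ν ≤ δ ^ p +
      2 ^ (p - 1) * ((absMoment p μ - absMoment p (blockCoupling F μ ν).fst) +
        (absMoment p ν - absMoment p (blockCoupling F ν μ).fst)) := by
  have hp₀ : 0 ≤ p := zero_le_one.trans hp
  have h₁ := fst_blockCoupling_le μ ν hF hsum
  have h₂ := fst_blockCoupling_le ν μ hF hsum
  have := isFiniteMeasure_of_le _ h₁
  have := isFiniteMeasure_of_le _ h₂
  have hle := transportCost_le_of_fst_le_of_snd_le hp (measure_univ.trans measure_univ.symm) h₁
    (snd_blockCoupling_le μ ν hF hsum)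
  rw [snd_blockCoupling, absMoment_sub h₁ (ne_top_of_le_ne_top hμ (absMoment_mono h₁)),
    absMoment_sub h₂ (ne_top_of_le_ne_top hν (absMoment_mono h₂))] at hle
  refine hle.trans ?_
  gcongr
  exact lintegral_enorm_sub_rpow_blockCoupling_le hp₀ μ ν hF hsum hδ

variable {ι : Type*} {l : Filter ι} {μ : ι → Measure E} {μ' : Measure E}
  [∀ i, IsProbabilityMeasure (μ i)] [IsProbabilityMeasure μ']

lemma tendsto_transportCost_of_tendstoVaguely [ProperSpace E] (hp : 1 ≤ p)
    (hvague : TendstoVaguely μ l μ') (hμ' : absMoment p μ' ≠ ∞)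
    (hmoment : Tendsto (fun i => absMoment p (μ i)) l (𝓝 (absMoment p μ'))) :
    Tendsto (fun i => transportCost p (μ i) μ') l (𝓝 0) := by
  have hp₀ : 0 < p := one_pos.trans_le hp
  have hconst : TendstoVaguely (fun _ : ι => μ') l μ' := fun _ => tendsto_const_nhds
  have hC : (2 : ℝ≥0∞) ^ (p - 1) ≠ ∞ := by finiteness
  refine ENNReal.tendsto_nhds_zero.2 fun ε hε => ?_
  obtain ⟨η, hη₀, hη⟩ := exists_rpow_add_lt hp₀ hC hε
  obtain ⟨K, hK, htail⟩ := exists_isCompact_setLIntegral_compl_lt hμ' hη₀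
  obtain ⟨t, f, hf_le, hf_eq, hdiam⟩ := exists_finset_partition hK hη₀
  have hf (j) : Measurable (f j) := (map_continuous (f j)).measurable
  set T := ∑ j, absMoment p (μ'.withDensity fun z => f j z)
  have hT : absMoment p μ' - T ≤ η := tsub_le_iff_left.2 <|
    (absMoment_le_sum_add_setLIntegral_compl p μ' hf hK.measurableSet hf_eq).trans <| by gcongr
  have hfst := ENNReal.Tendsto.sub hmoment
    (tendsto_absMoment_fst_blockCoupling hp₀.le hvague hconst f) (.inl hμ')
  have hsnd := ENNReal.Tendsto.sub tendsto_const_nhds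
    (tendsto_absMoment_fst_blockCoupling hp₀.le hconst hvague f) (.inl hμ')
  have hbound := (ENNReal.Tendsto.const_mul (hfst.add hsnd) (.inr hC)).const_add (η ^ p)
  have hlt : η ^ p + 2 ^ (p - 1) * ((absMoment p μ' - T) + (absMoment p μ' - T)) < ε :=
    lt_of_le_of_lt (by gcongr) hη
  filter_upwards [hbound.eventually_lt_const hlt, hmoment.eventually_ne hμ'] with i hi hμi
  refine (transportCost_le_blockCoupling hp hμi hμ' (fun j => (hf j).coe_nnreal_ennreal)
    (fun z => ?_) fun j z w hz hw => ?_).trans hi.le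
  · exact_mod_cast hf_le z
  · exact hdiam j z w (ENNReal.coe_ne_zero.1 hz) (ENNReal.coe_ne_zero.1 hw)

lemma tendsto_wassersteinDist_of_tendsto_quantErr [NormedSpace ℝ E] [FiniteDimensional ℝ E]
    (hp : 1 ≤ p) (hμ : ∀ i, absMoment p (μ i) ≠ ∞) (hμ' : absMoment p μ' ≠ ∞) {N : ℕ}
    (h : ∀ x : Fin N → E, Tendsto (fun i => quantErr p N (μ i) x) l (𝓝 (quantErr p N μ' x)))
    {A : Set E} (hA : IsSphereCover A) (hN : A.encard + 1 ≤ N) :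
    Tendsto (fun i => wassersteinDist p (μ i) μ') l (𝓝 0) := by
  have hp₀ : 0 < p := one_pos.trans_le hp
  have : NeZero N := ⟨by
    rintro rfl
    simp at hN⟩
  have : ProperSpace E := FiniteDimensional.proper_real E
  exact tendsto_wassersteinDist_of_tendsto_transportCost hp₀ <|
    tendsto_transportCost_of_tendstoVaguely hp
      (tendstoVaguely_of_tendsto_quantErr hp hμ hμ' h hA hN) hμ'
      (tendsto_absMoment_of_tendsto_quantErr hp₀ hμ hμ' (h 0))

end WassersteinConvergence

end Quantization

open Quantization in
theorem stmt7_general {E : Type*} [NormedAddCommGroup E] [NormedSpace ℝ E]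
    [FiniteDimensional ℝ E] [MeasurableSpace E] [BorelSpace E] {ι : Type*} {l : Filter ι}
    {p : ℝ} (hp : 1 ≤ p) {μ : ι → Measure E} {μ' : Measure E}
    [∀ i, IsProbabilityMeasure (μ i)] [IsProbabilityMeasure μ']
    (hμ : ∀ i, HasFiniteMoment p (μ i)) (hμ' : HasFiniteMoment p μ') :
    [Tendsto (fun i => wassersteinDist p (μ i) μ') l (𝓝 0),
      ∀ N : ℕ, 1 ≤ N →
        TendstoUniformly (fun i (x : Fin N → E) => quantErr p N (μ i) x) (quantErr p N μ') l,
      ∃ N : ℕ,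
        (coverNum E + 1 ≤ N ∨
          (Nonempty (InnerProductSpace ℝ E) ∧ Module.finrank ℝ E + 2 ≤ N)) ∧
        ∀ x : Fin N → E,
          Tendsto (fun i => quantErr p N (μ i) x) l (𝓝 (quantErr p N μ' x))].TFAE := by
  have : ProperSpace E := FiniteDimensional.proper_real E
  tfae_have 1 → 2 := fun h N hN =>
    have : NeZero N := ⟨Nat.one_le_iff_ne_zero.1 hN⟩
    tendstoUniformly_quantErr hp hμ hμ' h
  tfae_have 2 → 3 := fun h =>
    ⟨coverNum E + 1, .inl le_rfl, (h _ (Nat.le_add_left 1 _)).tendsto_at⟩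
  tfae_have 3 → 1 := by
    rintro ⟨N, hN, h⟩
    obtain ⟨A, hAN, hA⟩ : ∃ A : Set E, A.encard + 1 ≤ N ∧ IsSphereCover A := by
      obtain hN | ⟨hinner, hN⟩ := hN
      · obtain ⟨A, hcard, hA⟩ := exists_encard_le_coverNum (E := E)
        exact ⟨A, (add_le_add_left hcard 1).trans (by exact_mod_cast hN), hA⟩
      · obtain ⟨A, hcard, hA⟩ := exists_encard_le_finrank_add_one E hinner
        exact ⟨A, (add_le_add_left hcard 1).trans (by exact_mod_cast hN), hA⟩
    exact tendsto_wassersteinDist_of_tendsto_quantErr hp hμ hμ' h hA hAN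
  tfae_finish

/-- `W_p`-convergence characterization on `ℝ^d`: for probability measures with
finite `p`-th moments, `W_p(μ_n, μ_∞) → 0` iff `e_{N,p}(μ_n, ·) → e_{N,p}(μ_∞, ·)` uniformly
for every `N ≥ 1`, iff `e_{N,p}(μ_n, ·) → e_{N,p}(μ_∞, ·)` pointwise for some
`N ≥ c(d, ‖·‖) + 1` (or `N ≥ d + 2` for a Euclidean norm). -/
theorem stmt7 {E : Type*} [NormedAddCommGroup E] [NormedSpace ℝ E]
    [FiniteDimensional ℝ E] [MeasurableSpace E] [BorelSpace E]
    (p : ℝ) (hp : 1 ≤ p)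
    (μ : ℕ → Measure E) (μ' : Measure E)
    [∀ n, IsProbabilityMeasure (μ n)] [IsProbabilityMeasure μ']
    (hμ : ∀ n, HasFiniteMoment p (μ n)) (hμ' : HasFiniteMoment p μ') :
    (Tendsto (fun n => wassersteinDist p (μ n) μ') atTop (𝓝 0) ↔
      ∀ N : ℕ, 1 ≤ N →
        TendstoUniformly (fun n (x : Fin N → E) => quantErr p N (μ n) x)
          (quantErr p N μ') atTop) ∧
    (Tendsto (fun n => wassersteinDist p (μ n) μ') atTop (𝓝 0) ↔
      ∃ N : ℕ,
        (coverNum E + 1 ≤ N ∨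
          (Nonempty (InnerProductSpace ℝ E) ∧ Module.finrank ℝ E + 2 ≤ N)) ∧
        ∀ x : Fin N → E,
          Tendsto (fun n => quantErr p N (μ n) x) atTop (𝓝 (quantErr p N μ' x))) :=
  have h := stmt7_general hp (l := atTop) hμ hμ'
  ⟨h.out 0 1, h.out 0 2⟩
end

section
/- (À la Paul Lévy characterization on ℝ^d.) Let p ∈ [1, ∞) and let ‖·‖ be a norm on ℝ^d. Let (μ_n)_{n≥1} be Borel probability measures on ℝ^d with finite p-th moments and let N ≥ c(d, ‖·‖) + 1 (or N ≥ d + 2 if ‖·‖ is induced by an inner product). If e_{N,p}(μ_n, ·) converges pointwise on (ℝ^d)^N to some function f, then there exists a Borel probability measure μ_∞ on ℝ^d with finite p-th moment such that μ_n converges weakly to μ_∞, the limit L := lim_n ∫_{ℝ^d} ‖ξ‖^p dμ_n(dξ) exists and is finite, and f(x)^p = e_{N,p}(μ_∞, x)^p + L − ∫_{ℝ^d} ‖ξ‖^p dμ_∞(dξ) for every x ∈ (ℝ^d)^N. -/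
open MeasureTheory Filter Topology
open scoped ENNReal NNReal

/-!
Take finitely many sites `A` and a further site `c` whose Voronoi cell relative to `A` is bounded;
the assumption on `N` provides such `c` and `A` with at most `N` sites in total. The `p`-th powers
of the quantization errors at `A` and at `A ∪ {c}` differ by the integral of a nonnegative
continuous function, not identically zero and supported in that cell. Since translations and
dilations of the sites are allowed, the limits of the integrals of all translates and dilates of
this bump exist. Those integrals determine a finite measure, because the rescaled bumps form an
approximate identity. Placing all sites at `0` shows that the `p`-th moments converge, so the
measures are tight, and Prokhorov's theorem yields the weak limit. Finally,
`infDist ξ S ^ p - ‖ξ‖ ^ p` is negligible against `‖ξ‖ ^ p` at infinity, so its integral passes to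
the limit under bounded `p`-th moments, even though neither term does so alone in general.
-/

open Asymptotics Bornology Metric
open scoped BoundedContinuousFunction Pointwise

section Voronoi

/-- The open Voronoi cell of the site `b` relative to the sites `A`: the points strictly closer to
`b` than to every point of `A`. It is empty when `b ∈ A`. -/
def voronoiCell {X : Type*} [PseudoMetricSpace X] (b : X) (A : Set X) : Set X :=
  {x | ∀ a ∈ A, dist x b < dist x a}

theorem nonempty_of_isBounded_voronoiCell {E : Type*} [NormedAddCommGroup E] [NormedSpace ℝ E]
    [Nontrivial E] {b : E} {A : Set E} (hA : IsBounded (voronoiCell b A)) : A.Nonempty := by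
  rw [Set.nonempty_iff_ne_empty]
  rintro rfl
  refine NormedSpace.unbounded_univ ℝ E (hA.subset fun x _ ↦ ?_)
  exact fun a ha ↦ absurd ha (Set.notMem_empty a)

theorem isBounded_voronoiCell_of_sphere_subset {E : Type*} [NormedAddCommGroup E]
    [NormedSpace ℝ E] {A : Set E} (hA : sphere (0 : E) 1 ⊆ ⋃ a ∈ A, closedBall a 1) :
    IsBounded (voronoiCell 0 A) := by
  refine isBounded_closedBall (x := (0 : E)) (r := 1) |>.subset fun x hx ↦ ?_
  by_contra! hx1
  rw [mem_closedBall_zero_iff, not_le] at hx1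
  have hx0 : ‖x‖ ≠ 0 := by positivity
  set u : E := ‖x‖⁻¹ • x with hu
  have hxu : ‖x‖ • u = x := by rw [hu, smul_smul, mul_inv_cancel₀ hx0, one_smul]
  have hu1 : ‖u‖ = 1 := by rw [hu, norm_smul, norm_inv, norm_norm, inv_mul_cancel₀ hx0]
  obtain ⟨a, haA, hua⟩ := Set.mem_iUnion₂.1 (hA (mem_sphere_zero_iff_norm.2 hu1))
  have hcloser : dist x a ≤ dist x 0 := by
    calc dist x a ≤ dist x u + dist u a := dist_triangle ..
      _ = ‖(‖x‖ - 1) • u‖ + dist u a := by rw [dist_eq_norm, sub_smul, one_smul, hxu]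
      _ ≤ (‖x‖ - 1) + 1 := by
        rw [norm_smul, hu1, mul_one, Real.norm_of_nonneg (by linarith)]
        gcongr
        exact hua
      _ = dist x 0 := by rw [dist_zero_right]; ring
  exact (hx a haA).not_ge hcloser

theorem exists_finset_card_le_coverNum (E : Type*) [NormedAddCommGroup E] [ProperSpace E] :
    ∃ A : Finset E, A.card ≤ coverNum E ∧ (A : Set E) ⊆ sphere 0 1 ∧
      sphere (0 : E) 1 ⊆ ⋃ a ∈ A, closedBall a 1 := by
  classical
  have hfinite : {k | ∃ a : Fin k → E, (∀ i, a i ∈ sphere (0 : E) 1) ∧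
      sphere (0 : E) 1 ⊆ ⋃ i, closedBall (a i) 1}.Nonempty := by
    obtain ⟨t, hts, htfin, hcover⟩ := (isCompact_sphere (0 : E) 1).finite_cover_balls one_pos
    obtain ⟨n, a, -, rfl⟩ := htfin.fin_param
    refine ⟨n, a, Set.range_subset_iff.1 hts, hcover.trans ?_⟩
    rw [Set.biUnion_range]
    exact Set.iUnion_mono fun i ↦ ball_subset_closedBall
  obtain ⟨a, ha, hcover⟩ := Nat.sInf_mem hfinite
  refine ⟨Finset.univ.image a, Finset.card_image_le.trans (Finset.card_fin _).le, ?_, ?_⟩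
  · simpa [Set.range_subset_iff] using ha
  · simpa using hcover

/-- If `y` runs over a ball inside the convex hull of `A`, the linear constraints
`2 ⟪x - c, a - c⟫ < ‖a - c‖ ^ 2` defining the cell bound `⟪x - c, y - c⟫`, hence `‖x - c‖`. -/
theorem isBounded_voronoiCell_of_mem_interior_convexHull {E : Type*} [NormedAddCommGroup E]
    [InnerProductSpace ℝ E] {A : Set E} (hA : IsBounded A) {c : E}
    (hc : c ∈ interior (convexHull ℝ A)) : IsBounded (voronoiCell c A) := by
  obtain ⟨r, hr, hball⟩ := nhds_basis_closedBall.mem_iff.1 (mem_interior_iff_mem_nhds.1 hc)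
  obtain ⟨R, hR⟩ := hA.subset_closedBall c
  refine isBounded_closedBall (x := c) (r := R ^ 2 / (2 * r)) |>.subset fun x hx ↦ ?_
  have hA_half : A ⊆ {y | inner ℝ (x - c) y ≤ R ^ 2 / 2 + inner ℝ (x - c) c} := by
    intro a ha
    have hcloser : ‖x - c‖ < ‖(x - c) - (a - c)‖ := by
      simpa only [dist_eq_norm, sub_sub_sub_cancel_right] using hx a ha
    have haR : ‖a - c‖ ≤ R := mem_closedBall_iff_norm.1 (hR ha)
    have hsq := norm_sub_sq_real (x - c) (a - c)
    rw [Set.mem_ofPred_eq, ← sub_le_iff_le_add, ← inner_sub_right]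
    nlinarith [norm_nonneg (x - c), norm_nonneg (a - c)]
  have hhull := convexHull_min hA_half (convex_halfSpace_le (innerₗ E (x - c)).isLinear _)
  rcases eq_or_ne x c with rfl | hxc
  · exact mem_closedBall_self (by positivity)
  have hpos : 0 < ‖x - c‖ := norm_sub_pos_iff.2 hxc
  have hy : c + (r / ‖x - c‖) • (x - c) ∈ closedBall c r := by
    simp [norm_smul, hpos.ne', abs_of_pos hr]
  have hin := hhull (hball hy)
  rw [Set.mem_ofPred_eq, inner_add_right, inner_smul_right, real_inner_self_eq_norm_sq] at hin
  have hbound : r / ‖x - c‖ * ‖x - c‖ ^ 2 = r * ‖x - c‖ := by field_simp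
  rw [mem_closedBall_iff_norm, le_div_iff₀ (by positivity)]
  linarith

theorem exists_isBounded_voronoiCell_card_le_finrank_add_one (E : Type*) [NormedAddCommGroup E]
    [InnerProductSpace ℝ E] [FiniteDimensional ℝ E] :
    ∃ (c : E) (A : Finset E), c ∉ A ∧ IsBounded (voronoiCell c (A : Set E)) ∧
      A.card ≤ Module.finrank ℝ E + 1 := by
  classical
  rcases subsingleton_or_nontrivial E with hE | hE
  · exact ⟨0, ∅, Finset.notMem_empty _, (Set.toFinite _).isBounded, by simp⟩
  obtain ⟨v⟩ := AffineBasis.exists_affineBasis_of_finiteDimensional (k := ℝ) (P := E)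
    (Fintype.card_fin (Module.finrank ℝ E + 1))
  have hdim : 0 < Module.finrank ℝ E := Module.finrank_pos
  refine ⟨Finset.univ.centroid ℝ v, Finset.univ.image v, ?_, ?_,
    Finset.card_image_le.trans (Finset.card_fin _).le⟩
  · intro hmem
    obtain ⟨i, -, hi⟩ := Finset.mem_image.1 hmem
    have hcoord := congrArg (v.coord i) hi
    rw [v.coord_apply_centroid (Finset.mem_univ i), v.coord_apply_eq, Finset.card_fin] at hcoord
    have hone : Module.finrank ℝ E + 1 = 1 := by simpa using hcoord
    omega
  · refine isBounded_voronoiCell_of_mem_interior_convexHull (Finset.finite_toSet _).isBounded ?_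
    simpa only [Finset.coe_image, Finset.coe_univ, Set.image_univ]
      using v.centroid_mem_interior_convexHull

theorem exists_isBounded_voronoiCell_card_lt {E : Type*} [NormedAddCommGroup E] [NormedSpace ℝ E]
    [FiniteDimensional ℝ E] {N : ℕ} (hN : coverNum E + 1 ≤ N ∨
      (Nonempty (InnerProductSpace ℝ E) ∧ Module.finrank ℝ E + 2 ≤ N)) :
    ∃ (c : E) (A : Finset E), c ∉ A ∧ IsBounded (voronoiCell c (A : Set E)) ∧ A.card < N := by
  rcases hN with hN | ⟨⟨I⟩, hN⟩
  · have := FiniteDimensional.proper ℝ E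
    obtain ⟨A, hcard, hA, hcover⟩ := exists_finset_card_le_coverNum E
    refine ⟨0, A, fun h0 ↦ ?_, isBounded_voronoiCell_of_sphere_subset hcover, by omega⟩
    simpa using hA h0
  · -- The scalar multiplication of `I` need not be that of `E`, so `I` itself cannot be reused.
    let _ : InnerProductSpace ℝ E := InnerProductSpace.ofNorm ℝ fun x y ↦ by
      simpa only [sq] using @parallelogram_law_with_norm ℝ E _ _ I x y
    obtain ⟨c, A, hc, hA, hcard⟩ := exists_isBounded_voronoiCell_card_le_finrank_add_one E
    exact ⟨c, A, hc, hA, by omega⟩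

end Voronoi

section Bump

/-- The decrease of the `p`-th power of the distance to `A` when the site `b` is added to `A`: a
bump around `b`, carried by the Voronoi cell of `b`. Its integral is a difference of two `p`-th
powers of quantization errors. -/
noncomputable def voronoiBump {X : Type*} [PseudoMetricSpace X] (p : ℝ) (b : X) (A : Set X)
    (x : X) : ℝ :=
  infDist x A ^ p - infDist x (insert b A) ^ p

theorem continuous_infDist_rpow {X : Type*} [PseudoMetricSpace X] {p : ℝ} (hp : 0 ≤ p)
    (S : Set X) : Continuous fun x ↦ infDist x S ^ p :=
  (continuous_infDist_pt S).rpow_const fun _ ↦ Or.inr hp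

section PseudoMetric

variable {X : Type*} [PseudoMetricSpace X] {p : ℝ} {b : X} {A : Set X}

theorem continuous_voronoiBump (hp : 0 ≤ p) : Continuous (voronoiBump p b A) :=
  (continuous_infDist_rpow hp A).sub (continuous_infDist_rpow hp (insert b A))

theorem voronoiBump_nonneg (hp : 0 ≤ p) (hA : A.Nonempty) (x : X) : 0 ≤ voronoiBump p b A x :=
  sub_nonneg.2 <| Real.rpow_le_rpow infDist_nonneg
    (infDist_le_infDist_of_subset (Set.subset_insert b A) hA) hp

theorem infDist_insert_of_notMem_voronoiCell {x : X} (hx : x ∉ voronoiCell b A) :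
    infDist x (insert b A) = infDist x A := by
  obtain ⟨a, ha, hab⟩ : ∃ a ∈ A, dist x a ≤ dist x b := by
    simpa only [voronoiCell, Set.mem_ofPred_eq, not_forall, not_lt, exists_prop] using hx
  refine (infDist_le_infDist_of_subset (Set.subset_insert b A) ⟨a, ha⟩).antisymm ?_
  rw [le_infDist (Set.insert_nonempty b A), Set.forall_mem_insert]
  exact ⟨(infDist_le_dist_of_mem ha).trans hab, fun _ ↦ infDist_le_dist_of_mem⟩

theorem support_voronoiBump_subset : Function.support (voronoiBump p b A) ⊆ voronoiCell b A := by
  refine Function.support_subset_iff'.2 fun x hx ↦ ?_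
  rw [voronoiBump, infDist_insert_of_notMem_voronoiCell hx, sub_self]

theorem voronoiBump_self_pos (hp : 0 < p) (hA : IsClosed A) (hne : A.Nonempty) (hb : b ∉ A) :
    0 < voronoiBump p b A b := by
  rw [voronoiBump, infDist_zero_of_mem (Set.mem_insert b A), Real.zero_rpow hp.ne', sub_zero]
  exact Real.rpow_pos_of_pos ((hA.notMem_iff_infDist_pos hne).1 hb) p

theorem hasCompactSupport_voronoiBump [ProperSpace X] (hA : IsBounded (voronoiCell b A)) :
    HasCompactSupport (voronoiBump p b A) :=
  (hA.subset support_voronoiBump_subset).isCompact_closure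

end PseudoMetric

section NormedSpace

variable {E : Type*} [SeminormedAddCommGroup E] [NormedSpace ℝ E]

theorem infDist_inv_smul_sub (S : Set E) (c x : E) {r : ℝ} (hr : 0 < r) :
    infDist (r⁻¹ • (x - c)) S = r⁻¹ * infDist x ((fun a ↦ c + r • a) '' S) := by
  have himage : (fun a ↦ c + r • a) '' S = IsometryEquiv.addLeft c '' (r • S) := by
    rw [← Set.image_smul, Set.image_image]
    rfl
  have hx : x = IsometryEquiv.addLeft c (r • r⁻¹ • (x - c)) := by
    rw [smul_inv_smul₀ hr.ne']
    exact (add_sub_cancel c x).symm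
  conv_rhs => rw [himage, hx, infDist_image (IsometryEquiv.isometry _), infDist_smul₀ hr.ne',
    Real.norm_of_nonneg hr.le, inv_mul_cancel_left₀ hr.ne']

theorem voronoiBump_inv_smul_sub (p : ℝ) (b : E) (A : Set E) (c x : E) {r : ℝ} (hr : 0 < r) :
    voronoiBump p b A (r⁻¹ • (x - c)) =
      r⁻¹ ^ p * voronoiBump p (c + r • b) ((fun a ↦ c + r • a) '' A) x := by
  have hr' : 0 ≤ r⁻¹ := by positivity
  rw [voronoiBump, voronoiBump, infDist_inv_smul_sub _ _ _ hr, infDist_inv_smul_sub _ _ _ hr,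
    Real.mul_rpow hr' infDist_nonneg, Real.mul_rpow hr' infDist_nonneg, Set.image_insert_eq,
    mul_sub]

end NormedSpace

end Bump

section Asymptotics

variable {E : Type*} [SeminormedAddCommGroup E] {S : Set E}

theorem isEquivalent_infDist_norm (hS : IsBounded S) (hne : S.Nonempty) :
    (fun x ↦ infDist x S) ~[cobounded E] norm := by
  obtain ⟨s, hs⟩ := hne
  have hbounded : ((fun x ↦ infDist x S) - norm) =O[cobounded E] fun _ ↦ (1 : ℝ) := by
    refine IsBigO.of_bound (‖s‖ + diam S) (.of_forall fun x ↦ ?_)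
    have hlower := dist_le_infDist_add_diam (x := x) hS hs
    have hupper := infDist_le_dist_of_mem (x := x) hs
    have hle := norm_sub_le x s
    have hge := norm_sub_norm_le x s
    rw [norm_one, mul_one, Real.norm_eq_abs, Pi.sub_apply, abs_sub_le_iff]
    rw [dist_eq_norm] at hlower hupper
    constructor <;> linarith [diam_nonneg (s := S)]
  refine hbounded.trans_isLittleO (isLittleO_const_left.2 (Or.inr ?_))
  exact tendsto_norm_cobounded_atTop.congr fun x ↦ (norm_norm x).symm

theorem isLittleO_infDist_rpow_sub_norm_rpow (p : ℝ) (hS : IsBounded S) (hne : S.Nonempty) :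
    (fun x ↦ infDist x S ^ p - ‖x‖ ^ p) =o[cobounded E] fun x ↦ ‖x‖ ^ p :=
  (isEquivalent_infDist_norm hS hne).rpow fun x ↦ norm_nonneg x

end Asymptotics

section WeakConvergence

theorem abs_integral_sub_integral_le {X : Type*} [MeasurableSpace X] {μ : Measure X}
    {φ g V : X → ℝ} (hφ : Integrable φ μ) (hg : Integrable g μ) (hV : Integrable V μ) {η : ℝ}
    (h : ∀ x, |φ x - g x| ≤ η * V x) :
    |∫ x, φ x ∂μ - ∫ x, g x ∂μ| ≤ η * ∫ x, V x ∂μ := by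
  rw [← integral_sub hφ hg, ← integral_const_mul]
  exact norm_integral_le_of_norm_le (f := fun x ↦ φ x - g x) (hV.const_mul η) (ae_of_all μ h)

theorem subsingleton_probabilityMeasure {X : Type*} [MeasurableSpace X] [Subsingleton X] :
    Subsingleton (ProbabilityMeasure X) := by
  refine ⟨fun ν ρ ↦ ProbabilityMeasure.toMeasure_injective (Measure.ext fun s _ ↦ ?_)⟩
  rcases s.eq_empty_or_nonempty with rfl | hs
  · rw [measure_empty, measure_empty]
  · rw [Subsingleton.eq_univ_of_nonempty hs, measure_univ, measure_univ]

variable {X : Type*} [TopologicalSpace X] {φ V : X → ℝ}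

theorem exists_boundedContinuousFunction_abs_sub_le_mul (hφ : Continuous φ) (hV : ∀ x, 0 ≤ V x)
    (h : φ =o[cocompact X] V) {η : ℝ} (hη : 0 < η) :
    ∃ g : X →ᵇ ℝ, ∀ x, |φ x - g x| ≤ η * V x := by
  obtain ⟨K, hK, hKη⟩ := mem_cocompact.1 (h.bound hη)
  obtain ⟨C, hC⟩ := hK.exists_bound_of_continuousOn hφ.continuousOn
  have hC0 : 0 ≤ |C| := abs_nonneg C
  refine ⟨.ofNormedAddCommGroup (fun x ↦ max (-|C|) (min (φ x) |C|)) (by fun_prop) |C|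
    fun x ↦ abs_le.2 ⟨le_max_left _ _, max_le (by linarith) (min_le_right _ _)⟩, fun x ↦ ?_⟩
  change |φ x - max (-|C|) (min (φ x) |C|)| ≤ η * V x
  by_cases hx : x ∈ K
  · have hφx := abs_le.1 ((hC x hx).trans (le_abs_self C))
    rw [min_eq_left hφx.2, max_eq_right hφx.1, sub_self, abs_zero]
    exact mul_nonneg hη.le (hV x)
  · have hφx : |φ x| ≤ η * V x := by
      have hx' : ‖φ x‖ ≤ η * ‖V x‖ := hKη hx
      rwa [Real.norm_eq_abs, Real.norm_of_nonneg (hV x)] at hx'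
    refine le_trans ?_ hφx
    rcases abs_cases (φ x) with hsign | hsign <;>
      rcases max_cases (-|C|) (min (φ x) |C|) with hmax | hmax <;>
      rcases min_cases (φ x) |C| with hmin | hmin <;>
      exact abs_le.2 ⟨by linarith, by linarith⟩

variable [MeasurableSpace X]

theorem isTightMeasureSet_of_integral_le {S : Set (Measure X)} (hV : ∀ x, 0 ≤ V x)
    (hcoercive : Tendsto V (cocompact X) atTop) {M : ℝ} (hint : ∀ μ ∈ S, Integrable V μ)
    (hM : ∀ μ ∈ S, ∫ x, V x ∂μ ≤ M) : IsTightMeasureSet S := by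
  refine isTightMeasureSet_iff_exists_isCompact_measure_compl_le.2 fun ε hε ↦ ?_
  have hlim : Tendsto (fun r : ℝ ↦ ENNReal.ofReal (M / r)) atTop (𝓝 0) := by
    rw [← ENNReal.ofReal_zero]
    exact ENNReal.tendsto_ofReal (tendsto_const_nhds.div_atTop tendsto_id)
  obtain ⟨r, hrε, hr⟩ := ((hlim.eventually_le_const hε).and (eventually_gt_atTop 0)).exists
  obtain ⟨K, hK, hKr⟩ := mem_cocompact.1 (hcoercive (eventually_ge_atTop r))
  refine ⟨K, hK, fun μ hμ ↦ ?_⟩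
  have hr0 : ENNReal.ofReal r ≠ 0 := (ENNReal.ofReal_pos.2 hr).ne'
  calc μ Kᶜ ≤ μ {x | ENNReal.ofReal r ≤ ENNReal.ofReal (V x)} :=
        measure_mono fun x hx ↦ ENNReal.ofReal_le_ofReal (hKr hx)
    _ ≤ (∫⁻ x, ENNReal.ofReal (V x) ∂μ) / ENNReal.ofReal r :=
        meas_ge_le_lintegral_div (hint μ hμ).aemeasurable.ennreal_ofReal hr0 ENNReal.ofReal_ne_top
    _ = ENNReal.ofReal ((∫ x, V x ∂μ) / r) := by
        rw [← ofReal_integral_eq_lintegral_ofReal (hint μ hμ) (ae_of_all μ hV),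
          ENNReal.ofReal_div_of_pos hr]
    _ ≤ ENNReal.ofReal (M / r) := by gcongr; exact hM μ hμ
    _ ≤ ε := hrε

variable [OpensMeasurableSpace X]

theorem integrable_of_isLittleO_cocompact {μ : Measure X} [IsFiniteMeasure μ]
    (hφ : Continuous φ) (hV : ∀ x, 0 ≤ V x) (h : φ =o[cocompact X] V)
    (hint : Integrable V μ) : Integrable φ μ := by
  obtain ⟨g, hg⟩ := exists_boundedContinuousFunction_abs_sub_le_mul hφ hV h one_pos
  have hdiff : Integrable (φ - ⇑g) μ :=
    (hint.const_mul 1).mono' (hφ.sub g.continuous).aestronglyMeasurable (ae_of_all μ hg)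
  simpa only [sub_add_cancel] using hdiff.add (g.integrable μ)

theorem tendsto_integral_of_isLittleO_cocompact {ι : Type*} {l : Filter ι}
    {μ : ι → ProbabilityMeasure X} {ν : ProbabilityMeasure X} (hμν : Tendsto μ l (𝓝 ν))
    (hφ : Continuous φ) (hV : ∀ x, 0 ≤ V x) (h : φ =o[cocompact X] V) {M : ℝ}
    (hμ : ∀ i, Integrable V (μ i)) (hμM : ∀ i, ∫ x, V x ∂(μ i : Measure X) ≤ M)
    (hν : Integrable V ν) (hνM : ∫ x, V x ∂(ν : Measure X) ≤ M) :
    Tendsto (fun i ↦ ∫ x, φ x ∂(μ i : Measure X)) l (𝓝 (∫ x, φ x ∂(ν : Measure X))) := by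
  have hM : 0 ≤ M := (integral_nonneg hV).trans hνM
  rw [Metric.tendsto_nhds]
  intro ε hε
  set η : ℝ := ε / (3 * (M + 1)) with hη
  have hη0 : 0 < η := by positivity
  have hηM : η * M < ε / 3 := by
    calc η * M < η * (M + 1) := by gcongr; exact lt_add_one M
      _ = ε / 3 := by rw [hη]; field_simp
  obtain ⟨g, hg⟩ := exists_boundedContinuousFunction_abs_sub_le_mul hφ hV h hη0
  have happrox (ρ : ProbabilityMeasure X) (hρ : Integrable V ρ)
      (hρM : ∫ x, V x ∂(ρ : Measure X) ≤ M) :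
      |∫ x, φ x ∂(ρ : Measure X) - ∫ x, g x ∂(ρ : Measure X)| < ε / 3 := by
    refine lt_of_le_of_lt ?_ hηM
    refine (abs_integral_sub_integral_le (integrable_of_isLittleO_cocompact hφ hV h hρ)
      (g.integrable _) hρ hg).trans ?_
    gcongr
  have hgν := ProbabilityMeasure.tendsto_iff_forall_integral_tendsto.1 hμν g
  filter_upwards [Metric.tendsto_nhds.1 hgν (ε / 3) (by positivity)] with i hi
  have hμi := abs_lt.1 (happrox (μ i) (hμ i) (hμM i))
  have hνν := abs_lt.1 (happrox ν hν hνM)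
  rw [Real.dist_eq, abs_lt] at hi ⊢
  constructor <;> linarith

theorem integrable_and_integral_le_of_tendsto [HasOuterApproxClosed X]
    {μ : ℕ → ProbabilityMeasure X} {ν : ProbabilityMeasure X} (hμν : Tendsto μ atTop (𝓝 ν))
    (hVc : Continuous V) (hV : ∀ x, 0 ≤ V x) {M : ℝ} (hμ : ∀ n, Integrable V (μ n))
    (hμM : ∀ n, ∫ x, V x ∂(μ n : Measure X) ≤ M) :
    Integrable V ν ∧ ∫ x, V x ∂(ν : Measure X) ≤ M := by
  have hfatou : ∫⁻ x, ENNReal.ofReal (V x) ∂(ν : Measure X) ≤ ENNReal.ofReal M := by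
    refine (lintegral_le_liminf_lintegral_of_forall_isOpen_measure_le_liminf_measure hVc hV
      fun G ↦ ProbabilityMeasure.le_liminf_measure_open_of_tendsto hμν).trans ?_
    refine liminf_le_of_frequently_le' (.of_forall fun n ↦ ?_)
    rw [← ofReal_integral_eq_lintegral_ofReal (hμ n) (ae_of_all _ hV)]
    exact ENNReal.ofReal_le_ofReal (hμM n)
  have hint : Integrable V ν := by
    refine ⟨hVc.aestronglyMeasurable, ?_⟩
    rw [hasFiniteIntegral_iff_ofReal (ae_of_all _ hV)]
    exact hfatou.trans_lt ENNReal.ofReal_lt_top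
  refine ⟨hint, ?_⟩
  rw [← ofReal_integral_eq_lintegral_ofReal hint (ae_of_all _ hV)] at hfatou
  exact (ENNReal.ofReal_le_ofReal_iff ((integral_nonneg hV).trans (hμM 0))).1 hfatou

theorem integral_eq_of_mapClusterPt {ι : Type*} {l : Filter ι} {μ : ι → ProbabilityMeasure X}
    {ν : ProbabilityMeasure X} (hν : MapClusterPt ν l μ) {g : X →ᵇ ℝ} {L : ℝ}
    (hg : Tendsto (fun i ↦ ∫ x, g x ∂(μ i : Measure X)) l (𝓝 L)) :
    ∫ x, g x ∂(ν : Measure X) = L := by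
  have hcont := ProbabilityMeasure.tendsto_iff_forall_integral_tendsto.1 (tendsto_id (x := 𝓝 ν)) g
  exact eq_of_nhds_neBot ((hν.tendsto_comp hcont).clusterPt.mono hg)

theorem exists_tendsto_of_isTightMeasureSet [T2Space X] [BorelSpace X] {ι κ : Type*}
    {l : Filter ι} [l.NeBot] {μ : ι → ProbabilityMeasure X}
    (hμ : IsTightMeasureSet (Set.range fun i ↦ (μ i : Measure X))) (g : κ → X →ᵇ ℝ)
    (hsep : ∀ ν ρ : ProbabilityMeasure X,
      (∀ k, ∫ x, g k x ∂(ν : Measure X) = ∫ x, g k x ∂(ρ : Measure X)) → ν = ρ)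
    (hg : ∀ k, ∃ L, Tendsto (fun i ↦ ∫ x, g k x ∂(μ i : Measure X)) l (𝓝 L)) :
    ∃ ν, Tendsto μ l (𝓝 ν) := by
  have hcompact : IsCompact (closure (Set.range μ)) := by
    refine isCompact_closure_of_isTightMeasureSet (hμ.subset ?_)
    rintro _ ⟨_, ⟨i, rfl⟩, rfl⟩
    exact ⟨i, rfl⟩
  have hmem : ∀ᶠ i in l, μ i ∈ closure (Set.range μ) :=
    .of_forall fun i ↦ subset_closure ⟨i, rfl⟩
  obtain ⟨ν, -, hν⟩ := hcompact.exists_mapClusterPt (tendsto_principal.2 hmem)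
  refine ⟨ν, hcompact.tendsto_nhds_of_unique_mapClusterPt hmem fun ρ _ hρ ↦ hsep ρ ν fun k ↦ ?_⟩
  obtain ⟨L, hL⟩ := hg k
  rw [integral_eq_of_mapClusterPt hρ hL, integral_eq_of_mapClusterPt hν hL]

end WeakConvergence

section Deconvolution

variable {E : Type*} [NormedAddCommGroup E] [NormedSpace ℝ E] [FiniteDimensional ℝ E]
  [MeasurableSpace E] [BorelSpace E]

theorem lintegral_comp_sub_smul (lam : Measure E) [lam.IsAddHaarMeasure] {F : E → ℝ≥0∞}
    (hF : Measurable F) {r : ℝ} (hr : r ≠ 0) (ξ : E) :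
    ∫⁻ v, F (ξ - r • v) ∂lam =
      ENNReal.ofReal |(r ^ Module.finrank ℝ E)⁻¹| * ∫⁻ b, F b ∂lam := by
  calc ∫⁻ v, F (ξ - r • v) ∂lam = ∫⁻ w, F (ξ - w) ∂(lam.map (r • ·)) :=
        (lintegral_map (f := fun w ↦ F (ξ - w)) (by fun_prop) (by fun_prop)).symm
    _ = ENNReal.ofReal |(r ^ Module.finrank ℝ E)⁻¹| * ∫⁻ w, F (ξ - w) ∂lam := by
        rw [Measure.map_addHaar_smul lam hr, lintegral_smul_measure, smul_eq_mul]
    _ = ENNReal.ofReal |(r ^ Module.finrank ℝ E)⁻¹| * ∫⁻ b, F b ∂lam := by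
        rw [lintegral_sub_left_eq_self F ξ]

theorem lintegral_prod_comp_sub_smul_mul (lam : Measure E) [lam.IsAddHaarMeasure] {h ψ : E → ℝ≥0∞}
    (hh : Measurable h) (hψ : Measurable ψ) (μ : Measure E) [SFinite μ] {r : ℝ} (hr : r ≠ 0) :
    ∫⁻ z, h (z.1 - r • z.2) * ψ z.2 ∂(μ.prod lam) =
      ENNReal.ofReal |(r ^ Module.finrank ℝ E)⁻¹| *
        ∫⁻ b, h b * ∫⁻ ξ, ψ (r⁻¹ • (ξ - b)) ∂μ ∂lam := by
  have hsubst (ξ : E) : ∫⁻ v, h (ξ - r • v) * ψ v ∂lam =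
      ENNReal.ofReal |(r ^ Module.finrank ℝ E)⁻¹| *
        ∫⁻ b, h b * ψ (r⁻¹ • (ξ - b)) ∂lam := by
    rw [← lintegral_comp_sub_smul lam (by fun_prop) hr ξ]
    simp only [sub_sub_cancel, inv_smul_smul₀ hr]
  rw [lintegral_prod _ (by fun_prop)]
  simp only [hsubst]
  rw [lintegral_const_mul' _ _ ENNReal.ofReal_ne_top, lintegral_lintegral_swap (by fun_prop)]
  congr 1
  exact lintegral_congr fun b ↦ lintegral_const_mul _ (by fun_prop)

theorem tendsto_lintegral_prod_comp_sub_smul_mul (lam : Measure E) [SFinite lam]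
    (h : E →ᵇ ℝ≥0) {ψ : E → ℝ≥0∞} (hψ : Measurable ψ) (hψ_top : ∫⁻ v, ψ v ∂lam ≠ ∞)
    (μ : Measure E) [IsFiniteMeasure μ] :
    Tendsto (fun r : ℝ ↦ ∫⁻ z, h (z.1 - r • z.2) * ψ z.2 ∂(μ.prod lam)) (𝓝 0)
      (𝓝 ((∫⁻ ξ, h ξ ∂μ) * ∫⁻ v, ψ v ∂lam)) := by
  have hh : Measurable fun ξ ↦ (h ξ : ℝ≥0∞) := h.continuous.measurable.coe_nnreal_ennreal
  have hψ_ae : ∀ᵐ z ∂(μ.prod lam), ψ z.2 < ∞ :=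
    Measure.quasiMeasurePreserving_snd.ae (ae_lt_top hψ hψ_top)
  rw [← lintegral_prod_mul hh.aemeasurable hψ.aemeasurable]
  refine tendsto_lintegral_filter_of_dominated_convergence (fun z ↦ nndist h 0 * ψ z.2)
    (.of_forall fun r ↦ ?_) (.of_forall fun r ↦ ae_of_all _ fun z ↦ ?_) ?_ ?_
  · exact (hh.comp (by fun_prop : Measurable fun z : E × E ↦ z.1 - r • z.2)).mul (by fun_prop)
  · gcongr
    exact BoundedContinuousFunction.NNReal.upper_bound h _
  · rw [lintegral_prod_mul (f := fun _ ↦ (nndist h 0 : ℝ≥0∞)) (by fun_prop) hψ.aemeasurable,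
      lintegral_const]
    exact ENNReal.mul_ne_top (ENNReal.mul_ne_top ENNReal.coe_ne_top (measure_ne_top μ _)) hψ_top
  · filter_upwards [hψ_ae] with z hz
    refine ENNReal.Tendsto.mul_const (ENNReal.tendsto_coe.2 ?_) (Or.inr hz.ne)
    have hcont : Continuous fun r : ℝ ↦ h (z.1 - r • z.2) := by fun_prop
    simpa only [zero_smul, sub_zero] using hcont.tendsto 0

/-- Averaging the rescaled integrals of `ψ` against `h` convolves `h` with an approximate
identity. -/
theorem eq_of_forall_lintegral_comp_inv_smul_sub_eq (lam : Measure E) [lam.IsAddHaarMeasure]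
    {ψ : E → ℝ≥0∞} (hψ : Measurable ψ) (hψ_zero : ∫⁻ v, ψ v ∂lam ≠ 0)
    (hψ_top : ∫⁻ v, ψ v ∂lam ≠ ∞) {μ ν : Measure E} [IsFiniteMeasure μ] [IsFiniteMeasure ν]
    (heq : ∀ (b : E) (r : ℝ), 0 < r →
      ∫⁻ ξ, ψ (r⁻¹ • (ξ - b)) ∂μ = ∫⁻ ξ, ψ (r⁻¹ • (ξ - b)) ∂ν) : μ = ν := by
  refine ext_of_forall_lintegral_eq_of_IsFiniteMeasure fun h ↦ ?_
  have hh : Measurable fun ξ ↦ (h ξ : ℝ≥0∞) := h.continuous.measurable.coe_nnreal_ennreal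
  have hlim (ρ : Measure E) [IsFiniteMeasure ρ] :=
    (tendsto_lintegral_prod_comp_sub_smul_mul lam h hψ hψ_top ρ).mono_left
      (nhdsWithin_le_nhds (s := Set.Ioi 0))
  have hagree : (fun r : ℝ ↦ ∫⁻ z, h (z.1 - r • z.2) * ψ z.2 ∂(μ.prod lam)) =ᶠ[𝓝[>] 0]
      fun r : ℝ ↦ ∫⁻ z, h (z.1 - r • z.2) * ψ z.2 ∂(ν.prod lam) := by
    filter_upwards [self_mem_nhdsWithin] with r hr
    rw [lintegral_prod_comp_sub_smul_mul lam hh hψ μ (ne_of_gt hr),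
      lintegral_prod_comp_sub_smul_mul lam hh hψ ν (ne_of_gt hr)]
    simp only [heq _ r hr]
  exact (ENNReal.mul_left_inj hψ_zero hψ_top).1
    (tendsto_nhds_unique ((hlim μ).congr' hagree) (hlim ν))

variable {ψ : E → ℝ}

theorem eq_of_forall_integral_comp_inv_smul_sub_eq (hψ : Continuous ψ)
    (hsupp : HasCompactSupport ψ) (hψ_nonneg : ∀ x, 0 ≤ ψ x) {a : E} (ha : ψ a ≠ 0)
    {μ ν : Measure E} [IsFiniteMeasure μ] [IsFiniteMeasure ν]
    (heq : ∀ (b : E) (r : ℝ), 0 < r →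
      ∫ ξ, ψ (r⁻¹ • (ξ - b)) ∂μ = ∫ ξ, ψ (r⁻¹ • (ξ - b)) ∂ν) : μ = ν := by
  have hlam : ∫⁻ v, ENNReal.ofReal (ψ v) ∂Measure.addHaar =
      ENNReal.ofReal (∫ v, ψ v ∂Measure.addHaar) :=
    (ofReal_integral_eq_lintegral_ofReal (hψ.integrable_of_hasCompactSupport hsupp)
      (ae_of_all _ hψ_nonneg)).symm
  have hpos : 0 < ∫ v, ψ v ∂Measure.addHaar :=
    hψ.integral_pos_of_hasCompactSupport_nonneg_nonzero hsupp hψ_nonneg ha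
  obtain ⟨K, hK⟩ := hsupp.exists_bound_of_continuous hψ
  have hrescale (ρ : Measure E) [IsFiniteMeasure ρ] (b : E) (r : ℝ) :
      ∫⁻ ξ, ENNReal.ofReal (ψ (r⁻¹ • (ξ - b))) ∂ρ =
        ENNReal.ofReal (∫ ξ, ψ (r⁻¹ • (ξ - b)) ∂ρ) := by
    have hcont : Continuous fun ξ ↦ ψ (r⁻¹ • (ξ - b)) := by fun_prop
    have hint := Integrable.of_bound (μ := ρ) hcont.aestronglyMeasurable K
      (ae_of_all _ fun _ ↦ hK _)
    exact (ofReal_integral_eq_lintegral_ofReal hint (ae_of_all _ fun _ ↦ hψ_nonneg _)).symm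
  refine eq_of_forall_lintegral_comp_inv_smul_sub_eq Measure.addHaar
    hψ.measurable.ennreal_ofReal ?_ ?_ fun b r hr ↦ ?_
  · exact hlam ▸ (ENNReal.ofReal_pos.2 hpos).ne'
  · exact hlam ▸ ENNReal.ofReal_ne_top
  · rw [hrescale, hrescale, heq b r hr]

theorem exists_tendsto_of_tendsto_integral_comp_inv_smul_sub (hψ : Continuous ψ)
    (hsupp : HasCompactSupport ψ) (hψ_nonneg : ∀ x, 0 ≤ ψ x) {a : E} (ha : ψ a ≠ 0)
    {ι : Type*} {l : Filter ι} [l.NeBot] {μ : ι → ProbabilityMeasure E}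
    (hμ : IsTightMeasureSet (Set.range fun i ↦ (μ i : Measure E)))
    (hlim : ∀ (b : E) (r : ℝ), 0 < r →
      ∃ L, Tendsto (fun i ↦ ∫ ξ, ψ (r⁻¹ • (ξ - b)) ∂(μ i : Measure E)) l (𝓝 L)) :
    ∃ ν, Tendsto μ l (𝓝 ν) := by
  obtain ⟨K, hK⟩ := hsupp.exists_bound_of_continuous hψ
  let g (k : E × Set.Ioi (0 : ℝ)) : E →ᵇ ℝ :=
    .ofNormedAddCommGroup (fun ξ ↦ ψ ((k.2 : ℝ)⁻¹ • (ξ - k.1))) (by fun_prop) K fun _ ↦ hK _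
  refine exists_tendsto_of_isTightMeasureSet hμ g (fun ν ρ hνρ ↦ ?_) fun k ↦ hlim k.1 k.2 k.2.2
  exact ProbabilityMeasure.toMeasure_injective <|
    eq_of_forall_integral_comp_inv_smul_sub_eq hψ hsupp hψ_nonneg ha fun b r hr ↦
      hνρ (b, ⟨r, hr⟩)

end Deconvolution

section Quantization

theorem exists_fin_range_eq {α : Type*} {S : Finset α} (hS : S.Nonempty) {N : ℕ}
    (hN : S.card ≤ N) : ∃ x : Fin N → α, Set.range x = S := by
  have := hS.to_subtype
  obtain ⟨e⟩ := Function.Embedding.nonempty_of_card_le (α := S) (β := Fin N) (by simpa using hN)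
  refine ⟨(↑) ∘ Function.invFun e, ?_⟩
  rw [(Function.invFun_surjective e.injective).range_comp, Subtype.range_coe_subtype]
  rfl

theorem iInf_enorm_sub_rpow_eq_ofReal_infDist_rpow {E ι : Type*} [SeminormedAddCommGroup E]
    [Nonempty ι] {p : ℝ} (hp : 0 < p) (x : ι → E) (ξ : E) :
    ⨅ i, ‖ξ - x i‖ₑ ^ p = ENNReal.ofReal (infDist ξ (Set.range x) ^ p) := by
  calc ⨅ i, ‖ξ - x i‖ₑ ^ p = (⨅ i, ‖ξ - x i‖ₑ) ^ p :=
        ((ENNReal.orderIsoRpow p hp).map_iInf fun i ↦ ‖ξ - x i‖ₑ).symm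
    _ = infEDist ξ (Set.range x) ^ p := by
        simp only [infEDist, iInf_range, edist_eq_enorm_sub]
    _ = ENNReal.ofReal (infDist ξ (Set.range x) ^ p) := by
        rw [infDist, ENNReal.toReal_rpow, ENNReal.ofReal_toReal]
        exact ENNReal.rpow_ne_top_of_nonneg hp.le (infEDist_ne_top (Set.range_nonempty x))

variable {E : Type*} [NormedAddCommGroup E] [MeasurableSpace E] [BorelSpace E] {p : ℝ}

theorem quantErr_rpow (hp : 0 < p) {N : ℕ} [NeZero N] (μ : Measure E) (x : Fin N → E) :
    quantErr p N μ x ^ p = ∫ ξ, infDist ξ (Set.range x) ^ p ∂μ := by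
  rw [quantErr, one_div, Real.rpow_inv_rpow ENNReal.toReal_nonneg hp.ne',
    integral_eq_lintegral_of_nonneg_ae (ae_of_all _ fun _ ↦ Real.rpow_nonneg infDist_nonneg p)
      (continuous_infDist_rpow hp.le _).aestronglyMeasurable]
  exact congrArg _ (lintegral_congr (iInf_enorm_sub_rpow_eq_ofReal_infDist_rpow hp x))

theorem hasFiniteMoment_iff_integrable (hp : 0 ≤ p) {μ : Measure E} :
    HasFiniteMoment p μ ↔ Integrable (fun ξ ↦ ‖ξ‖ ^ p) μ := by
  have hcont : Continuous fun ξ : E ↦ ‖ξ‖ ^ p := continuous_norm.rpow_const fun _ ↦ Or.inr hp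
  rw [Integrable, and_iff_right hcont.aestronglyMeasurable, HasFiniteIntegral, lt_top_iff_ne_top,
    HasFiniteMoment]
  simp only [Real.enorm_rpow_of_nonneg (norm_nonneg _) hp, enorm_norm]
  rfl

variable [ProperSpace E]

theorem integrable_infDist_rpow (hp : 0 ≤ p) {μ : Measure E} [IsFiniteMeasure μ]
    (hμ : Integrable (fun ξ ↦ ‖ξ‖ ^ p) μ) {S : Set E} (hS : IsBounded S) (hne : S.Nonempty) :
    Integrable (fun ξ ↦ infDist ξ S ^ p) μ := by
  have hdiff : Integrable (fun ξ ↦ infDist ξ S ^ p - ‖ξ‖ ^ p) μ := by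
    refine integrable_of_isLittleO_cocompact ((continuous_infDist_rpow hp S).sub ?_)
      (fun ξ ↦ by positivity) ?_ hμ
    · exact continuous_norm.rpow_const fun _ ↦ Or.inr hp
    · exact cobounded_eq_cocompact (α := E) ▸ isLittleO_infDist_rpow_sub_norm_rpow p hS hne
  simpa only [Pi.add_def, sub_add_cancel] using hdiff.add hμ

theorem tendsto_integral_infDist_rpow_sub_integral_norm_rpow {μ : ℕ → ProbabilityMeasure E}
    {ν : ProbabilityMeasure E} (hμν : Tendsto μ atTop (𝓝 ν)) (hp : 0 ≤ p) {M : ℝ}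
    (hμ : ∀ n, Integrable (fun ξ ↦ ‖ξ‖ ^ p) (μ n : Measure E))
    (hμM : ∀ n, ∫ ξ, ‖ξ‖ ^ p ∂(μ n : Measure E) ≤ M) {S : Set E} (hS : IsBounded S)
    (hne : S.Nonempty) :
    Tendsto (fun n ↦ ∫ ξ, infDist ξ S ^ p ∂(μ n : Measure E) - ∫ ξ, ‖ξ‖ ^ p ∂(μ n : Measure E))
      atTop (𝓝 (∫ ξ, infDist ξ S ^ p ∂(ν : Measure E) - ∫ ξ, ‖ξ‖ ^ p ∂(ν : Measure E))) := by
  have hnorm : Continuous fun ξ : E ↦ ‖ξ‖ ^ p := continuous_norm.rpow_const fun _ ↦ Or.inr hp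
  have hnonneg (ξ : E) : 0 ≤ ‖ξ‖ ^ p := by positivity
  obtain ⟨hν, hνM⟩ := integrable_and_integral_le_of_tendsto hμν hnorm hnonneg hμ hμM
  have hlittle := isLittleO_infDist_rpow_sub_norm_rpow p hS hne
  rw [cobounded_eq_cocompact] at hlittle
  have hlim := tendsto_integral_of_isLittleO_cocompact hμν
    ((continuous_infDist_rpow hp S).sub hnorm) hnonneg hlittle hμ hμM hν hνM
  simpa only [Pi.sub_apply, integral_sub (integrable_infDist_rpow hp hν hS hne) hν,
    integral_sub (integrable_infDist_rpow hp (hμ _) hS hne) (hμ _)] using hlim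

theorem exists_tendsto_integral_voronoiBump (hp : 0 ≤ p) {ι : Type*} {l : Filter ι}
    {μ : ι → ProbabilityMeasure E} (hμ : ∀ i, Integrable (fun ξ ↦ ‖ξ‖ ^ p) (μ i : Measure E))
    {N : ℕ} (hlim : ∀ S : Finset E, S.Nonempty → S.card ≤ N →
      ∃ L, Tendsto (fun i ↦ ∫ ξ, infDist ξ S ^ p ∂(μ i : Measure E)) l (𝓝 L))
    (b : E) {A : Finset E} (hne : A.Nonempty) (hA : A.card < N) :
    ∃ L, Tendsto (fun i ↦ ∫ ξ, voronoiBump p b (A : Set E) ξ ∂(μ i : Measure E)) l (𝓝 L) := by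
  classical
  obtain ⟨L, hL⟩ := hlim A hne hA.le
  obtain ⟨L', hL'⟩ := hlim (insert b A) (Finset.insert_nonempty b A)
    ((Finset.card_insert_le b A).trans hA)
  refine ⟨L - L', (hL.sub hL').congr fun i ↦ ?_⟩
  have hint (S : Finset E) (hS : S.Nonempty) :
      Integrable (fun ξ ↦ infDist ξ (S : Set E) ^ p) (μ i : Measure E) :=
    integrable_infDist_rpow hp (hμ i) S.finite_toSet.isBounded hS
  rw [← integral_sub (hint A hne) (hint _ (Finset.insert_nonempty b A))]
  simp only [voronoiBump, Finset.coe_insert]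

end Quantization

section WeakLimit

variable {E : Type*} [NormedAddCommGroup E] [NormedSpace ℝ E] [FiniteDimensional ℝ E]
  [MeasurableSpace E] [BorelSpace E] {p : ℝ}

theorem exists_tendsto_of_tendsto_integral_infDist_rpow (hp : 0 < p) {c : E} {A : Finset E}
    (hc : c ∉ A) (hA : IsBounded (voronoiCell c (A : Set E))) {N : ℕ} (hN : A.card < N)
    {ι : Type*} {l : Filter ι} [l.NeBot] {μ : ι → ProbabilityMeasure E} {M : ℝ}
    (hμ : ∀ i, Integrable (fun ξ ↦ ‖ξ‖ ^ p) (μ i : Measure E))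
    (hμM : ∀ i, ∫ ξ, ‖ξ‖ ^ p ∂(μ i : Measure E) ≤ M)
    (hlim : ∀ S : Finset E, S.Nonempty → S.card ≤ N →
      ∃ L, Tendsto (fun i ↦ ∫ ξ, infDist ξ S ^ p ∂(μ i : Measure E)) l (𝓝 L)) :
    ∃ ν, Tendsto μ l (𝓝 ν) := by
  classical
  have := FiniteDimensional.proper ℝ E
  have htight : IsTightMeasureSet (Set.range fun i ↦ (μ i : Measure E)) := by
    refine isTightMeasureSet_of_integral_le (V := fun ξ ↦ ‖ξ‖ ^ p) (fun ξ ↦ by positivity)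
      ((tendsto_rpow_atTop hp).comp tendsto_norm_cocompact_atTop) ?_ ?_ (M := M)
    · rwa [Set.forall_mem_range]
    · rwa [Set.forall_mem_range]
  rcases subsingleton_or_nontrivial E with hE | hE
  · have := subsingleton_probabilityMeasure (X := E)
    exact exists_tendsto_of_isTightMeasureSet htight Empty.elim
      (fun ν ρ _ ↦ Subsingleton.elim ν ρ) fun k ↦ k.elim
  have hne : A.Nonempty := nonempty_of_isBounded_voronoiCell hA
  refine exists_tendsto_of_tendsto_integral_comp_inv_smul_sub (continuous_voronoiBump hp.le)
    (hasCompactSupport_voronoiBump hA) (voronoiBump_nonneg hp.le hne)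
    (voronoiBump_self_pos hp A.finite_toSet.isClosed hne hc).ne' htight fun b r hr ↦ ?_
  obtain ⟨L, hL⟩ := exists_tendsto_integral_voronoiBump hp.le hμ hlim (b + r • c)
    (hne.image fun a ↦ b + r • a) (Finset.card_image_le.trans_lt hN)
  refine ⟨r⁻¹ ^ p * L, (hL.const_mul _).congr fun i ↦ ?_⟩
  rw [← integral_const_mul]
  simp only [voronoiBump_inv_smul_sub _ _ _ _ _ hr, Finset.coe_image]

theorem stmt8_general (hp : 0 < p) {c : E} {A : Finset E} (hc : c ∉ A)
    (hA : IsBounded (voronoiCell c (A : Set E))) {N : ℕ} (hN : A.card < N)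
    (μ : ℕ → Measure E) [∀ n, IsProbabilityMeasure (μ n)]
    (hμ : ∀ n, HasFiniteMoment p (μ n))
    (f : (Fin N → E) → ℝ)
    (hf : ∀ x : Fin N → E, Tendsto (fun n ↦ quantErr p N (μ n) x) atTop (𝓝 (f x))) :
    ∃ μ' : Measure E, IsProbabilityMeasure μ' ∧ HasFiniteMoment p μ' ∧
      (∀ g : BoundedContinuousFunction E ℝ,
        Tendsto (fun n ↦ ∫ ξ, g ξ ∂(μ n)) atTop (𝓝 (∫ ξ, g ξ ∂μ'))) ∧
      ∃ L : ℝ, Tendsto (fun n ↦ ∫ ξ, ‖ξ‖ ^ p ∂(μ n)) atTop (𝓝 L) ∧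
        ∀ x : Fin N → E,
          f x ^ p = quantErr p N μ' x ^ p + L - ∫ ξ, ‖ξ‖ ^ p ∂μ' := by
  have : NeZero N := ⟨by omega⟩
  have := FiniteDimensional.proper ℝ E
  let P (n : ℕ) : ProbabilityMeasure E := ⟨μ n, inferInstance⟩
  have hint (n : ℕ) : Integrable (fun ξ ↦ ‖ξ‖ ^ p) (P n : Measure E) :=
    (hasFiniteMoment_iff_integrable hp.le).1 (hμ n)
  have hquant (x : Fin N → E) :
      Tendsto (fun n ↦ ∫ ξ, infDist ξ (Set.range x) ^ p ∂(P n : Measure E)) atTop (𝓝 (f x ^ p)) :=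
    ((hf x).rpow_const (Or.inr hp.le)).congr fun n ↦ quantErr_rpow hp _ _
  have hmoment : Tendsto (fun n ↦ ∫ ξ, ‖ξ‖ ^ p ∂(P n : Measure E)) atTop (𝓝 (f 0 ^ p)) := by
    simpa using hquant 0
  obtain ⟨M, hM⟩ := hmoment.bddAbove_range
  rw [mem_upperBounds, Set.forall_mem_range] at hM
  obtain ⟨ν, hν⟩ := exists_tendsto_of_tendsto_integral_infDist_rpow hp hc hA hN hint hM
    fun S hS hSN ↦ by
      obtain ⟨x, hx⟩ := exists_fin_range_eq hS hSN
      exact ⟨_, hx ▸ hquant x⟩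
  have hνint := (integrable_and_integral_le_of_tendsto hν
    (continuous_norm.rpow_const fun _ ↦ Or.inr hp.le) (fun ξ ↦ by positivity) hint hM).1
  refine ⟨ν, inferInstance, (hasFiniteMoment_iff_integrable hp.le).2 hνint,
    ProbabilityMeasure.tendsto_iff_forall_integral_tendsto.1 hν, _, hmoment, fun x ↦ ?_⟩
  have hdiff := tendsto_nhds_unique ((hquant x).sub hmoment)
    (tendsto_integral_infDist_rpow_sub_integral_norm_rpow hν hp.le hint hM
      (Set.finite_range x).isBounded (Set.range_nonempty x))
  rw [quantErr_rpow hp]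
  linarith

end WeakLimit

/-- à la Paul Lévy characterization on `ℝ^d`: if `e_{N,p}(μ_n, ·)` converges
pointwise to `f` for some `N ≥ c(d, ‖·‖) + 1` (or `N ≥ d + 2` for a Euclidean norm), then
`μ_n` converges weakly to some probability measure `μ_∞` with finite `p`-th moment, the
`p`-th moments of `μ_n` converge to some finite `L`, and
`f^p = e_{N,p}(μ_∞, ·)^p + L − ∫ ‖ξ‖^p dμ_∞`. -/
theorem stmt8 {E : Type*} [NormedAddCommGroup E] [NormedSpace ℝ E]
    [FiniteDimensional ℝ E] [MeasurableSpace E] [BorelSpace E]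
    (p : ℝ) (hp : 1 ≤ p) (N : ℕ)
    (hN : coverNum E + 1 ≤ N ∨
      (Nonempty (InnerProductSpace ℝ E) ∧ Module.finrank ℝ E + 2 ≤ N))
    (μ : ℕ → Measure E) [∀ n, IsProbabilityMeasure (μ n)]
    (hμ : ∀ n, HasFiniteMoment p (μ n))
    (f : (Fin N → E) → ℝ)
    (hf : ∀ x : Fin N → E, Tendsto (fun n => quantErr p N (μ n) x) atTop (𝓝 (f x))) :
    ∃ μ' : Measure E, IsProbabilityMeasure μ' ∧ HasFiniteMoment p μ' ∧
      (∀ g : BoundedContinuousFunction E ℝ,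
        Tendsto (fun n => ∫ ξ, g ξ ∂(μ n)) atTop (𝓝 (∫ ξ, g ξ ∂μ'))) ∧
      ∃ L : ℝ, Tendsto (fun n => ∫ ξ, ‖ξ‖ ^ p ∂(μ n)) atTop (𝓝 L) ∧
        ∀ x : Fin N → E,
          f x ^ p = quantErr p N μ' x ^ p + L - ∫ ξ, ‖ξ‖ ^ p ∂μ' := by
  obtain ⟨c, A, hc, hA, hcard⟩ := exists_isBounded_voronoiCell_card_lt hN
  exact stmt8_general (by linarith) hc hA hcard μ hμ f hf
end

section
/- Let p ∈ [1, ∞), let ‖·‖ be a norm on ℝ^d, and let N ≥ c(d, ‖·‖) + 1 (or N ≥ d + 2 if ‖·‖ is induced by an inner product). Then Q_{N,p}(μ, ν) := sup_{x ∈ (ℝ^d)^N} |e_{N,p}(μ, x) − e_{N,p}(ν, x)| is finite for all Borel probability measures μ, ν on ℝ^d with finite p-th moments, Q_{N,p} is a metric on the set of such measures, and Q_{N,p} is topologically equivalent to the L^p-Wasserstein distance W_p: for any sequence (μ_n) and μ_∞ in this set, Q_{N,p}(μ_n, μ_∞) → 0 if and only if W_p(μ_n, μ_∞) → 0. -/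
open MeasureTheory Filter Topology
open scoped ENNReal NNReal

/-- The quantization based quantity
`Q_{N,p}(μ, ν) = sup_x |e_{N,p}(μ, x) − e_{N,p}(ν, x)|`. -/
noncomputable def qDist {E : Type*} [NormedAddCommGroup E] [MeasurableSpace E]
    (p : ℝ) (N : ℕ) (μ ν : Measure E) : ℝ :=
  ⨆ x : Fin N → E, |quantErr p N μ x - quantErr p N ν x|

/-!
Call `S` a shield of the origin if every point far from the origin is at least as close to `S` as to
the origin. Then adding the origin to the quantizers in `S` decreases the `p`-th power of the
distance to them by a bump function of compact support. The translates of this bump, evaluated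
against `μ`, are differences of two quantization costs, so convergence in `Q_{N,p}` yields pointwise
convergence of the convolutions of `μ_n` with bumps of arbitrarily small support; shields with at
most `N - 1` points come from a covering of the unit sphere, or from the vertices of a simplex in
the Euclidean case. Pairing the mass of `μ_n` and of the limit inside each bump gives a partial
coupling moving points by a small distance only, and by dominated convergence it captures almost
all the mass and `p`-th moment of the limit. Convergence of the `p`-th moments, which are also
quantization costs, shows that an arbitrary coupling of the remaining mass is cheap. The converse
holds because the distance to a finite set is `1`-Lipschitz.
-/

section Couplings

variable {X Y : Type*} [MeasurableSpace X] [MeasurableSpace Y]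

/-- The couplings of `μ` and `ν`: the measures on the product with marginals `μ` and `ν`. -/
def couplings (μ : Measure X) (ν : Measure Y) : Set (Measure (X × Y)) :=
  {π | π.fst = μ ∧ π.snd = ν}

theorem prod_mem_couplings (μ : Measure X) (ν : Measure Y) [IsProbabilityMeasure μ]
    [IsProbabilityMeasure ν] : μ.prod ν ∈ couplings μ ν :=
  ⟨Measure.fst_prod, Measure.snd_prod⟩

theorem map_swap_mem_couplings {μ : Measure X} {ν : Measure Y} {π : Measure (X × Y)}
    (hπ : π ∈ couplings μ ν) : π.map Prod.swap ∈ couplings ν μ :=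
  ⟨Measure.fst_map_swap.trans hπ.2, Measure.snd_map_swap.trans hπ.1⟩

theorem lintegral_prod_add (μ : Measure X) (ν : Measure Y) [SFinite μ] [SFinite ν]
    {f : X → ℝ≥0∞} {g : Y → ℝ≥0∞} (hf : Measurable f) (hg : Measurable g) :
    ∫⁻ q, f q.1 + g q.2 ∂μ.prod ν =
      ν Set.univ * ∫⁻ x, f x ∂μ + μ Set.univ * ∫⁻ y, g y ∂ν := by
  rw [lintegral_add_left (by fun_prop), ← lintegral_map hf measurable_fst,
    ← lintegral_map hg measurable_snd, Measure.map_fst_prod, Measure.map_snd_prod,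
    lintegral_smul_measure, lintegral_smul_measure, smul_eq_mul, smul_eq_mul]

/-- The completion of a measure `ρ`, whose marginals are dominated by `μ` and `ν`, to a coupling of
`μ` and `ν`: the masses missing from the marginals are coupled independently. -/
noncomputable def completeCoupling (μ : Measure X) (ν : Measure Y) (ρ : Measure (X × Y)) :
    Measure (X × Y) :=
  ρ + ((μ - ρ.fst) Set.univ)⁻¹ • (μ - ρ.fst).prod (ν - ρ.snd)

theorem inv_measure_univ_smul_measure_univ_smul (μ : Measure X) [IsFiniteMeasure μ] :
    (μ Set.univ)⁻¹ • μ Set.univ • μ = μ := by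
  rcases eq_or_ne μ 0 with rfl | hμ
  · simp only [smul_zero]
  · rw [smul_smul, ENNReal.inv_mul_cancel (by simpa using hμ) (measure_ne_top _ _), one_smul]

theorem isFiniteMeasure_of_fst_le {μ : Measure X} [IsFiniteMeasure μ] {ρ : Measure (X × Y)}
    (hρμ : ρ.fst ≤ μ) : IsFiniteMeasure ρ :=
  ⟨by rw [← Measure.fst_univ]; exact (hρμ Set.univ).trans_lt (measure_lt_top μ _)⟩

variable {μ : Measure X} {ν : Measure Y} [IsProbabilityMeasure μ] [IsProbabilityMeasure ν]
  {ρ : Measure (X × Y)}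

theorem sub_fst_univ_eq_sub_snd_univ (hρμ : ρ.fst ≤ μ) (hρν : ρ.snd ≤ ν) :
    (μ - ρ.fst) Set.univ = (ν - ρ.snd) Set.univ := by
  have := isFiniteMeasure_of_fst_le hρμ
  rw [Measure.sub_apply .univ hρμ, Measure.sub_apply .univ hρν, Measure.fst_univ,
    Measure.snd_univ, measure_univ (μ := μ), measure_univ (μ := ν)]

theorem completeCoupling_mem_couplings (hρμ : ρ.fst ≤ μ) (hρν : ρ.snd ≤ ν) :
    completeCoupling μ ν ρ ∈ couplings μ ν := by
  have := isFiniteMeasure_of_fst_le hρμ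
  have hmass := sub_fst_univ_eq_sub_snd_univ hρμ hρν
  constructor
  · rw [completeCoupling, Measure.fst_add, Measure.fst, Measure.fst, Measure.map_smul,
      Measure.map_fst_prod, ← Measure.fst, ← hmass, inv_measure_univ_smul_measure_univ_smul,
      add_comm, Measure.sub_add_cancel_of_le hρμ]
  · rw [completeCoupling, Measure.snd_add, Measure.snd, Measure.snd, Measure.map_smul,
      Measure.map_snd_prod, ← Measure.snd, hmass, inv_measure_univ_smul_measure_univ_smul,
      add_comm, Measure.sub_add_cancel_of_le hρν]

theorem lintegral_completeCoupling_add_le (hρμ : ρ.fst ≤ μ) (hρν : ρ.snd ≤ ν)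
    {c : X × Y → ℝ≥0∞} {f : X → ℝ≥0∞} {g : Y → ℝ≥0∞} (hf : Measurable f) (hg : Measurable g)
    (hc : ∀ q, c q ≤ f q.1 + g q.2) :
    ∫⁻ q, c q ∂completeCoupling μ ν ρ + (∫⁻ x, f x ∂ρ.fst + ∫⁻ y, g y ∂ρ.snd) ≤
      ∫⁻ q, c q ∂ρ + (∫⁻ x, f x ∂μ + ∫⁻ y, g y ∂ν) := by
  have := isFiniteMeasure_of_fst_le hρμ
  have hmass := sub_fst_univ_eq_sub_snd_univ hρμ hρν
  set α := μ - ρ.fst with hα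
  set β := ν - ρ.snd with hβ
  have hμ : ∫⁻ x, f x ∂μ = ∫⁻ x, f x ∂α + ∫⁻ x, f x ∂ρ.fst := by
    rw [← lintegral_add_measure, Measure.sub_add_cancel_of_le hρμ]
  have hν : ∫⁻ y, g y ∂ν = ∫⁻ y, g y ∂β + ∫⁻ y, g y ∂ρ.snd := by
    rw [← lintegral_add_measure, Measure.sub_add_cancel_of_le hρν]
  have hresidual : (α Set.univ)⁻¹ * ∫⁻ q, c q ∂α.prod β ≤ ∫⁻ x, f x ∂α + ∫⁻ y, g y ∂β := calc
    _ ≤ (α Set.univ)⁻¹ * ∫⁻ q, f q.1 + g q.2 ∂α.prod β := by gcongr; exact hc _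
    _ = (α Set.univ)⁻¹ * α Set.univ * (∫⁻ x, f x ∂α + ∫⁻ y, g y ∂β) := by
      rw [lintegral_prod_add α β hf hg, ← hmass, ← mul_add, ← mul_assoc]
    _ ≤ ∫⁻ x, f x ∂α + ∫⁻ y, g y ∂β := mul_le_of_le_one_left' (ENNReal.inv_mul_le_one _)
  rw [completeCoupling, lintegral_add_measure, lintegral_smul_measure, smul_eq_mul, hμ, hν,
    ← hα, ← hβ, add_add_add_comm (∫⁻ x, f x ∂α), add_assoc]
  gcongr

end Couplings

section Transport

variable {X : Type*} [PseudoEMetricSpace X] {p : ℝ}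

theorem edist_rpow_le_add (hp : 1 ≤ p) (x y z : X) :
    edist x y ^ p ≤ 2 ^ (p - 1) * edist x z ^ p + 2 ^ (p - 1) * edist y z ^ p := calc
  edist x y ^ p ≤ (edist x z + edist y z) ^ p := by gcongr; exact edist_triangle_right x y z
  _ ≤ 2 ^ (p - 1) * (edist x z ^ p + edist y z ^ p) :=
    ENNReal.rpow_add_le_mul_rpow_add_rpow _ _ hp
  _ = _ := mul_add _ _ _

variable [MeasurableSpace X]

/-- The optimal transport cost from `μ` to `ν` for the cost `edist ^ p`, that is, the `p`-th power
of their `L^p`-Wasserstein distance. -/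
noncomputable def transportCost (p : ℝ) (μ ν : Measure X) : ℝ≥0∞ :=
  ⨅ π ∈ couplings μ ν, ∫⁻ q, edist q.1 q.2 ^ p ∂π

theorem transportCost_le {μ ν : Measure X} {π : Measure (X × X)} (hπ : π ∈ couplings μ ν) :
    transportCost p μ ν ≤ ∫⁻ q, edist q.1 q.2 ^ p ∂π :=
  iInf₂_le π hπ

variable [OpensMeasurableSpace X] [SecondCountableTopology X]

theorem transportCost_comm (μ ν : Measure X) : transportCost p μ ν = transportCost p ν μ := by
  have hle (μ ν : Measure X) : transportCost p μ ν ≤ transportCost p ν μ := by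
    refine le_iInf₂ fun π hπ ↦ (transportCost_le (map_swap_mem_couplings hπ)).trans_eq ?_
    rw [lintegral_map (by fun_prop) measurable_swap]
    simp only [Prod.fst_swap, Prod.snd_swap, edist_comm]
  exact le_antisymm (hle μ ν) (hle ν μ)

theorem lintegral_rpow_snd_le_add (hp : 1 ≤ p) (π : Measure (X × X)) {D : X → ℝ≥0∞}
    (hDm : Measurable D) (hD : ∀ x y, D y ≤ D x + edist x y) :
    (∫⁻ y, D y ^ p ∂π.snd) ^ (1 / p) ≤
      (∫⁻ x, D x ^ p ∂π.fst) ^ (1 / p) + (∫⁻ q, edist q.1 q.2 ^ p ∂π) ^ (1 / p) := by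
  rw [Measure.snd, Measure.fst, lintegral_map (by fun_prop) measurable_snd,
    lintegral_map (by fun_prop) measurable_fst]
  calc (∫⁻ q, D q.2 ^ p ∂π) ^ (1 / p)
      ≤ (∫⁻ q, (D q.1 + edist q.1 q.2) ^ p ∂π) ^ (1 / p) := by gcongr; exact hD _ _
    _ ≤ _ := ENNReal.lintegral_Lp_add_le (f := fun q : X × X ↦ D q.1)
      (g := fun q : X × X ↦ edist q.1 q.2) (by fun_prop) (by fun_prop) hp

theorem lintegral_rpow_le_add_transportCost (hp : 1 ≤ p) (μ ν : Measure X) {D : X → ℝ≥0∞}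
    (hDm : Measurable D) (hD : ∀ x y, D y ≤ D x + edist x y) :
    (∫⁻ y, D y ^ p ∂ν) ^ (1 / p) ≤
      (∫⁻ x, D x ^ p ∂μ) ^ (1 / p) + transportCost p μ ν ^ (1 / p) := by
  rw [← tsub_le_iff_left, one_div, ENNReal.le_rpow_inv_iff (by linarith), ← one_div]
  refine le_iInf₂ fun π ⟨hμ, hν⟩ ↦ ?_
  rw [← ENNReal.le_rpow_inv_iff (by linarith), ← one_div, tsub_le_iff_left, ← hμ, ← hν]
  exact lintegral_rpow_snd_le_add hp π hDm hD

theorem transportCost_ne_top (hp : 1 ≤ p) {μ ν : Measure X} [IsProbabilityMeasure μ]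
    [IsProbabilityMeasure ν] (z : X) (hμ : ∫⁻ x, edist x z ^ p ∂μ ≠ ∞)
    (hν : ∫⁻ y, edist y z ^ p ∂ν ≠ ∞) : transportCost p μ ν ≠ ∞ := by
  have htwo : (2 : ℝ≥0∞) ^ (p - 1) ≠ ∞ :=
    ENNReal.rpow_ne_top_of_nonneg (by linarith) ENNReal.ofNat_ne_top
  refine ne_top_of_le_ne_top ?_ ((transportCost_le (prod_mem_couplings μ ν)).trans
    (lintegral_mono fun q ↦ edist_rpow_le_add hp q.1 q.2 z))
  rw [lintegral_prod_add μ ν (f := fun x ↦ 2 ^ (p - 1) * edist x z ^ p)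
    (g := fun y ↦ 2 ^ (p - 1) * edist y z ^ p) (by fun_prop) (by fun_prop), measure_univ,
    measure_univ, one_mul, one_mul, lintegral_const_mul _ (by fun_prop),
    lintegral_const_mul _ (by fun_prop)]
  exact ENNReal.add_ne_top.2 ⟨ENNReal.mul_ne_top htwo hμ, ENNReal.mul_ne_top htwo hν⟩

theorem measure_le_measure_thickening_of_transportCost_eq_zero (hp : 1 ≤ p) {μ ν : Measure X}
    (h : transportCost p μ ν = 0) (F : Set X) {δ : ℝ} (hδ : 0 < δ) :
    ν F ≤ μ (Metric.thickening δ F) := by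
  have hp0 : 0 < p := by linarith
  set D : X → ℝ≥0∞ := fun u ↦ ENNReal.ofReal δ - Metric.infEDist u F with hD_def
  have hDm : Measurable D := measurable_const.sub measurable_infEDist
  have hD (x y : X) : D y ≤ D x + edist x y := by
    rw [tsub_le_iff_right, add_assoc, add_comm (edist x y)]
    exact le_tsub_add.trans (by gcongr; exact Metric.infEDist_le_infEDist_add_edist)
  have hDν : ENNReal.ofReal δ ^ p * ν F ≤ ∫⁻ y, D y ^ p ∂ν := by
    refine le_trans ?_ (mul_meas_ge_le_lintegral (hDm.pow_const p) (ENNReal.ofReal δ ^ p))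
    gcongr
    intro u hu
    simp only [Set.mem_ofPred_eq, hD_def, Metric.infEDist_zero_of_mem hu, tsub_zero, le_refl]
  have hDμ : ∫⁻ x, D x ^ p ∂μ ≤ ENNReal.ofReal δ ^ p * μ (Metric.thickening δ F) := by
    rw [← lintegral_indicator_const Metric.isOpen_thickening.measurableSet]
    refine lintegral_mono fun u ↦ ?_
    by_cases hu : u ∈ Metric.thickening δ F
    · simpa only [Set.indicator_of_mem hu] using by gcongr; exact tsub_le_self
    · have : D u = 0 := tsub_eq_zero_of_le (by simpa [Metric.thickening] using hu)
      simp only [this, ENNReal.zero_rpow_of_pos hp0, zero_le]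
  have hcost : ∫⁻ y, D y ^ p ∂ν ≤ ∫⁻ x, D x ^ p ∂μ := by
    have := lintegral_rpow_le_add_transportCost hp μ ν hDm hD
    rwa [h, ENNReal.zero_rpow_of_pos (by positivity), add_zero,
      ENNReal.rpow_le_rpow_iff (by positivity)] at this
  have hδp : ENNReal.ofReal δ ^ p ≠ 0 := (ENNReal.rpow_pos (by simpa) (by finiteness)).ne'
  exact (ENNReal.mul_le_mul_iff_right hδp (by finiteness)).1 ((hDν.trans hcost).trans hDμ)

theorem measure_le_of_transportCost_eq_zero (hp : 1 ≤ p) {μ ν : Measure X} [IsFiniteMeasure μ]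
    (h : transportCost p μ ν = 0) {F : Set X} (hF : IsClosed F) : ν F ≤ μ F :=
  ge_of_tendsto (tendsto_measure_thickening_of_isClosed ⟨1, one_pos, measure_ne_top μ _⟩ hF)
    (eventually_mem_nhdsWithin.mono fun _ ↦
      measure_le_measure_thickening_of_transportCost_eq_zero hp h F)

end Transport

theorem eq_of_transportCost_eq_zero {X : Type*} [PseudoEMetricSpace X]
    [SecondCountableTopology X] [MeasurableSpace X] [BorelSpace X] {p : ℝ} (hp : 1 ≤ p)
    {μ ν : Measure X} [IsFiniteMeasure μ] [IsFiniteMeasure ν] (h : transportCost p μ ν = 0) :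
    μ = ν := by
  have hclosed (F : Set X) (hF : IsClosed F) : μ F = ν F :=
    le_antisymm (measure_le_of_transportCost_eq_zero hp (transportCost_comm μ ν ▸ h) hF)
      (measure_le_of_transportCost_eq_zero hp h hF)
  refine ext_of_generate_finite {F | IsClosed F} ?_ isPiSystem_isClosed hclosed
    (hclosed _ isClosed_univ)
  rw [BorelSpace.measurable_eq (α := X), borel_eq_generateFrom_isClosed]

section Quantization

/-- The quantization cost of `μ` at the set of quantizers `S`, that is, the `p`-th power of the
`L^p`-quantization error, as an extended nonnegative real. -/
noncomputable def quantCost {X : Type*} [PseudoEMetricSpace X] [MeasurableSpace X] (p : ℝ)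
    (μ : Measure X) (S : Set X) : ℝ≥0∞ :=
  ∫⁻ ξ, Metric.infEDist ξ S ^ p ∂μ

theorem quantCost_singleton {X : Type*} [PseudoEMetricSpace X] [MeasurableSpace X] (p : ℝ)
    (μ : Measure X) (z : X) : quantCost p μ {z} = ∫⁻ ξ, edist ξ z ^ p ∂μ := by
  simp only [quantCost, Metric.infEDist_singleton]

theorem quantCost_ne_top {X : Type*} [PseudoMetricSpace X] [MeasurableSpace X] {p : ℝ}
    (hp : 1 ≤ p) {μ : Measure X} [IsFiniteMeasure μ] {z : X} (hμ : ∫⁻ ξ, edist ξ z ^ p ∂μ ≠ ∞)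
    {S : Set X} (hS : S.Nonempty) : quantCost p μ S ≠ ∞ := by
  obtain ⟨s, hs⟩ := hS
  have htwo : (2 : ℝ≥0∞) ^ (p - 1) ≠ ∞ :=
    ENNReal.rpow_ne_top_of_nonneg (by linarith) ENNReal.ofNat_ne_top
  have hle (ξ : X) : Metric.infEDist ξ S ^ p ≤
      2 ^ (p - 1) * edist ξ z ^ p + 2 ^ (p - 1) * edist s z ^ p :=
    le_trans (by gcongr; exact Metric.infEDist_le_edist_of_mem hs) (edist_rpow_le_add hp ξ s z)
  refine ne_top_of_le_ne_top ?_ (lintegral_mono hle)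
  rw [lintegral_add_right _ measurable_const, lintegral_const_mul' _ _ htwo, lintegral_const]
  exact ENNReal.add_ne_top.2 ⟨ENNReal.mul_ne_top htwo hμ, by finiteness⟩

theorem quantCost_rpow_le_add_transportCost {X : Type*} [PseudoEMetricSpace X] [MeasurableSpace X]
    [OpensMeasurableSpace X] [SecondCountableTopology X] {p : ℝ} (hp : 1 ≤ p) (μ ν : Measure X)
    (S : Set X) :
    quantCost p ν S ^ (1 / p) ≤ quantCost p μ S ^ (1 / p) + transportCost p μ ν ^ (1 / p) :=
  lintegral_rpow_le_add_transportCost hp μ ν measurable_infEDist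
    fun x y ↦ edist_comm x y ▸ Metric.infEDist_le_infEDist_add_edist

variable {E : Type*} [NormedAddCommGroup E] [MeasurableSpace E] {p : ℝ}

theorem quantErr_eq_toReal_quantCost (hp : 0 < p) {N : ℕ} (μ : Measure E) (x : Fin N → E) :
    quantErr p N μ x = (quantCost p μ (Set.range x) ^ (1 / p)).toReal := by
  have (ξ : E) : ⨅ i, (‖ξ - x i‖₊ : ℝ≥0∞) ^ p = Metric.infEDist ξ (Set.range x) ^ p := by
    rw [Metric.infEDist, iInf_range, ← ENNReal.orderIsoRpow_apply p hp, OrderIso.map_iInf]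
    simp only [ENNReal.orderIsoRpow_apply, edist_eq_enorm_sub, enorm]
  simp only [quantErr, quantCost, this, ENNReal.toReal_rpow]

theorem wassersteinDist_eq_toReal_transportCost (μ ν : Measure E) :
    wassersteinDist p μ ν = (transportCost p μ ν ^ (1 / p)).toReal := by
  simp only [wassersteinDist, transportCost, couplings, ENNReal.toReal_rpow, edist_eq_enorm_sub,
    enorm, Measure.fst, Measure.snd]

theorem hasFiniteMoment_iff_lintegral_edist {μ : Measure E} :
    HasFiniteMoment p μ ↔ ∫⁻ ξ, edist ξ 0 ^ p ∂μ ≠ ∞ := by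
  simp only [HasFiniteMoment, edist_zero_right, enorm]

theorem quantErr_sub_le_wassersteinDist [OpensMeasurableSpace E] [SecondCountableTopology E]
    (hp : 1 ≤ p) {N : ℕ} [NeZero N] {μ ν : Measure E} [IsProbabilityMeasure μ]
    [IsProbabilityMeasure ν] (hμ : HasFiniteMoment p μ) (hν : HasFiniteMoment p ν)
    (x : Fin N → E) : quantErr p N ν x - quantErr p N μ x ≤ wassersteinDist p μ ν := by
  rw [hasFiniteMoment_iff_lintegral_edist] at hμ hν
  have hinv : 0 ≤ 1 / p := by positivity
  rw [quantErr_eq_toReal_quantCost (by linarith), quantErr_eq_toReal_quantCost (by linarith),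
    wassersteinDist_eq_toReal_transportCost, sub_le_iff_le_add']
  exact ENNReal.toReal_le_add (quantCost_rpow_le_add_transportCost hp μ ν _)
    (ENNReal.rpow_ne_top_of_nonneg hinv (quantCost_ne_top hp hμ (Set.range_nonempty x)))
    (ENNReal.rpow_ne_top_of_nonneg hinv (transportCost_ne_top hp 0 hμ hν))

theorem abs_quantErr_sub_le_wassersteinDist [OpensMeasurableSpace E] [SecondCountableTopology E]
    (hp : 1 ≤ p) {N : ℕ} [NeZero N] {μ ν : Measure E} [IsProbabilityMeasure μ]
    [IsProbabilityMeasure ν] (hμ : HasFiniteMoment p μ) (hν : HasFiniteMoment p ν)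
    (x : Fin N → E) : |quantErr p N μ x - quantErr p N ν x| ≤ wassersteinDist p μ ν := by
  refine abs_sub_le_iff.2 ⟨?_, quantErr_sub_le_wassersteinDist hp hμ hν x⟩
  rw [wassersteinDist_eq_toReal_transportCost, transportCost_comm,
    ← wassersteinDist_eq_toReal_transportCost]
  exact quantErr_sub_le_wassersteinDist hp hν hμ x

theorem bddAbove_range_abs_quantErr_sub [OpensMeasurableSpace E] [SecondCountableTopology E]
    (hp : 1 ≤ p) {N : ℕ} [NeZero N] {μ ν : Measure E} [IsProbabilityMeasure μ]
    [IsProbabilityMeasure ν] (hμ : HasFiniteMoment p μ) (hν : HasFiniteMoment p ν) :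
    BddAbove (Set.range fun x : Fin N → E ↦ |quantErr p N μ x - quantErr p N ν x|) :=
  ⟨wassersteinDist p μ ν, Set.forall_mem_range.2 (abs_quantErr_sub_le_wassersteinDist hp hμ hν)⟩

end Quantization

section Overlap

variable {X A : Type*} [MeasurableSpace X] [MeasurableSpace A] {k : X → A → ℝ≥0∞}

/-- The density at `a` of the mixture of the probability densities `k x` with mixing law `μ`. -/
noncomputable def mixtureDensity (k : X → A → ℝ≥0∞) (μ : Measure X) (a : A) : ℝ≥0∞ :=
  ∫⁻ x, k x a ∂μ

/-- The overlap of `μ` and `ν`: move mass from `μ` to `A` along `k`, keep at each `a` the common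
part of the two mixture densities, and move it back to `ν`. Using `max (f a) (g a)` in the
denominator, the common part of `f a` and `g a` is `f a * g a / max (f a) (g a)`. -/
noncomputable def overlap (k : X → A → ℝ≥0∞) (lam : Measure A) (μ ν : Measure X) :
    Measure (X × X) :=
  (μ.prod ν).withDensity fun q ↦
    ∫⁻ a, (max (mixtureDensity k μ a) (mixtureDensity k ν a))⁻¹ * (k q.1 a * k q.2 a) ∂lam

theorem inv_max_mul_le_one (s t : ℝ≥0∞) : (max s t)⁻¹ * s ≤ 1 :=
  (mul_le_mul_right (le_max_left s t) _).trans (ENNReal.inv_mul_le_one _)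

theorem tendsto_inv_max_mul {ι : Type*} {l : Filter ι} {s : ι → ℝ≥0∞} {t : ℝ≥0∞}
    (hs : Tendsto s l (𝓝 t)) (ht₀ : t ≠ 0) (ht : t ≠ ∞) :
    Tendsto (fun i ↦ (max (s i) t)⁻¹ * s i) l (𝓝 1) := by
  have hmax : Tendsto (fun i ↦ (max (s i) t)⁻¹) l (𝓝 t⁻¹) := by
    simpa only [max_self] using (hs.max (tendsto_const_nhds (x := t))).inv
  simpa only [ENNReal.inv_mul_cancel ht₀ ht] using
    ENNReal.Tendsto.mul hmax (.inr ht) hs (.inr (ENNReal.inv_ne_top.2 ht₀))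

theorem measurable_mixtureDensity (hk : Measurable k.uncurry) (μ : Measure X) [SFinite μ] :
    Measurable (mixtureDensity k μ) :=
  hk.lintegral_prod_left'

variable {lam : Measure A} [SFinite lam]

theorem lintegral_lintegral_kernel_mul (hk : Measurable k.uncurry)
    (hk_one : ∀ x, ∫⁻ a, k x a ∂lam = 1) (μ : Measure X) [SFinite μ] {h : X → ℝ≥0∞}
    (hh : Measurable h) : ∫⁻ a, ∫⁻ x, k x a * h x ∂μ ∂lam = ∫⁻ x, h x ∂μ := by
  rw [← lintegral_lintegral_swap (hk.mul (hh.comp measurable_fst)).aemeasurable]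
  refine lintegral_congr fun x ↦ ?_
  rw [lintegral_mul_const _ hk.of_uncurry_left, hk_one, one_mul]

theorem ae_mixtureDensity_lt_top (hk : Measurable k.uncurry)
    (hk_one : ∀ x, ∫⁻ a, k x a ∂lam = 1) (μ : Measure X) [IsFiniteMeasure μ] :
    ∀ᵐ a ∂lam, mixtureDensity k μ a < ∞ := by
  refine ae_lt_top (measurable_mixtureDensity hk μ) ?_
  have := lintegral_lintegral_kernel_mul hk hk_one μ measurable_one
  simp only [Pi.one_apply, mul_one, lintegral_one] at this
  exact this ▸ measure_ne_top μ _

theorem measurable_overlap_density (hk : Measurable k.uncurry) (μ ν : Measure X) [SFinite μ]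
    [SFinite ν] : Measurable fun z : (X × X) × A ↦
      (max (mixtureDensity k μ z.2) (mixtureDensity k ν z.2))⁻¹ * (k z.1.1 z.2 * k z.1.2 z.2) := by
  have hk₁ : Measurable fun z : (X × X) × A ↦ k z.1.1 z.2 :=
    hk.comp ((measurable_fst.comp measurable_fst).prodMk measurable_snd)
  have hk₂ : Measurable fun z : (X × X) × A ↦ k z.1.2 z.2 :=
    hk.comp ((measurable_snd.comp measurable_fst).prodMk measurable_snd)
  exact (((measurable_mixtureDensity hk μ).comp measurable_snd).max
    ((measurable_mixtureDensity hk ν).comp measurable_snd)).inv.mul (hk₁.mul hk₂)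

theorem ae_overlap_exists_kernel_ne_zero (hk : Measurable k.uncurry) (μ ν : Measure X) [SFinite μ]
    [SFinite ν] : ∀ᵐ q ∂overlap k lam μ ν, ∃ a, k q.1 a ≠ 0 ∧ k q.2 a ≠ 0 := by
  rw [overlap, ae_withDensity_iff (measurable_overlap_density hk μ ν).lintegral_prod_right']
  refine .of_forall fun q hq ↦ ?_
  by_contra! hzero
  refine hq (lintegral_eq_zero_of_ae_eq_zero (.of_forall fun a ↦ ?_))
  rcases eq_or_ne (k q.1 a) 0 with ha | ha
  · simp only [ha, zero_mul, mul_zero, Pi.zero_apply]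
  · simp only [hzero a ha, mul_zero, Pi.zero_apply]

theorem lintegral_snd_overlap (hk : Measurable k.uncurry) (μ ν : Measure X) [SFinite μ]
    [SFinite ν] {h : X → ℝ≥0∞} (hh : Measurable h) :
    ∫⁻ y, h y ∂(overlap k lam μ ν).snd =
      ∫⁻ a, (max (mixtureDensity k μ a) (mixtureDensity k ν a))⁻¹ * mixtureDensity k μ a *
        ∫⁻ y, k y a * h y ∂ν ∂lam := by
  have hdens := measurable_overlap_density hk μ ν
  rw [Measure.snd, lintegral_map hh measurable_snd, overlap,
    lintegral_withDensity_eq_lintegral_mul _ hdens.lintegral_prod_right' (by fun_prop)]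
  simp only [Pi.mul_apply]
  calc ∫⁻ q, (∫⁻ a, (max (mixtureDensity k μ a) (mixtureDensity k ν a))⁻¹ *
          (k q.1 a * k q.2 a) ∂lam) * h q.2 ∂μ.prod ν
      = ∫⁻ q, ∫⁻ a, (max (mixtureDensity k μ a) (mixtureDensity k ν a))⁻¹ *
          (k q.1 a * k q.2 a) * h q.2 ∂lam ∂μ.prod ν :=
        lintegral_congr fun q ↦ (lintegral_mul_const _ (hdens.comp measurable_prodMk_left)).symm
    _ = ∫⁻ a, ∫⁻ q, (max (mixtureDensity k μ a) (mixtureDensity k ν a))⁻¹ *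
          (k q.1 a * k q.2 a) * h q.2 ∂μ.prod ν ∂lam :=
        lintegral_lintegral_swap
          (hdens.mul (hh.comp (measurable_snd.comp measurable_fst))).aemeasurable
    _ = _ := by
        refine lintegral_congr fun a ↦ ?_
        have hka : Measurable fun x ↦ k x a := hk.of_uncurry_right
        have hkah : Measurable fun x ↦ k x a * h x := hka.mul hh
        simp only [mul_assoc]
        rw [lintegral_const_mul _ (by fun_prop),
          lintegral_prod_mul hka.aemeasurable hkah.aemeasurable]
        rfl

theorem overlap_snd_le (hk : Measurable k.uncurry) (hk_one : ∀ x, ∫⁻ a, k x a ∂lam = 1)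
    (μ ν : Measure X) [SFinite μ] [SFinite ν] : (overlap k lam μ ν).snd ≤ ν := by
  refine Measure.le_iff.2 fun s hs ↦ ?_
  have hind : Measurable (s.indicator (1 : X → ℝ≥0∞)) := measurable_one.indicator hs
  rw [← lintegral_indicator_one hs, ← lintegral_indicator_one hs,
    lintegral_snd_overlap hk μ ν hind, ← lintegral_lintegral_kernel_mul hk hk_one ν hind]
  exact lintegral_mono fun a ↦ mul_le_of_le_one_left' (inv_max_mul_le_one _ _)

theorem overlap_map_swap (hk : Measurable k.uncurry) (μ ν : Measure X) [SFinite μ] [SFinite ν] :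
    (overlap k lam μ ν).map Prod.swap = overlap k lam ν μ := by
  refine Measure.ext_of_lintegral _ fun h hh ↦ ?_
  rw [lintegral_map hh measurable_swap, overlap, overlap,
    lintegral_withDensity_eq_lintegral_mul _
      (measurable_overlap_density hk μ ν).lintegral_prod_right' (by fun_prop),
    lintegral_withDensity_eq_lintegral_mul _
      (measurable_overlap_density hk ν μ).lintegral_prod_right' hh, ← lintegral_prod_swap]
  simp only [Pi.mul_apply, Prod.fst_swap, Prod.snd_swap, Prod.swap_swap, max_comm, mul_comm]

theorem overlap_fst_le (hk : Measurable k.uncurry) (hk_one : ∀ x, ∫⁻ a, k x a ∂lam = 1)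
    (μ ν : Measure X) [SFinite μ] [SFinite ν] : (overlap k lam μ ν).fst ≤ μ := by
  rw [← Measure.snd_map_swap, overlap_map_swap hk]
  exact overlap_snd_le hk hk_one ν μ

theorem tendsto_lintegral_snd_overlap (hk : Measurable k.uncurry)
    (hk_one : ∀ x, ∫⁻ a, k x a ∂lam = 1) {μ : ℕ → Measure X} {ν : Measure X}
    [∀ n, SFinite (μ n)] [IsFiniteMeasure ν]
    (hμ : ∀ᵐ a ∂lam, Tendsto (fun n ↦ mixtureDensity k (μ n) a) atTop (𝓝 (mixtureDensity k ν a)))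
    {h : X → ℝ≥0∞} (hh : Measurable h) (hhν : ∫⁻ y, h y ∂ν ≠ ∞) :
    Tendsto (fun n ↦ ∫⁻ y, h y ∂(overlap k lam (μ n) ν).snd) atTop (𝓝 (∫⁻ y, h y ∂ν)) := by
  have hG : Measurable fun a ↦ ∫⁻ y, k y a * h y ∂ν :=
    (hk.mul (hh.comp measurable_fst)).lintegral_prod_left'
  simp only [lintegral_snd_overlap hk _ ν hh]
  rw [← lintegral_lintegral_kernel_mul hk hk_one ν hh] at hhν ⊢
  refine tendsto_lintegral_of_dominated_convergence _ (fun n ↦ ?_)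
    (fun n ↦ .of_forall fun a ↦ mul_le_of_le_one_left' (inv_max_mul_le_one _ _)) hhν ?_
  · have := measurable_mixtureDensity hk (μ n)
    have := measurable_mixtureDensity hk ν
    fun_prop
  filter_upwards [hμ, ae_mixtureDensity_lt_top hk hk_one ν] with a ha ha_top
  rcases eq_or_ne (mixtureDensity k ν a) 0 with hzero | hzero
  · have hG_zero : ∫⁻ y, k y a * h y ∂ν = 0 := by
      rw [mixtureDensity, lintegral_eq_zero_iff hk.of_uncurry_right] at hzero
      exact lintegral_eq_zero_of_ae_eq_zero (hzero.mono fun y hy ↦ by simp [hy])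
    simp only [hG_zero, mul_zero, tendsto_const_nhds]
  · simpa only [one_mul] using ENNReal.Tendsto.mul_const
      (tendsto_inv_max_mul ha hzero ha_top.ne) (.inl one_ne_zero)

end Overlap

section Mollification

/-- A bound on the transport cost between two measures whose `p`-th moments about a common point are
`M₁` and `M₂`, when some coupling of range `R` of parts of them has a second marginal with `p`-th
moment `m`: the remaining mass has moment at most `M₂ - m` in the second measure and, by
Minkowski's inequality, at most `M₁ - (m ^ (1 / p) - R) ^ p` in the first. -/
noncomputable def partialCouplingBound (p : ℝ) (R M₁ M₂ m : ℝ≥0∞) : ℝ≥0∞ :=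
  R ^ p + 2 ^ (p - 1) * (M₁ + M₂ - ((m ^ (1 / p) - R) ^ p + m))

theorem partialCouplingBound_zero {p : ℝ} (hp : 0 < p) (M : ℝ≥0∞) :
    partialCouplingBound p 0 M M M = 0 := by
  rw [partialCouplingBound, tsub_zero, ← ENNReal.rpow_mul, one_div_mul_cancel hp.ne',
    ENNReal.rpow_one, tsub_self, mul_zero, ENNReal.zero_rpow_of_pos hp, add_zero]

theorem tendsto_partialCouplingBound {p : ℝ} (hp : 1 ≤ p) {ι : Type*} {l : Filter ι}
    {R M m : ι → ℝ≥0∞} {R' M' m' M₂ : ℝ≥0∞} (hR : Tendsto R l (𝓝 R')) (hM : Tendsto M l (𝓝 M'))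
    (hm : Tendsto m l (𝓝 m')) (hM' : M' ≠ ∞) (hM₂ : M₂ ≠ ∞) (hm' : m' ≠ ∞) :
    Tendsto (fun i ↦ partialCouplingBound p (R i) (M i) M₂ (m i)) l
      (𝓝 (partialCouplingBound p R' M' M₂ m')) := by
  have htwo : (2 : ℝ≥0∞) ^ (p - 1) ≠ ∞ :=
    ENNReal.rpow_ne_top_of_nonneg (by linarith) ENNReal.ofNat_ne_top
  have hroot : m' ^ (1 / p) ≠ ∞ := ENNReal.rpow_ne_top_of_nonneg (by positivity) hm'
  exact (hR.ennrpow_const p).add <| ENNReal.Tendsto.const_mul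
    (ENNReal.Tendsto.sub (hM.add tendsto_const_nhds)
      (((ENNReal.Tendsto.sub (hm.ennrpow_const _) hR (.inl hroot)).ennrpow_const p).add hm)
      (.inl (ENNReal.add_ne_top.2 ⟨hM', hM₂⟩))) (.inr htwo)

variable {X : Type*} [PseudoEMetricSpace X] [MeasurableSpace X]

/-- A mollifier of range `R`: a measurable family `k x` of probability densities with respect to
`lam` in which only points at distance at most `R` have overlapping densities. -/
structure IsMollifier {A : Type*} [MeasurableSpace A] (lam : Measure A) (k : X → A → ℝ≥0∞)
    (R : ℝ≥0∞) : Prop where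
  measurable : Measurable k.uncurry
  lintegral_eq_one (x : X) : ∫⁻ a, k x a ∂lam = 1
  edist_le {x y : X} {a : A} : k x a ≠ 0 → k y a ≠ 0 → edist x y ≤ R

theorem IsMollifier.mono {A : Type*} [MeasurableSpace A] {lam : Measure A} {k : X → A → ℝ≥0∞}
    {R R' : ℝ≥0∞} (hk : IsMollifier lam k R) (hR : R ≤ R') : IsMollifier lam k R' :=
  { hk with edist_le := fun hx hy ↦ (hk.edist_le hx hy).trans hR }

variable [OpensMeasurableSpace X] [SecondCountableTopology X] {p : ℝ}

theorem rpow_sub_rpow_le_lintegral_fst (hp : 1 ≤ p) {ρ : Measure (X × X)} {R : ℝ≥0∞}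
    (hρ : ∫⁻ q, edist q.1 q.2 ^ p ∂ρ ≤ R ^ p) (z : X) :
    ((∫⁻ y, edist y z ^ p ∂ρ.snd) ^ (1 / p) - R) ^ p ≤ ∫⁻ x, edist x z ^ p ∂ρ.fst := by
  have hp0 : 0 < p := by linarith
  rw [← ENNReal.le_rpow_inv_iff hp0, ← one_div, tsub_le_iff_right]
  refine (lintegral_rpow_snd_le_add hp ρ (D := (edist · z)) (by fun_prop) fun x y ↦ ?_).trans ?_
  · rw [add_comm, edist_comm x y]
    exact edist_triangle y x z
  · gcongr
    rwa [one_div, ENNReal.rpow_inv_le_iff hp0]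

theorem transportCost_le_partialCouplingBound (hp : 1 ≤ p) {μ ν : Measure X}
    [IsProbabilityMeasure μ] [IsProbabilityMeasure ν] {ρ : Measure (X × X)} (hρμ : ρ.fst ≤ μ)
    (hρν : ρ.snd ≤ ν) {R : ℝ≥0∞} (hR : ∀ᵐ q ∂ρ, edist q.1 q.2 ≤ R) {z : X}
    (hν : ∫⁻ y, edist y z ^ p ∂ν ≠ ∞) :
    transportCost p μ ν ≤ partialCouplingBound p R (∫⁻ x, edist x z ^ p ∂μ)
      (∫⁻ y, edist y z ^ p ∂ν) (∫⁻ y, edist y z ^ p ∂ρ.snd) := by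
  have htwo : (2 : ℝ≥0∞) ^ (p - 1) ≠ ∞ :=
    ENNReal.rpow_ne_top_of_nonneg (by linarith) ENNReal.ofNat_ne_top
  have hmass : ρ Set.univ ≤ 1 := by
    rw [← Measure.fst_univ, ← measure_univ (μ := μ)]
    exact hρμ _
  have hdiag : ∫⁻ q, edist q.1 q.2 ^ p ∂ρ ≤ R ^ p := calc
    _ ≤ ∫⁻ _, R ^ p ∂ρ := lintegral_mono_ae (hR.mono fun q hq ↦ by gcongr)
    _ ≤ R ^ p := by rw [lintegral_const]; exact mul_le_of_le_one_right' hmass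
  have hfst := rpow_sub_rpow_le_lintegral_fst hp hdiag z
  set m := ∫⁻ y, edist y z ^ p ∂ρ.snd
  set a := (m ^ (1 / p) - R) ^ p + m with ha_def
  set b := ∫⁻ x, edist x z ^ p ∂μ + ∫⁻ y, edist y z ^ p ∂ν
  have hm : m ≠ ∞ := ne_top_of_le_ne_top hν (lintegral_mono' hρν le_rfl)
  have ha : a ≠ ∞ := ENNReal.add_ne_top.2 ⟨ENNReal.rpow_ne_top_of_nonneg (by linarith)
    (ENNReal.sub_ne_top (ENNReal.rpow_ne_top_of_nonneg (by positivity) hm)), hm⟩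
  have hcomplete : transportCost p μ ν + 2 ^ (p - 1) * a ≤ R ^ p + 2 ^ (p - 1) * b := by
    have := lintegral_completeCoupling_add_le hρμ hρν (c := fun q ↦ edist q.1 q.2 ^ p)
      (f := fun x ↦ 2 ^ (p - 1) * edist x z ^ p) (g := fun y ↦ 2 ^ (p - 1) * edist y z ^ p)
      (by fun_prop) (by fun_prop) fun q ↦ edist_rpow_le_add hp q.1 q.2 z
    simp only [lintegral_const_mul' _ _ htwo, ← mul_add] at this
    refine le_trans ?_ (this.trans (by gcongr))
    rw [ha_def]
    gcongr
    exact transportCost_le (completeCoupling_mem_couplings hρμ hρν)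
  refine (ENNReal.add_le_add_iff_right (ENNReal.mul_ne_top htwo ha)).1 (hcomplete.trans ?_)
  rw [partialCouplingBound, add_assoc, ← mul_add]
  gcongr
  exact le_tsub_add

theorem tendsto_transportCost_of_mollifiers (hp : 1 ≤ p) {A : Type*} [MeasurableSpace A]
    {lam : Measure A} [SFinite lam] {μ : ℕ → Measure X} {ν : Measure X}
    [∀ n, IsProbabilityMeasure (μ n)] [IsProbabilityMeasure ν] {z : X}
    (hν : ∫⁻ y, edist y z ^ p ∂ν ≠ ∞)
    (hμ : Tendsto (fun n ↦ ∫⁻ x, edist x z ^ p ∂μ n) atTop (𝓝 (∫⁻ y, edist y z ^ p ∂ν)))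
    (hk : ∀ R > 0, ∃ k, IsMollifier lam k R ∧
      ∀ᵐ a ∂lam, Tendsto (fun n ↦ mixtureDensity k (μ n) a) atTop (𝓝 (mixtureDensity k ν a))) :
    Tendsto (fun n ↦ transportCost p (μ n) ν) atTop (𝓝 0) := by
  set M := ∫⁻ y, edist y z ^ p ∂ν
  refine ENNReal.tendsto_nhds_zero.2 fun ε hε ↦ ?_
  obtain ⟨R, hRε, hR⟩ : ∃ R, partialCouplingBound p R M M M < ε ∧ 0 < R := by
    have hbound : Tendsto (fun R ↦ partialCouplingBound p R M M M) (𝓝 0) (𝓝 0) := by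
      simpa only [id_eq, partialCouplingBound_zero (by linarith : 0 < p)] using
        tendsto_partialCouplingBound hp (tendsto_id (x := 𝓝 0)) (tendsto_const_nhds (x := M))
          (tendsto_const_nhds (x := M)) hν hν hν
    exact (((hbound.eventually_lt_const hε).filter_mono nhdsWithin_le_nhds).and
      (self_mem_nhdsWithin (s := Set.Ioi 0))).exists
  obtain ⟨k, hkR, hconv⟩ := hk R hR
  have hm : Tendsto (fun n ↦ ∫⁻ y, edist y z ^ p ∂(overlap k lam (μ n) ν).snd) atTop (𝓝 M) :=
    tendsto_lintegral_snd_overlap hkR.measurable hkR.lintegral_eq_one hconv (by fun_prop) hν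
  filter_upwards [(tendsto_partialCouplingBound hp tendsto_const_nhds hμ hm hν hν
    hν).eventually_lt_const hRε] with n hn
  refine (transportCost_le_partialCouplingBound hp ?_ ?_ ?_ hν).trans hn.le
  · exact overlap_fst_le hkR.measurable hkR.lintegral_eq_one _ _
  · exact overlap_snd_le hkR.measurable hkR.lintegral_eq_one _ _
  · exact (ae_overlap_exists_kernel_ne_zero hkR.measurable _ _).mono
      fun q ⟨a, h₁, h₂⟩ ↦ hkR.edist_le h₁ h₂

end Mollification

section Shields

open scoped Pointwise

/-- `S` shields the origin from the points of norm at least `R`: each of them is at least as close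
to `S` as to the origin, which is itself not in the closure of `S`. Adding the origin to a set of
quantizers containing `S` then only affects the quantization error inside the ball of radius `R`. -/
structure IsShield {E : Type*} [NormedAddCommGroup E] (S : Set E) (R : ℝ) : Prop where
  zero_notMem_closure : (0 : E) ∉ closure S
  exists_norm_sub_le (ξ : E) : R ≤ ‖ξ‖ → ∃ b ∈ S, ‖ξ - b‖ ≤ ‖ξ‖

/-- The decrease of the `p`-th power of the distance from `η` to `S` when the origin is added to
`S`. -/
noncomputable def shieldBump {E : Type*} [NormedAddCommGroup E] (p : ℝ) (S : Set E) (η : E) :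
    ℝ≥0∞ :=
  Metric.infEDist η S ^ p - Metric.infEDist η (insert 0 S) ^ p

/-- The family of the translates of `shieldBump p S`, normalized and reflected. -/
noncomputable def shieldKernel {E : Type*} [NormedAddCommGroup E] [MeasurableSpace E]
    (lam : Measure E) (p : ℝ) (S : Set E) (x a : E) : ℝ≥0∞ :=
  (∫⁻ η, shieldBump p S η ∂lam)⁻¹ * shieldBump p S (x - a)

variable {E : Type*} [NormedAddCommGroup E] {p : ℝ} {S : Set E} {R : ℝ}

theorem IsShield.pos (hS : IsShield S R) : 0 < R := by
  by_contra! hR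
  obtain ⟨b, hb, hb0⟩ := hS.exists_norm_sub_le 0 (by simpa only [norm_zero] using hR)
  rw [zero_sub, norm_neg, norm_zero, norm_le_zero_iff] at hb0
  exact hS.zero_notMem_closure (subset_closure (hb0 ▸ hb))

theorem IsShield.smul [NormedSpace ℝ E] (hS : IsShield S R) {c : ℝ} (hc : 0 < c) :
    IsShield (c • S) (c * R) where
  zero_notMem_closure h := by
    rw [closure_smul₀' hc.ne', Set.mem_smul_set_iff_inv_smul_mem₀ hc.ne', smul_zero] at h
    exact hS.zero_notMem_closure h
  exists_norm_sub_le ξ hξ := by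
    have hscale (η : E) : ‖η‖ = c * ‖c⁻¹ • η‖ := by
      rw [norm_smul, norm_inv, Real.norm_of_nonneg hc.le, mul_inv_cancel_left₀ hc.ne']
    obtain ⟨b, hb, hle⟩ := hS.exists_norm_sub_le (c⁻¹ • ξ) (by
      rwa [hscale, mul_le_mul_iff_right₀ hc] at hξ)
    refine ⟨c • b, Set.smul_mem_smul_set hb, ?_⟩
    rw [hscale, hscale ξ, smul_sub, inv_smul_smul₀ hc.ne']
    gcongr

theorem shieldBump_eq_zero (hS : IsShield S R) (hp : 0 ≤ p) {η : E} (hη : R ≤ ‖η‖) :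
    shieldBump p S η = 0 := by
  obtain ⟨b, hb, hle⟩ := hS.exists_norm_sub_le η hη
  refine tsub_eq_zero_of_le (ENNReal.rpow_le_rpow ?_ hp)
  rw [Set.insert_eq, Metric.infEDist_union, Metric.infEDist_singleton, le_inf_iff, edist_zero_right]
  refine ⟨(Metric.infEDist_le_edist_of_mem hb).trans ?_, le_rfl⟩
  rwa [edist_eq_enorm_sub, enorm_le_iff_norm_le]

theorem norm_lt_of_shieldBump_ne_zero (hS : IsShield S R) (hp : 0 ≤ p) {η : E}
    (hη : shieldBump p S η ≠ 0) : ‖η‖ < R :=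
  not_le.1 fun h ↦ hη (shieldBump_eq_zero hS hp h)

variable [MeasurableSpace E] [BorelSpace E]

@[fun_prop]
theorem measurable_shieldBump : Measurable (shieldBump p S) := by
  unfold shieldBump
  fun_prop

theorem lintegral_shieldBump_ne_zero (hS : IsShield S R) (hp : 0 < p) (lam : Measure E)
    [lam.IsOpenPosMeasure] : ∫⁻ η, shieldBump p S η ∂lam ≠ 0 := by
  have hsupp : Function.support (shieldBump p S) =
      {η | Metric.infEDist η (insert 0 S) ^ p < Metric.infEDist η S ^ p} := by
    ext η
    simp only [Function.mem_support, shieldBump, ne_eq, tsub_eq_zero_iff_le, not_le,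
      Set.mem_ofPred_eq]
  have hopen : IsOpen (Function.support (shieldBump p S)) := by
    rw [hsupp]
    exact isOpen_lt (ENNReal.continuous_rpow_const.comp Metric.continuous_infEDist)
      (ENNReal.continuous_rpow_const.comp Metric.continuous_infEDist)
  rw [← pos_iff_ne_zero, lintegral_pos_iff_support measurable_shieldBump]
  refine hopen.measure_pos lam ⟨0, ?_⟩
  rw [hsupp, Set.mem_ofPred_eq, Metric.infEDist_zero_of_mem (Set.mem_insert 0 S)]
  gcongr
  rw [pos_iff_ne_zero, ne_eq, ← Metric.mem_closure_iff_infEDist_zero]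
  exact hS.zero_notMem_closure

theorem lintegral_shieldBump_ne_top [ProperSpace E] (hS : IsShield S R) (hne : S.Nonempty)
    (hp : 0 ≤ p) (lam : Measure E) [IsFiniteMeasureOnCompacts lam] :
    ∫⁻ η, shieldBump p S η ∂lam ≠ ∞ := by
  obtain ⟨b, hb⟩ := hne
  have hle : shieldBump p S ≤
      (Metric.closedBall 0 R).indicator fun _ ↦ (ENNReal.ofReal R + ‖b‖ₑ) ^ p := by
    refine fun η ↦ (Set.le_indicator (fun η hη ↦ ?_) fun η hη ↦ ?_) η
    · have hηR : ‖η‖ₑ ≤ ENNReal.ofReal R := by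
        rw [← ofReal_norm]
        exact ENNReal.ofReal_le_ofReal (mem_closedBall_zero_iff.1 hη)
      refine tsub_le_self.trans ?_
      gcongr
      calc Metric.infEDist η S ≤ ‖η - b‖ₑ := by
            simpa only [edist_eq_enorm_sub] using Metric.infEDist_le_edist_of_mem hb
        _ ≤ ‖η‖ₑ + ‖b‖ₑ := enorm_sub_le
        _ ≤ ENNReal.ofReal R + ‖b‖ₑ := by gcongr
    · exact (shieldBump_eq_zero hS hp (not_le.1 (mt mem_closedBall_zero_iff.2 hη)).le).le
  refine ne_top_of_le_ne_top ?_ (lintegral_mono hle)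
  rw [lintegral_indicator_const Metric.isClosed_closedBall.measurableSet]
  exact ENNReal.mul_ne_top (by finiteness) (isCompact_closedBall (0 : E) R).measure_ne_top

theorem isMollifier_shieldKernel [ProperSpace E] [SecondCountableTopology E] (hS : IsShield S R)
    (hne : S.Nonempty) (hp : 0 < p) (lam : Measure E) [lam.IsAddHaarMeasure] :
    IsMollifier lam (shieldKernel lam p S) (2 * ENNReal.ofReal R) where
  measurable := by unfold shieldKernel; fun_prop
  lintegral_eq_one x := by
    simp only [shieldKernel]
    rw [lintegral_const_mul _ (by fun_prop),
      lintegral_sub_left_eq_self (shieldBump p S) x,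
      ENNReal.inv_mul_cancel (lintegral_shieldBump_ne_zero hS hp lam)
        (lintegral_shieldBump_ne_top hS hne hp.le lam)]
  edist_le {x y a} hx hy := by
    have hball {w : E} (hw : shieldKernel lam p S w a ≠ 0) : edist w a ≤ ENNReal.ofReal R := by
      rw [edist_eq_enorm_sub, ← ofReal_norm]
      exact ENNReal.ofReal_le_ofReal
        (norm_lt_of_shieldBump_ne_zero hS hp.le (right_ne_zero_of_mul hw)).le
    rw [two_mul]
    exact (edist_triangle_right x y a).trans (add_le_add (hball hx) (hball hy))

theorem mixtureDensity_shieldKernel (hp : 0 ≤ p) (lam : Measure E) {μ : Measure E} {a : E}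
    (hμ : quantCost p μ (a +ᵥ insert 0 S) ≠ ∞) : mixtureDensity (shieldKernel lam p S) μ a =
      (∫⁻ η, shieldBump p S η ∂lam)⁻¹ *
        (quantCost p μ (a +ᵥ S) - quantCost p μ (a +ᵥ insert 0 S)) := by
  have hshift (T : Set E) (ξ : E) : Metric.infEDist (ξ - a) T = Metric.infEDist ξ (a +ᵥ T) := by
    rw [← Metric.infEDist_vadd a (ξ - a), vadd_eq_add, add_sub_cancel]
  simp only [mixtureDensity, shieldKernel]
  rw [lintegral_const_mul _ (by fun_prop), quantCost, quantCost,
    ← lintegral_sub (by fun_prop) hμ]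
  · simp only [shieldBump, hshift]
  · exact .of_forall fun ξ ↦ ENNReal.rpow_le_rpow
      (Metric.infEDist_anti (Set.vadd_set_mono (Set.subset_insert 0 S))) hp

theorem tendsto_mixtureDensity_shieldKernel (hp : 1 ≤ p) (hS : IsShield S R)
    (hne : S.Nonempty) (lam : Measure E) [lam.IsOpenPosMeasure] {ι : Type*} {l : Filter ι}
    {μ : ι → Measure E} {ν : Measure E} [∀ i, IsProbabilityMeasure (μ i)] [IsProbabilityMeasure ν]
    (hμ : ∀ i, HasFiniteMoment p (μ i)) (hν : HasFiniteMoment p ν)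
    (h : ∀ T : Set E, T.Nonempty → T.encard ≤ S.encard + 1 →
      Tendsto (fun i ↦ quantCost p (μ i) T) l (𝓝 (quantCost p ν T))) (a : E) :
    Tendsto (fun i ↦ mixtureDensity (shieldKernel lam p S) (μ i) a) l
      (𝓝 (mixtureDensity (shieldKernel lam p S) ν a)) := by
  have hp0 : 0 < p := by linarith
  have hfin {m : Measure E} [IsProbabilityMeasure m] (hm : HasFiniteMoment p m) {T : Set E}
      (hT : T.Nonempty) : quantCost p m T ≠ ∞ :=
    quantCost_ne_top hp (hasFiniteMoment_iff_lintegral_edist.1 hm) hT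
  have hne₀ : (a +ᵥ insert 0 S).Nonempty := (Set.insert_nonempty 0 S).vadd_set
  simp only [mixtureDensity_shieldKernel hp0.le lam (hfin (hμ _) hne₀)]
  rw [mixtureDensity_shieldKernel hp0.le lam (hfin hν hne₀)]
  refine ENNReal.Tendsto.const_mul (ENNReal.Tendsto.sub (h _ hne.vadd_set ?_) (h _ hne₀ ?_)
    (.inl (hfin hν hne.vadd_set))) (.inr (ENNReal.inv_ne_top.2 ?_))
  · exact (Set.encard_image_le _ S).trans le_self_add
  · exact (Set.encard_image_le _ _).trans (Set.encard_insert_le S 0)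
  · exact lintegral_shieldBump_ne_zero hS hp0 lam

end Shields

section ShieldExistence

open scoped InnerProductSpace

theorem encard_range_fin_le {α : Type*} {n : ℕ} (f : Fin n → α) : (Set.range f).encard ≤ n := by
  simpa only [Set.image_univ, Set.encard_univ, ENat.card_eq_coe_fintype_card, Fintype.card_fin]
    using Set.encard_image_le f Set.univ

theorem IsShield.nonempty {E : Type*} [NormedAddCommGroup E] [NormedSpace ℝ E] [Nontrivial E]
    {S : Set E} {R : ℝ} (hS : IsShield S R) : S.Nonempty := by
  obtain ⟨ξ, hξ⟩ := NormedSpace.exists_lt_norm ℝ E R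
  obtain ⟨b, hb, -⟩ := hS.exists_norm_sub_le ξ hξ.le
  exact ⟨b, hb⟩

theorem isShield_one_of_sphere_subset {E : Type*} [NormedAddCommGroup E] [NormedSpace ℝ E]
    {S : Set E} (hS : S ⊆ Metric.sphere 0 1)
    (hcover : Metric.sphere (0 : E) 1 ⊆ ⋃ b ∈ S, Metric.closedBall b 1) : IsShield S 1 where
  zero_notMem_closure h := by
    have hzero : (0 : E) ∈ Metric.sphere 0 1 := closure_minimal hS Metric.isClosed_sphere h
    rw [mem_sphere_zero_iff_norm, norm_zero] at hzero
    exact zero_ne_one hzero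
  exists_norm_sub_le ξ hξ := by
    have hξ0 : ‖ξ‖ ≠ 0 := by positivity
    set u := ‖ξ‖⁻¹ • ξ with hu_def
    have hu : ‖u‖ = 1 := by rw [norm_smul, norm_inv, norm_norm, inv_mul_cancel₀ hξ0]
    obtain ⟨b, hb, hub⟩ := Set.mem_iUnion₂.1 (hcover (mem_sphere_zero_iff_norm.2 hu))
    rw [mem_closedBall_iff_norm] at hub
    refine ⟨b, hb, ?_⟩
    calc ‖ξ - b‖ = ‖(‖ξ‖ - 1) • u + (u - b)‖ := by
          rw [sub_smul, one_smul, hu_def, smul_inv_smul₀ hξ0, sub_add_sub_cancel]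
      _ ≤ ‖(‖ξ‖ - 1) • u‖ + ‖u - b‖ := norm_add_le _ _
      _ ≤ (‖ξ‖ - 1) + 1 := by
          rw [norm_smul, hu, mul_one, Real.norm_of_nonneg (sub_nonneg.2 hξ)]
          gcongr
      _ = ‖ξ‖ := sub_add_cancel _ _

theorem exists_sphere_cover_coverNum (E : Type*) [NormedAddCommGroup E] [ProperSpace E] :
    ∃ a : Fin (coverNum E) → E, (∀ i, a i ∈ Metric.sphere (0 : E) 1) ∧
      Metric.sphere (0 : E) 1 ⊆ ⋃ i, Metric.closedBall (a i) 1 := by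
  suffices h : {k | ∃ a : Fin k → E, (∀ i, a i ∈ Metric.sphere (0 : E) 1) ∧
      Metric.sphere (0 : E) 1 ⊆ ⋃ i, Metric.closedBall (a i) 1}.Nonempty from Nat.sInf_mem h
  obtain ⟨t, ht, htfin, hcover⟩ := (isCompact_sphere (0 : E) 1).finite_cover_balls one_pos
  have := htfin.fintype
  refine ⟨Fintype.card t, fun i ↦ (Fintype.equivFin t).symm i, fun i ↦ ht (Subtype.prop _), ?_⟩
  rw [(Fintype.equivFin t).symm.surjective.iUnion_comp fun x : t ↦ Metric.closedBall (x : E) 1,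
    ← Set.biUnion_eq_iUnion t fun x _ ↦ Metric.closedBall x 1]
  exact hcover.trans (Set.iUnion₂_mono fun x _ ↦ Metric.ball_subset_closedBall)

theorem exists_isShield_encard_le_coverNum (E : Type*) [NormedAddCommGroup E] [NormedSpace ℝ E]
    [ProperSpace E] : ∃ S : Set E, S.encard ≤ coverNum E ∧ IsShield S 1 := by
  obtain ⟨a, ha, hcover⟩ := exists_sphere_cover_coverNum E
  refine ⟨Set.range a, encard_range_fin_le a,
    isShield_one_of_sphere_subset (Set.range_subset_iff.2 ha) ?_⟩
  rwa [Set.biUnion_range]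

theorem exists_isShield_of_exists_inner_pos {E : Type*} [NormedAddCommGroup E]
    [InnerProductSpace ℝ E] [ProperSpace E] {S : Set E} (h0 : 0 ∉ closure S)
    (hS : ∀ ξ ≠ 0, ∃ b ∈ S, 0 < ⟪ξ, b⟫_ℝ) : ∃ R, IsShield S R := by
  let U (n : ℕ) : Set E := ⋃ b ∈ S, {u | ‖b‖ ^ 2 < n * (2 * ⟪u, b⟫_ℝ)}
  have hU (n : ℕ) : IsOpen (U n) :=
    isOpen_biUnion fun b _ ↦ isOpen_lt continuous_const (by fun_prop)
  have hcover : Metric.sphere (0 : E) 1 ⊆ ⋃ n, U n := fun u hu ↦ by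
    obtain ⟨b, hb, hpos⟩ := hS u (ne_zero_of_mem_unit_sphere ⟨u, hu⟩)
    obtain ⟨n, hn⟩ := exists_nat_gt (‖b‖ ^ 2 / (2 * ⟪u, b⟫_ℝ))
    exact Set.mem_iUnion.2 ⟨n, Set.mem_iUnion₂.2 ⟨b, hb, (div_lt_iff₀ (by positivity)).1 hn⟩⟩
  have hmono : Monotone U := fun m n hmn ↦ Set.iUnion₂_mono fun b _ u hu ↦ by
    have hpos : 0 < 2 * ⟪u, b⟫_ℝ :=
      pos_of_mul_pos_right ((sq_nonneg ‖b‖).trans_lt hu) (Nat.cast_nonneg m)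
    rw [Set.mem_ofPred_eq] at hu ⊢
    exact hu.trans_le (mul_le_mul_of_nonneg_right (Nat.cast_le.2 hmn) hpos.le)
  obtain ⟨n, hn⟩ := (isCompact_sphere (0 : E) 1).elim_directed_cover U hU hcover
    hmono.directed_le
  refine ⟨n + 1, h0, fun ξ hξ ↦ ?_⟩
  have hξ0 : 0 < ‖ξ‖ := by linarith [n.cast_nonneg (α := ℝ)]
  obtain ⟨b, hb, hub⟩ := Set.mem_iUnion₂.1 (hn (a := ‖ξ‖⁻¹ • ξ) (by
    rw [mem_sphere_zero_iff_norm, norm_smul, norm_inv, norm_norm, inv_mul_cancel₀ hξ0.ne']))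
  have hinner : ‖b‖ ^ 2 ≤ 2 * ⟪ξ, b⟫_ℝ := by
    have hpos : 0 < 2 * ⟪‖ξ‖⁻¹ • ξ, b⟫_ℝ :=
      pos_of_mul_pos_right ((sq_nonneg ‖b‖).trans_lt hub) n.cast_nonneg
    calc ‖b‖ ^ 2 ≤ n * (2 * ⟪‖ξ‖⁻¹ • ξ, b⟫_ℝ) := le_of_lt hub
      _ ≤ ‖ξ‖ * (2 * ⟪‖ξ‖⁻¹ • ξ, b⟫_ℝ) := by gcongr; linarith
      _ = 2 * ⟪ξ, b⟫_ℝ := by rw [real_inner_smul_left]; field_simp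
  refine ⟨b, hb, le_of_sq_le_sq ?_ (norm_nonneg ξ)⟩
  rw [norm_sub_sq_real]
  linarith

theorem exists_inner_pos_of_orthonormalBasis {E ι : Type*} [NormedAddCommGroup E]
    [InnerProductSpace ℝ E] [Fintype ι] (e : OrthonormalBasis ι ℝ E) {ξ : E} (hξ : ξ ≠ 0) :
    ∃ b ∈ insert (-∑ i, e i) (Set.range e), 0 < ⟪ξ, b⟫_ℝ := by
  by_contra! h
  obtain ⟨hsum, hrange⟩ := Set.forall_mem_insert.1 h
  rw [Set.forall_mem_range] at hrange
  rw [inner_neg_right, neg_nonpos, inner_sum] at hsum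
  have hzero := (Finset.sum_eq_zero_iff_of_nonpos fun i _ ↦ hrange i).1
    (hsum.antisymm' (Finset.sum_nonpos fun i _ ↦ hrange i))
  exact hξ (InnerProductSpace.ext_inner_right_basis e.toBasis fun i ↦ by
    simpa only [OrthonormalBasis.coe_toBasis, inner_zero_left] using hzero i (Finset.mem_univ i))

theorem exists_isShield_encard_le_finrank_add_one (E : Type*) [NormedAddCommGroup E]
    [InnerProductSpace ℝ E] [FiniteDimensional ℝ E] :
    ∃ (S : Set E) (R : ℝ), S.encard ≤ Module.finrank ℝ E + 1 ∧ IsShield S R := by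
  let e := stdOrthonormalBasis ℝ E
  let S := insert (-∑ i, e i) (Set.range e)
  have hcard : S.encard ≤ Module.finrank ℝ E + 1 :=
    (Set.encard_insert_le _ _).trans (add_le_add_left (encard_range_fin_le e) 1)
  have hfin : S.Finite := (Set.finite_range e).insert _
  obtain ⟨R, hR⟩ := exists_isShield_of_exists_inner_pos (S := S \ {0})
    (by simp [hfin.sdiff.isClosed.closure_eq]) fun ξ hξ ↦ by
      obtain ⟨b, hb, hpos⟩ := exists_inner_pos_of_orthonormalBasis e hξ
      exact ⟨b, ⟨hb, fun h ↦ by simp [Set.mem_singleton_iff.1 h] at hpos⟩, hpos⟩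
  exact ⟨S \ {0}, R, (Set.encard_le_encard Set.sdiff_subset).trans hcard, hR⟩

theorem exists_isShield_of_le {E : Type*} [NormedAddCommGroup E] [NormedSpace ℝ E]
    [FiniteDimensional ℝ E] {n : ℕ} (hn : coverNum E ≤ n ∨
      (Nonempty (InnerProductSpace ℝ E) ∧ Module.finrank ℝ E + 1 ≤ n)) :
    ∃ (S : Set E) (R : ℝ), S.encard ≤ n ∧ IsShield S R := by
  rcases hn with hn | ⟨⟨I⟩, hn⟩
  · obtain ⟨S, hcard, hS⟩ := exists_isShield_encard_le_coverNum E
    exact ⟨S, 1, hcard.trans (mod_cast hn), hS⟩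
  · let _ := InnerProductSpace.ofNorm ℝ fun x y : E ↦ by
      simpa only [sq] using @parallelogram_law_with_norm ℝ E _ _ I x y
    obtain ⟨S, R, hcard, hS⟩ := exists_isShield_encard_le_finrank_add_one E
    exact ⟨S, R, hcard.trans (mod_cast hn), hS⟩

end ShieldExistence

section QuantizationDistance

theorem exists_range_fin_eq_of_encard_le {α : Type*} {T : Set α} (hT : T.Nonempty) {n : ℕ}
    (hn : T.encard ≤ n) : ∃ x : Fin n → α, Set.range x = T := by
  have := (Set.finite_of_encard_le_coe hn).fintype
  have := hT.to_subtype
  rw [← Set.coe_fintypeCard, Nat.cast_le] at hn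
  obtain ⟨f⟩ : Nonempty (T ↪ Fin n) :=
    Function.Embedding.nonempty_of_card_le (by rwa [Fintype.card_fin])
  refine ⟨Subtype.val ∘ Function.invFun f, ?_⟩
  rw [(Function.invFun_surjective f.injective).range_comp, Subtype.range_coe]

variable {E : Type*} [NormedAddCommGroup E] [MeasurableSpace E]

theorem qDist_nonneg (p : ℝ) (N : ℕ) (μ ν : Measure E) : 0 ≤ qDist p N μ ν :=
  Real.iSup_nonneg fun _ ↦ abs_nonneg _

theorem qDist_self (p : ℝ) (N : ℕ) (μ : Measure E) : qDist p N μ μ = 0 := by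
  simp only [qDist, sub_self, abs_zero, ciSup_const]

theorem qDist_comm (p : ℝ) (N : ℕ) (μ ν : Measure E) : qDist p N μ ν = qDist p N ν μ := by
  simp only [qDist, abs_sub_comm]

variable [OpensMeasurableSpace E] [SecondCountableTopology E] {p : ℝ} {N : ℕ} [NeZero N]

theorem qDist_le_wassersteinDist (hp : 1 ≤ p) {μ ν : Measure E} [IsProbabilityMeasure μ]
    [IsProbabilityMeasure ν] (hμ : HasFiniteMoment p μ) (hν : HasFiniteMoment p ν) :
    qDist p N μ ν ≤ wassersteinDist p μ ν :=
  ciSup_le (abs_quantErr_sub_le_wassersteinDist hp hμ hν)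

theorem abs_quantErr_sub_le_qDist (hp : 1 ≤ p) {μ ν : Measure E} [IsProbabilityMeasure μ]
    [IsProbabilityMeasure ν] (hμ : HasFiniteMoment p μ) (hν : HasFiniteMoment p ν)
    (x : Fin N → E) : |quantErr p N μ x - quantErr p N ν x| ≤ qDist p N μ ν :=
  le_ciSup (bddAbove_range_abs_quantErr_sub hp hμ hν) x

theorem qDist_triangle (hp : 1 ≤ p) {μ ν ρ : Measure E} [IsProbabilityMeasure μ]
    [IsProbabilityMeasure ν] [IsProbabilityMeasure ρ] (hμ : HasFiniteMoment p μ)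
    (hν : HasFiniteMoment p ν) (hρ : HasFiniteMoment p ρ) :
    qDist p N μ ρ ≤ qDist p N μ ν + qDist p N ν ρ :=
  ciSup_le fun x ↦ (abs_sub_le _ (quantErr p N ν x) _).trans
    (add_le_add (abs_quantErr_sub_le_qDist hp hμ hν x) (abs_quantErr_sub_le_qDist hp hν hρ x))

theorem tendsto_quantCost_of_tendsto_qDist (hp : 1 ≤ p) {ι : Type*} {l : Filter ι}
    {μ : ι → Measure E} {ν : Measure E} [∀ i, IsProbabilityMeasure (μ i)] [IsProbabilityMeasure ν]
    (hμ : ∀ i, HasFiniteMoment p (μ i)) (hν : HasFiniteMoment p ν)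
    (h : Tendsto (fun i ↦ qDist p N (μ i) ν) l (𝓝 0)) {T : Set E} (hT : T.Nonempty)
    (hcard : T.encard ≤ N) :
    Tendsto (fun i ↦ quantCost p (μ i) T) l (𝓝 (quantCost p ν T)) := by
  have hp0 : 0 < p := by linarith
  obtain ⟨x, rfl⟩ := exists_range_fin_eq_of_encard_le hT hcard
  have hroot {m : Measure E} [IsProbabilityMeasure m] (hm : HasFiniteMoment p m) :
      quantCost p m (Set.range x) ^ (1 / p) ≠ ∞ :=
    ENNReal.rpow_ne_top_of_nonneg (by positivity)
      (quantCost_ne_top hp (hasFiniteMoment_iff_lintegral_edist.1 hm) hT)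
  have herr : Tendsto (fun i ↦ quantErr p N (μ i) x) l (𝓝 (quantErr p N ν x)) :=
    tendsto_iff_dist_tendsto_zero.2 <| squeeze_zero (fun _ ↦ dist_nonneg)
      (fun i ↦ abs_quantErr_sub_le_qDist hp (hμ i) hν x) h
  simp only [quantErr_eq_toReal_quantCost hp0] at herr
  rw [ENNReal.tendsto_toReal_iff (fun i ↦ hroot (hμ i)) (hroot hν)] at herr
  simpa only [← ENNReal.rpow_mul, one_div_mul_cancel hp0.ne', ENNReal.rpow_one] using
    herr.ennrpow_const p

end QuantizationDistance

section Equivalence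

open scoped Pointwise

theorem transportCost_eq_zero_of_subsingleton {X : Type*} [PseudoEMetricSpace X] [Subsingleton X]
    [MeasurableSpace X] {p : ℝ} (hp : 0 < p) (μ ν : Measure X) [IsProbabilityMeasure μ]
    [IsProbabilityMeasure ν] : transportCost p μ ν = 0 := by
  refine le_antisymm ((transportCost_le (prod_mem_couplings μ ν)).trans_eq ?_) zero_le
  have hedist (q : X × X) : edist q.1 q.2 = 0 := by rw [Subsingleton.elim q.1 q.2, edist_self]
  simp only [hedist, ENNReal.zero_rpow_of_pos hp, lintegral_zero]

variable {E : Type*} [NormedAddCommGroup E] [NormedSpace ℝ E] [FiniteDimensional ℝ E]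
  [MeasurableSpace E] [BorelSpace E] {p : ℝ} {S : Set E} {R : ℝ} {n : ℕ}

theorem tendsto_transportCost_of_tendsto_quantCost [Nontrivial E] (hp : 1 ≤ p) (hS : IsShield S R)
    {μ : ℕ → Measure E} {ν : Measure E} [∀ i, IsProbabilityMeasure (μ i)] [IsProbabilityMeasure ν]
    (hμ : ∀ i, HasFiniteMoment p (μ i)) (hν : HasFiniteMoment p ν)
    (h : ∀ T : Set E, T.Nonempty → T.encard ≤ S.encard + 1 →
      Tendsto (fun i ↦ quantCost p (μ i) T) atTop (𝓝 (quantCost p ν T))) :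
    Tendsto (fun i ↦ transportCost p (μ i) ν) atTop (𝓝 0) := by
  have hmoment : Tendsto (fun i ↦ ∫⁻ x, edist x 0 ^ p ∂μ i) atTop (𝓝 (∫⁻ x, edist x 0 ^ p ∂ν)) := by
    simp only [← quantCost_singleton]
    refine h {0} (Set.singleton_nonempty 0) ?_
    rw [Set.encard_singleton]
    exact le_add_self
  refine tendsto_transportCost_of_mollifiers (lam := (Measure.addHaar : Measure E)) hp
    (hasFiniteMoment_iff_lintegral_edist.1 hν) hmoment fun ε hε ↦ ?_
  obtain ⟨r, -, hr, hrε⟩ := ENNReal.lt_iff_exists_real_btwn.1 (ENNReal.half_pos hε.ne')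
  have hscaled : IsShield ((r / R) • S) r := by
    simpa only [div_mul_cancel₀ r hS.pos.ne'] using
      hS.smul (div_pos (ENNReal.ofReal_pos.1 hr) hS.pos)
  have hcard : ((r / R) • S).encard ≤ S.encard := Set.encard_image_le _ S
  refine ⟨shieldKernel Measure.addHaar p ((r / R) • S), ?_, .of_forall ?_⟩
  · exact (isMollifier_shieldKernel hscaled hscaled.nonempty (by linarith) _).mono
      (ENNReal.mul_le_of_le_div' hrε.le)
  · exact tendsto_mixtureDensity_shieldKernel hp hscaled hscaled.nonempty _ hμ hν
      fun T hT hTcard ↦ h T hT (hTcard.trans (add_le_add_left hcard 1))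

theorem tendsto_transportCost_of_tendsto_qDist (hp : 1 ≤ p) (hS : IsShield S R)
    (hn : S.encard ≤ n) {μ : ℕ → Measure E} {ν : Measure E} [∀ i, IsProbabilityMeasure (μ i)]
    [IsProbabilityMeasure ν] (hμ : ∀ i, HasFiniteMoment p (μ i)) (hν : HasFiniteMoment p ν)
    (h : Tendsto (fun i ↦ qDist p (n + 1) (μ i) ν) atTop (𝓝 0)) :
    Tendsto (fun i ↦ transportCost p (μ i) ν) atTop (𝓝 0) := by
  rcases subsingleton_or_nontrivial E with hE | hE
  · simp only [transportCost_eq_zero_of_subsingleton (by linarith : 0 < p), tendsto_const_nhds]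
  · refine tendsto_transportCost_of_tendsto_quantCost hp hS hμ hν fun T hT hcard ↦ ?_
    exact tendsto_quantCost_of_tendsto_qDist hp hμ hν h hT
      (hcard.trans (by exact_mod_cast add_le_add_left hn 1))

theorem qDist_eq_zero_iff (hp : 1 ≤ p) (hS : IsShield S R) (hn : S.encard ≤ n)
    {μ ν : Measure E} [IsProbabilityMeasure μ] [IsProbabilityMeasure ν]
    (hμ : HasFiniteMoment p μ) (hν : HasFiniteMoment p ν) :
    qDist p (n + 1) μ ν = 0 ↔ μ = ν := by
  refine ⟨fun h ↦ eq_of_transportCost_eq_zero hp ?_, fun h ↦ h ▸ qDist_self p (n + 1) μ⟩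
  exact tendsto_nhds_unique tendsto_const_nhds <| tendsto_transportCost_of_tendsto_qDist
    (μ := fun _ ↦ μ) hp hS hn (fun _ ↦ hμ) hν (by simp only [h, tendsto_const_nhds])

theorem tendsto_qDist_iff_tendsto_wassersteinDist (hp : 1 ≤ p) (hS : IsShield S R)
    (hn : S.encard ≤ n) {μ : ℕ → Measure E} {ν : Measure E} [∀ i, IsProbabilityMeasure (μ i)]
    [IsProbabilityMeasure ν] (hμ : ∀ i, HasFiniteMoment p (μ i)) (hν : HasFiniteMoment p ν) :
    Tendsto (fun i ↦ qDist p (n + 1) (μ i) ν) atTop (𝓝 0) ↔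
      Tendsto (fun i ↦ wassersteinDist p (μ i) ν) atTop (𝓝 0) := by
  refine ⟨fun h ↦ ?_, squeeze_zero (fun i ↦ qDist_nonneg p (n + 1) (μ i) ν)
    fun i ↦ qDist_le_wassersteinDist hp (hμ i) hν⟩
  have hroot := (tendsto_transportCost_of_tendsto_qDist hp hS hn hμ hν h).ennrpow_const (1 / p)
  rw [ENNReal.zero_rpow_of_pos (by positivity)] at hroot
  simpa only [wassersteinDist_eq_toReal_transportCost, Function.comp_def, ENNReal.toReal_zero] using
    (ENNReal.tendsto_toReal ENNReal.zero_ne_top).comp hroot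

end Equivalence

/-- for `p ∈ [1, ∞)` and `N ≥ c(d, ‖·‖) + 1` (or `N ≥ d + 2` when the norm is
Euclidean), `Q_{N,p}` is finite on probability measures on `ℝ^d` with finite `p`-th moments,
is a metric there (symmetric, triangle inequality, vanishing exactly on the diagonal), and is
topologically equivalent to `W_p`: `Q_{N,p}(μ_n, μ_∞) → 0 ↔ W_p(μ_n, μ_∞) → 0`. -/
theorem stmt9 {E : Type*} [NormedAddCommGroup E] [NormedSpace ℝ E]
    [FiniteDimensional ℝ E] [MeasurableSpace E] [BorelSpace E]
    (p : ℝ) (hp : 1 ≤ p) (N : ℕ)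
    (hN : coverNum E + 1 ≤ N ∨
      (Nonempty (InnerProductSpace ℝ E) ∧ Module.finrank ℝ E + 2 ≤ N)) :
    (∀ μ ν : Measure E, IsProbabilityMeasure μ → IsProbabilityMeasure ν →
      HasFiniteMoment p μ → HasFiniteMoment p ν →
      BddAbove (Set.range fun x : Fin N → E => |quantErr p N μ x - quantErr p N ν x|)) ∧
    (∀ μ ν : Measure E, IsProbabilityMeasure μ → IsProbabilityMeasure ν →
      HasFiniteMoment p μ → HasFiniteMoment p ν →
      qDist p N μ ν = qDist p N ν μ) ∧
    (∀ μ ν ρ : Measure E, IsProbabilityMeasure μ → IsProbabilityMeasure ν →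
      IsProbabilityMeasure ρ →
      HasFiniteMoment p μ → HasFiniteMoment p ν → HasFiniteMoment p ρ →
      qDist p N μ ρ ≤ qDist p N μ ν + qDist p N ν ρ) ∧
    (∀ μ ν : Measure E, IsProbabilityMeasure μ → IsProbabilityMeasure ν →
      HasFiniteMoment p μ → HasFiniteMoment p ν →
      (qDist p N μ ν = 0 ↔ μ = ν)) ∧
    (∀ (μ : ℕ → Measure E) (μ' : Measure E),
      (∀ n, IsProbabilityMeasure (μ n)) → IsProbabilityMeasure μ' →
      (∀ n, HasFiniteMoment p (μ n)) → HasFiniteMoment p μ' →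
      (Tendsto (fun n => qDist p N (μ n) μ') atTop (𝓝 0) ↔
        Tendsto (fun n => wassersteinDist p (μ n) μ') atTop (𝓝 0))) := by
  obtain ⟨n, rfl⟩ : ∃ n, N = n + 1 := Nat.exists_eq_add_one.2 (by omega)
  obtain ⟨S, R, hn, hS⟩ : ∃ (S : Set E) (R : ℝ), S.encard ≤ n ∧ IsShield S R :=
    exists_isShield_of_le (hN.imp Nat.le_of_succ_le_succ (And.imp_right Nat.le_of_succ_le_succ))
  refine ⟨fun μ ν _ _ hμ hν ↦ ?_, fun μ ν _ _ _ _ ↦ ?_, fun μ ν ρ _ _ _ hμ hν hρ ↦ ?_,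
    fun μ ν _ _ hμ hν ↦ ?_, fun μ ν _ _ hμ hν ↦ ?_⟩
  · exact bddAbove_range_abs_quantErr_sub hp hμ hν
  · exact qDist_comm p (n + 1) μ ν
  · exact qDist_triangle hp hμ hν hρ
  · exact qDist_eq_zero_iff hp hS hn hμ hν
  · exact tendsto_qDist_iff_tendsto_wassersteinDist hp hS hn hμ hν
end
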